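/- arXiv:2302.09849 — 2 statements merged into one kernel-verified Lean document; each statement's English description precedes it below -/
import Mathlib

section
/- Suppose that F is an r-graph on m vertices and P is a minimal pattern such that (F,P) is a Turán pair and F is degree-stable with respect to P. Then there exists a constant c > 0 such that: (a) ex(n,F) is 4·C(n−1,r−2)-smooth, i.e. |δ(n,F) − d(n−1,F)| ≤ 4·C(n−1,r−2) for all n; and (b) for all sufficiently large n, F is (c·C(n−1,r−1), ((1−π(F))/(8m))·C(n−1,r−1))-bounded. -/
open Filter

namespace DensityCH

/-- An `r`-uniform hypergraph with vertices in `ℕ`: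
a finite vertex set together with a set of `r`-element edges. -/
structure HGraph (r : ℕ) where
  verts : Finset ℕ
  edges : Finset (Finset ℕ)
  edges_sub : ∀ e ∈ edges, e ⊆ verts
  edges_card : ∀ e ∈ edges, e.card = r

namespace HGraph

/-- Build an `r`-graph from a vertex set and a set of candidate edges,
keeping exactly the well-formed candidates. -/
def ofEdges (r : ℕ) (V : Finset ℕ) (E : Finset (Finset ℕ)) : HGraph r where
  verts := V
  edges := E.filter fun e => e ⊆ V ∧ e.card = r
  edges_sub := fun e he => ((Finset.mem_filter.mp he).2).1
  edges_card := fun e he => ((Finset.mem_filter.mp he).2).2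

variable {r : ℕ}

/-- `H` contains a copy of `F`, i.e. a subgraph isomorphic to `F`. -/
def IsCopyIn (F H : HGraph r) : Prop :=
  ∃ f : ℕ → ℕ, Set.InjOn f ↑F.verts ∧ (∀ v ∈ F.verts, f v ∈ H.verts) ∧
    ∀ e ∈ F.edges, e.image f ∈ H.edges

/-- The subgraph of `H` induced on `S`. -/
def induce (H : HGraph r) (S : Finset ℕ) : HGraph r :=
  ofEdges r (H.verts ∩ S) (H.edges.filter fun e => e ⊆ S)

/-- Delete a vertex from `H`. -/
def deleteVert (H : HGraph r) (v : ℕ) : HGraph r :=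
  ofEdges r (H.verts.erase v) (H.edges.filter fun e => v ∉ e)

/-- The degree of a vertex. -/
def deg (H : HGraph r) (v : ℕ) : ℕ := (H.edges.filter fun e => v ∈ e).card

/-- The maximum degree `Δ(H)`. -/
def maxDeg (H : HGraph r) : ℕ := H.verts.sup H.deg

/-- The minimum degree `δ(H)`. -/
def minDeg (H : HGraph r) : ℕ :=
  if h : H.verts.Nonempty then H.verts.inf' h H.deg else 0

/-- The average degree `d(H) = r·|E(H)|/|V(H)|`. -/
noncomputable def avgDeg (H : HGraph r) : ℝ :=
  (r : ℝ) * (H.edges.card : ℝ) / (H.verts.card : ℝ)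

/-- `H` contains `k` pairwise vertex-disjoint copies of `F`, i.e. `ν(F,H) ≥ k`. -/
def HasMatching (F H : HGraph r) (k : ℕ) : Prop :=
  ∃ S : Fin k → Finset ℕ,
    (∀ i, S i ⊆ H.verts ∧ (S i).card = F.verts.card) ∧
    (∀ i j, i ≠ j → Disjoint (S i) (S j)) ∧
    ∀ i, F.IsCopyIn (H.induce (S i))

/-- Isomorphism of hypergraphs. -/
def Iso (G H : HGraph r) : Prop :=
  ∃ f : ℕ → ℕ, Set.BijOn f ↑G.verts ↑H.verts ∧
    ∀ e ∈ Finset.powersetCard r G.verts, (e ∈ G.edges ↔ e.image f ∈ H.edges)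

/-- The join `G ⋈ H`: all edges of `G`, all edges of `H`, and all `r`-sets meeting
both vertex sets. -/
def join (G H : HGraph r) : HGraph r :=
  ofEdges r (G.verts ∪ H.verts)
    (G.edges ∪ H.edges ∪ ((Finset.powersetCard r (G.verts ∪ H.verts)).filter
      fun e => (e ∩ G.verts).Nonempty ∧ (e ∩ H.verts).Nonempty))

end HGraph

/-- The complete `r`-graph on a vertex set `S`. -/
def completeOn (r : ℕ) (S : Finset ℕ) : HGraph r :=
  HGraph.ofEdges r S (Finset.powersetCard r S)

/-- The `r`-graph on `V` with no edges. -/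
def emptyOn (r : ℕ) (V : Finset ℕ) : HGraph r := HGraph.ofEdges r V ∅

/-- The Turán number `ex(n,F)`. -/
noncomputable def exN (r n : ℕ) (F : HGraph r) : ℕ :=
  sSup {m | ∃ H : HGraph r, H.verts.card = n ∧ ¬ F.IsCopyIn H ∧ H.edges.card = m}

/-- `d(n,F) = r·ex(n,F)/n`. -/
noncomputable def dN (r n : ℕ) (F : HGraph r) : ℝ := (r : ℝ) * (exN r n F : ℝ) / (n : ℝ)

/-- `δ(n,F) = ex(n,F) − ex(n−1,F)` (as a real number). -/
noncomputable def deltaN (r n : ℕ) (F : HGraph r) : ℝ := (exN r n F : ℝ) - (exN r (n-1) F : ℝ)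

/-- `x` is the Turán density `π(F)`, i.e. the limit of `ex(n,F)/C(n,r)`. -/
def HasTuranDensity (r : ℕ) (F : HGraph r) (x : ℝ) : Prop :=
  Tendsto (fun n : ℕ => (exN r n F : ℝ) / (n.choose r : ℝ)) atTop (nhds x)

/-- `ex(n,(t+1)F)`: the maximum number of edges of an `n`-vertex `r`-graph with no
`t+1` pairwise vertex-disjoint copies of `F`. -/
noncomputable def exMatchN (r n t : ℕ) (F : HGraph r) : ℕ :=
  sSup {m | ∃ H : HGraph r, H.verts.card = n ∧ ¬ F.HasMatching H (t+1) ∧ H.edges.card = m}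

/-- `H ∈ EX(n,F)`. -/
def IsExtremalFree (r n : ℕ) (F H : HGraph r) : Prop :=
  H.verts.card = n ∧ ¬ F.IsCopyIn H ∧ H.edges.card = exN r n F

/-- `H ∈ EX(n,(t+1)F)`. -/
def IsExtremalMatchingFree (r n t : ℕ) (F H : HGraph r) : Prop :=
  H.verts.card = n ∧ ¬ F.HasMatching H (t+1) ∧ H.edges.card = exMatchN r n t F

/-- `F` is `(f1, f2)`-bounded at `n`. -/
def BoundedAt (r n : ℕ) (F : HGraph r) (f1 f2 : ℝ) : Prop :=
  ∀ H : HGraph r, H.verts.card = n → ¬ F.IsCopyIn H →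
    dN r n F - f1 ≤ H.avgDeg → (H.maxDeg : ℝ) ≤ dN r n F + f2

/-- `ex(·,F)` is `g`-smooth at `n`: `|δ(n,F) − d(n−1,F)| ≤ g(n)`. -/
def SmoothAt (r n : ℕ) (F : HGraph r) (g : ℝ) : Prop :=
  |deltaN r n F - dN r (n-1) F| ≤ g

/-- The collection `H 0, …, H t` (on a common vertex set) has a rainbow `F`-matching. -/
def HasRainbowMatching (r t : ℕ) (F : HGraph r) (H : Fin (t+1) → HGraph r) : Prop :=
  ∃ S : Fin (t+1) → Finset ℕ,
    (∀ i, S i ⊆ (H i).verts ∧ (S i).card = F.verts.card) ∧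
    (∀ i j, i ≠ j → Disjoint (S i) (S j)) ∧
    ∀ i, F.IsCopyIn ((H i).induce (S i))

/-!  Patterns -/

/-- An `r`-uniform pattern: a finite index set together with a collection of
`r`-multisets on it. -/
structure Pattern (r : ℕ) where
  idx : Finset ℕ
  mE : Finset (Multiset ℕ)
  card_eq : ∀ s ∈ mE, Multiset.card s = r
  mem_idx : ∀ s ∈ mE, ∀ i ∈ s, i ∈ idx

namespace Pattern

variable {r : ℕ}

/-- The pattern `P − i`. -/
def erase (P : Pattern r) (i : ℕ) : Pattern r where
  idx := P.idx.erase i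
  mE := P.mE.filter fun s => i ∉ s
  card_eq := fun s hs => P.card_eq s (Finset.mem_filter.mp hs).1
  mem_idx := by
    intro s hs j hj
    have h1 := Finset.mem_filter.mp hs
    refine Finset.mem_erase.mpr ⟨?_, P.mem_idx s h1.1 j hj⟩
    rintro rfl
    exact h1.2 hj

/-- `H` is a `P`-construction: a blowup of the pattern `P`. -/
def IsConstruction (P : Pattern r) (H : HGraph r) : Prop :=
  ∃ part : ℕ → ℕ, (∀ v ∈ H.verts, part v ∈ P.idx) ∧
    ∀ e : Finset ℕ, e ∈ H.edges ↔ (e ⊆ H.verts ∧ e.card = r ∧ Multiset.map part e.val ∈ P.mE)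

/-- `H` is a `P`-subconstruction: a subgraph of a `P`-construction. -/
def IsSubconstruction (P : Pattern r) (H : HGraph r) : Prop :=
  ∃ G : HGraph r, P.IsConstruction G ∧ H.verts ⊆ G.verts ∧ H.edges ⊆ G.edges

end Pattern

/-- `Λ(P,n)`: the maximum number of edges of an `n`-vertex `P`-construction. -/
noncomputable def patEx (r : ℕ) (P : Pattern r) (n : ℕ) : ℕ :=
  sSup {m | ∃ H : HGraph r, P.IsConstruction H ∧ H.verts.card = n ∧ H.edges.card = m}

/-- The Lagrangian `λ(P) = lim Λ(P,n)/C(n,r)`. -/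
noncomputable def patLagrangian (r : ℕ) (P : Pattern r) : ℝ :=
  limUnder atTop fun n : ℕ => (patEx r P n : ℝ) / (n.choose r : ℝ)

/-- The pattern `P` is minimal: `λ(P−i) < λ(P)` for all `i`. -/
def Pattern.Minimal {r : ℕ} (P : Pattern r) : Prop :=
  ∀ i ∈ P.idx, patLagrangian r (P.erase i) < patLagrangian r P

/-- `(F,P)` is a Turán pair. -/
def IsTuranPair (r : ℕ) (F : HGraph r) (P : Pattern r) : Prop :=
  (∀ H : HGraph r, P.IsConstruction H → ¬ F.IsCopyIn H) ∧
  (∀ H : HGraph r, ¬ F.IsCopyIn H → H.edges.card = exN r H.verts.card F →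
    P.IsConstruction H)

/-- `F` is edge-stable with respect to `P` (with Turán density `π`). -/
def EdgeStable (r : ℕ) (F : HGraph r) (P : Pattern r) (π : ℝ) : Prop :=
  ∀ δ : ℝ, 0 < δ → ∃ N₀ : ℕ, ∃ ζ : ℝ, 0 < ζ ∧
    ∀ H : HGraph r, N₀ ≤ H.verts.card → ¬ F.IsCopyIn H →
      (π - ζ) * (H.verts.card.choose r : ℝ) ≤ (H.edges.card : ℝ) →
      ∃ H' : HGraph r, H'.verts ⊆ H.verts ∧ H'.edges ⊆ H.edges ∧
        (π - δ) * (H.verts.card.choose r : ℝ) ≤ (H'.edges.card : ℝ) ∧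
        P.IsSubconstruction H'

/-- `F` is weakly vertex-extendable with respect to `P` (with Turán density `π`). -/
def WeaklyVertexExtendable (r : ℕ) (F : HGraph r) (P : Pattern r) (π : ℝ) : Prop :=
  ∀ δ : ℝ, 0 < δ → ∃ N₀ : ℕ, ∃ ζ : ℝ, 0 < ζ ∧
    ∀ H : HGraph r, N₀ ≤ H.verts.card → ¬ F.IsCopyIn H →
      (π - ζ) * (((H.verts.card - 1).choose (r-1) : ℕ) : ℝ) ≤ (H.minDeg : ℝ) →
      ∀ v ∈ H.verts, P.IsSubconstruction (H.deleteVert v) →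
        (H.deg v : ℝ) ≤ (π + δ) * (((H.verts.card - 1).choose (r-1) : ℕ) : ℝ)

/-- `F` is degree-stable with respect to `P` (with Turán density `π`). -/
def DegreeStable (r : ℕ) (F : HGraph r) (P : Pattern r) (π : ℝ) : Prop :=
  ∃ ζ : ℝ, 0 < ζ ∧ ∃ N₀ : ℕ,
    ∀ H : HGraph r, N₀ ≤ H.verts.card → ¬ F.IsCopyIn H →
      (π - ζ) * (((H.verts.card - 1).choose (r-1) : ℕ) : ℝ) ≤ (H.minDeg : ℝ) →
      P.IsSubconstruction H

/-!  Concrete constructions -/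

/-- The generalized Turán graph `T_r(·,ℓ)` on vertex set `V` (parts are residue
classes mod `ℓ`; on an interval these are balanced). -/
def turanOn (r ℓ : ℕ) (V : Finset ℕ) : HGraph r :=
  HGraph.ofEdges r V ((Finset.powersetCard r V).filter
    fun e => ∀ u ∈ e, ∀ v ∈ e, u % ℓ = v % ℓ → u = v)

/-- The `r`-graph on `V₁ ∪ V₂` whose edges are all `r`-sets meeting both parts. -/
def crossOn (r : ℕ) (V₁ V₂ : Finset ℕ) : HGraph r :=
  HGraph.ofEdges r (V₁ ∪ V₂) ((Finset.powersetCard r (V₁ ∪ V₂)).filter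
    fun e => (e ∩ V₁).Nonempty ∧ (e ∩ V₂).Nonempty)

/-- The `r`-graph on `V₁ ∪ V₂` whose edges are all `r`-sets meeting `V₁` in an odd
number of vertices. -/
def oddCross (r : ℕ) (V₁ V₂ : Finset ℕ) : HGraph r :=
  HGraph.ofEdges r (V₁ ∪ V₂) ((Finset.powersetCard r (V₁ ∪ V₂)).filter
    fun e => Odd (e ∩ V₁).card)

/-- The Fano plane. -/
def fano : HGraph 3 :=
  HGraph.ofEdges 3 (Finset.Icc 1 7)
    {({1,2,3} : Finset ℕ), {3,4,5}, {5,6,1}, {1,7,4}, {2,7,5}, {3,7,6}, {2,4,6}}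

/-- The generalized triangle `𝕋_r`, with edges `{1,…,r}`, `{1,…,r−1,r+1}` and
`{r,…,2r−1}`. -/
def genTri (r : ℕ) : HGraph r :=
  HGraph.ofEdges r (Finset.Icc 1 (2*r - 1))
    {Finset.Icc 1 r, Finset.Icc 1 (r-1) ∪ {r+1}, Finset.Icc r (2*r - 1)}

/-- `G` is a blowup of the `r`-graph `W` (viewing `W` as a pattern). -/
def IsBlowupOf {r : ℕ} (W G : HGraph r) : Prop :=
  ∃ part : ℕ → ℕ, (∀ v ∈ G.verts, part v ∈ W.verts) ∧
    ∀ e : Finset ℕ, e ∈ G.edges ↔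
      (e ⊆ G.verts ∧ e.card = r ∧ ∃ f ∈ W.edges, Multiset.map part e.val = f.val)

/-- The expansion `H^F` of an `r`-graph `F`: for every pair of vertices not covered
by an edge of `F`, add an edge consisting of this pair plus `r−2` new vertices,
these sets of new vertices being pairwise disjoint. -/
def HGraph.expansion {r : ℕ} (F : HGraph r) : HGraph r :=
  HGraph.ofEdges r
    (F.verts ∪ (((F.verts ×ˢ F.verts).filter fun p =>
        p.1 < p.2 ∧ ∀ e ∈ F.edges, ¬ (p.1 ∈ e ∧ p.2 ∈ e)).biUnion fun p =>
      (Finset.range (r-2)).image fun s =>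
        (F.verts.sup id + 1) + (p.1 * (F.verts.sup id + 1) + p.2) * r + s))
    (F.edges ∪ (((F.verts ×ˢ F.verts).filter fun p =>
        p.1 < p.2 ∧ ∀ e ∈ F.edges, ¬ (p.1 ∈ e ∧ p.2 ∈ e)).image fun p =>
      insert p.1 (insert p.2 ((Finset.range (r-2)).image fun s =>
        (F.verts.sup id + 1) + (p.1 * (F.verts.sup id + 1) + p.2) * r + s))))

/-- A `2`-graph is a tree on `k` vertices: `k` vertices, `k−1` edges, connected. -/
def IsTreeGraph (k : ℕ) (T : HGraph 2) : Prop :=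
  T.verts.card = k ∧ T.edges.card = k - 1 ∧
  ∀ S : Finset ℕ, S ⊆ T.verts → S.Nonempty → S ≠ T.verts →
    ∃ e ∈ T.edges, (e ∩ S).Nonempty ∧ (e \ S).Nonempty

/-- `T` satisfies the Erdős–Sós property for `k`: every graph with average degree
greater than `k−2` contains `T`. -/
def ErdosSos (k : ℕ) (T : HGraph 2) : Prop :=
  ∀ G : HGraph 2, ((k : ℝ) - 2) * (G.verts.card : ℝ) < 2 * (G.edges.card : ℝ) →
    T.IsCopyIn G

/-- The `(r−2)`-expansion `Exp(T)` of a `2`-graph `T`: enlarge every edge by one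
common fixed set of `r−2` new vertices. -/
def expTree (r : ℕ) (T : HGraph 2) : HGraph r :=
  HGraph.ofEdges r
    (T.verts ∪ ((Finset.range (r-2)).image fun s => T.verts.sup id + 1 + s))
    (T.edges.image fun e =>
      e ∪ ((Finset.range (r-2)).image fun s => T.verts.sup id + 1 + s))

/-- The chromatic number of a `2`-graph. -/
noncomputable def chrom (F : HGraph 2) : ℕ :=
  sInf {k | ∃ c : ℕ → ℕ, (∀ v ∈ F.verts, c v < k) ∧
    ∀ e ∈ F.edges, ∀ u ∈ e, ∀ v ∈ e, u ≠ v → c u ≠ c v}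

/-- A graph is edge-critical if deleting some edge lowers its chromatic number. -/
def EdgeCritical (F : HGraph 2) : Prop :=
  ∃ e ∈ F.edges, chrom (HGraph.ofEdges 2 F.verts (F.edges.erase e)) < chrom F

/-- `H` is semibipartite: the vertex set splits into `V₁ ∪ V₂` so that every edge
has exactly one vertex in `V₁`. -/
def Semibipartite (r : ℕ) (H : HGraph r) : Prop :=
  ∃ V₁ ⊆ H.verts, ∀ e ∈ H.edges, (e ∩ V₁).card = 1

/-- `H` is a `K_ℓ^r`-subconstruction, i.e. an `ℓ`-partite `r`-graph. -/
def IsKlSub (r ℓ : ℕ) (H : HGraph r) : Prop :=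
  ∃ f : ℕ → ℕ, (∀ v ∈ H.verts, f v < ℓ) ∧
    ∀ e ∈ H.edges, ∀ u ∈ e, ∀ v ∈ e, f u = f v → u = v

/-- The Lagrangian `λ(W)` of an `r`-graph `W`, viewing `W` as a pattern. -/
noncomputable def hgLagrangian (r : ℕ) (W : HGraph r) : ℝ :=
  limUnder atTop fun n : ℕ =>
    ((sSup {m | ∃ G : HGraph r, IsBlowupOf W G ∧ G.verts.card = n ∧ G.edges.card = m} : ℕ) : ℝ)
      / (n.choose r : ℝ)

/-- The `r`-graph `B(r,ℓ+1)`. -/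
def BGraph (r ℓ : ℕ) : HGraph r :=
  HGraph.ofEdges r (Finset.Icc 1 (ℓ+1))
    (insert (Finset.Icc 1 r)
      ((Finset.powersetCard r (Finset.Icc 2 (ℓ+1))).filter
        fun e => (e ∩ Finset.Icc 2 r).card ≤ 1))

/-- The `r`-uniform matching of size two, `M_2^r`. -/
def matching2 (r : ℕ) : HGraph r :=
  HGraph.ofEdges r (Finset.Icc 1 (2*r)) {Finset.Icc 1 r, Finset.Icc (r+1) (2*r)}

/-- The expanded triangle `𝓒_3^{2r}`. -/
def expandedTriangle (r : ℕ) : HGraph (2*r) :=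
  HGraph.ofEdges (2*r) (Finset.Icc 1 (3*r))
    {Finset.Icc 1 (2*r), Finset.Icc (r+1) (3*r), Finset.Icc 1 r ∪ Finset.Icc (2*r+1) (3*r)}

/-- The `4`-graph `𝔽_{4,3}`. -/
def F43 : HGraph 4 :=
  HGraph.ofEdges 4 (Finset.Icc 1 7)
    {({1,2,3,4} : Finset ℕ), {1,2,3,5}, {1,2,3,6}, {1,2,3,7}, {4,5,6,7}}

/-- The `3`-graph `𝔽_{3,2}`. -/
def F32 : HGraph 3 :=
  HGraph.ofEdges 3 (Finset.Icc 1 5)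
    {({1,2,3} : Finset ℕ), {1,2,4}, {1,2,5}, {3,4,5}}

/-- `H` contains pairwise vertex-disjoint copies of `F i`, `ts i` many of each. -/
def HasMixedMatching (r k : ℕ) (F : Fin k → HGraph r) (ts : Fin k → ℕ)
    (H : HGraph r) : Prop :=
  ∃ S : (i : Fin k) → Fin (ts i) → Finset ℕ,
    (∀ i j, S i j ⊆ H.verts ∧ (S i j).card = (F i).verts.card) ∧
    (∀ p q : Σ i : Fin k, Fin (ts i), p ≠ q → Disjoint (S p.1 p.2) (S q.1 q.2)) ∧
    ∀ i j, (F i).IsCopyIn (H.induce (S i j))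

/-- `ex(n, ⊔ᵢ tᵢ Fᵢ)`. -/
noncomputable def exMixedN (r k : ℕ) (F : Fin k → HGraph r) (ts : Fin k → ℕ)
    (n : ℕ) : ℕ :=
  sSup {m | ∃ H : HGraph r, H.verts.card = n ∧ ¬ HasMixedMatching r k F ts H ∧
    H.edges.card = m}

/-- `ex(n, {F₁,…,F_k})`. -/
noncomputable def exFamN (r k : ℕ) (F : Fin k → HGraph r) (n : ℕ) : ℕ :=
  sSup {m | ∃ H : HGraph r, H.verts.card = n ∧ (∀ i, ¬ (F i).IsCopyIn H) ∧
    H.edges.card = m}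



section Helpers

variable {r : ℕ}

theorem edges_subset_powersetCard (H : HGraph r) : H.edges ⊆ Finset.powersetCard r H.verts := by
  intro e he
  exact Finset.mem_powersetCard.mpr ⟨H.edges_sub e he, H.edges_card e he⟩

theorem edges_card_le (H : HGraph r) : H.edges.card ≤ H.verts.card.choose r := by
  have := Finset.card_le_card (edges_subset_powersetCard H)
  rwa [Finset.card_powersetCard] at this

theorem exN_bdd (n : ℕ) (F : HGraph r) :
    BddAbove {m | ∃ H : HGraph r, H.verts.card = n ∧ ¬ F.IsCopyIn H ∧ H.edges.card = m} := by
  refine ⟨n.choose r, ?_⟩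
  rintro m ⟨H, h1, -, rfl⟩
  rw [← h1]
  exact edges_card_le H

theorem le_exN {F H : HGraph r} (h : ¬ F.IsCopyIn H) :
    H.edges.card ≤ exN r H.verts.card F :=
  le_csSup (exN_bdd H.verts.card F) (show _ from ⟨H, rfl, h, rfl⟩)

theorem exists_extremal {F H : HGraph r} (h : ¬ F.IsCopyIn H) :
    ∃ G : HGraph r, G.verts.card = H.verts.card ∧ ¬ F.IsCopyIn G ∧
      G.edges.card = exN r H.verts.card F := by
  have hne : {m | ∃ G : HGraph r, G.verts.card = H.verts.card ∧ ¬ F.IsCopyIn G ∧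
      G.edges.card = m}.Nonempty := ⟨H.edges.card, H, rfl, h, rfl⟩
  exact Nat.sSup_mem hne (exN_bdd H.verts.card F)

theorem exN_eq_zero {n : ℕ} {F : HGraph r}
    (h : ∀ H : HGraph r, H.verts.card = n → F.IsCopyIn H) : exN r n F = 0 := by
  unfold exN
  have : {m | ∃ H : HGraph r, H.verts.card = n ∧ ¬ F.IsCopyIn H ∧ H.edges.card = m} = ∅ := by
    ext m
    simp only [Set.mem_ofPred_eq, Set.mem_empty_iff_false, iff_false]
    rintro ⟨H, h1, h2, -⟩
    exact h2 (h H h1)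
  rw [this]
  simp

theorem exN_le_choose (n : ℕ) (F : HGraph r) : exN r n F ≤ n.choose r := by
  by_cases h : ∀ H : HGraph r, H.verts.card = n → F.IsCopyIn H
  · rw [exN_eq_zero h]; exact Nat.zero_le _
  · push Not at h
    obtain ⟨H, h1, h2⟩ := h
    obtain ⟨G, g1, -, g3⟩ := exists_extremal h2
    rw [← h1, ← g3, ← g1]
    exact edges_card_le G

/-- handshake -/
theorem sum_deg (H : HGraph r) : ∑ v ∈ H.verts, H.deg v = r * H.edges.card := by
  have h := Finset.sum_card_bipartiteAbove_eq_sum_card_bipartiteBelow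
    (s := H.verts) (t := H.edges) (fun v e => v ∈ e)
  have h2 : ∀ e ∈ H.edges, (H.verts.bipartiteBelow (fun v e => v ∈ e) e).card = r := by
    intro e he
    refine Eq.trans (congrArg Finset.card ?_) (H.edges_card e he)
    ext v
    simp only [Finset.mem_bipartiteBelow]
    exact ⟨fun h => h.2, fun h => ⟨H.edges_sub e he h, h⟩⟩
  rw [Finset.sum_congr rfl h2, Finset.sum_const, smul_eq_mul, mul_comm] at h
  exact h

theorem deg_le (H : HGraph r) {v : ℕ} (hv : v ∈ H.verts) :
    H.deg v ≤ (H.verts.card - 1).choose (r - 1) := by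
  rw [← Finset.card_erase_of_mem hv, ← Finset.card_powersetCard]
  refine Finset.card_le_card_of_injOn (fun e => e.erase v) ?_ ?_
  · intro e he
    have he := Finset.mem_filter.mp he
    refine Finset.mem_powersetCard.mpr ⟨Finset.erase_subset_erase _ (H.edges_sub e he.1), ?_⟩
    rw [Finset.card_erase_of_mem he.2, H.edges_card e he.1]
  · intro e he e' he' h
    have he := Finset.mem_filter.mp he
    have he' := Finset.mem_filter.mp he'
    have h : e.erase v = e'.erase v := h
    rw [← Finset.insert_erase he.2, h, Finset.insert_erase he'.2]

/-- codegree -/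
def codeg (H : HGraph r) (u v : ℕ) : ℕ := (H.edges.filter fun e => u ∈ e ∧ v ∈ e).card

theorem codeg_le (H : HGraph r) {u v : ℕ} (huv : u ≠ v) :
    codeg H u v ≤ H.verts.card.choose (r - 2) := by
  rw [← Finset.card_powersetCard]
  refine Finset.card_le_card_of_injOn (fun e => (e.erase u).erase v) ?_ ?_
  · intro e he
    have he := Finset.mem_filter.mp he
    refine Finset.mem_powersetCard.mpr ⟨(Finset.erase_subset _ _).trans
      ((Finset.erase_subset _ _).trans (H.edges_sub e he.1)), ?_⟩
    rw [Finset.card_erase_of_mem (Finset.mem_erase.mpr ⟨huv.symm, he.2.2⟩),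
      Finset.card_erase_of_mem he.2.1, H.edges_card e he.1]
    omega
  · intro e he e' he' h
    have he := Finset.mem_filter.mp he
    have he' := Finset.mem_filter.mp he'
    have h : (e.erase u).erase v = (e'.erase u).erase v := h
    rw [← Finset.insert_erase he.2.1, ← Finset.insert_erase he'.2.1,
      ← Finset.insert_erase (Finset.mem_erase.mpr ⟨huv.symm, he.2.2⟩), h,
      Finset.insert_erase (Finset.mem_erase.mpr ⟨huv.symm, he'.2.2⟩)]

theorem codeg_eq_zero (hr : r ≤ 1) (H : HGraph r) {u v : ℕ} (huv : u ≠ v) :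
    codeg H u v = 0 := by
  unfold codeg
  rw [Finset.card_eq_zero, Finset.filter_eq_empty_iff]
  rintro e he ⟨h1, h2⟩
  have := H.edges_card e he
  exact huv (Finset.card_le_one.mp (by omega) u h1 v h2)

/-- delete a set of vertices -/
def del (H : HGraph r) (S : Finset ℕ) : HGraph r where
  verts := H.verts \ S
  edges := H.edges.filter fun e => Disjoint e S
  edges_sub := fun e he => by
    have h := Finset.mem_filter.mp he
    exact Finset.subset_sdiff.mpr ⟨H.edges_sub e h.1, h.2⟩
  edges_card := fun e he => H.edges_card e (Finset.mem_filter.mp he).1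

theorem isCopyIn_mono {F H G : HGraph r} (hv : H.verts ⊆ G.verts) (he : H.edges ⊆ G.edges)
    (h : F.IsCopyIn H) : F.IsCopyIn G := by
  obtain ⟨f, h1, h2, h3⟩ := h
  exact ⟨f, h1, fun v hv' => hv (h2 v hv'), fun e he' => he (h3 e he')⟩

theorem del_free {F H : HGraph r} (h : ¬ F.IsCopyIn H) (S : Finset ℕ) :
    ¬ F.IsCopyIn (del H S) := fun h' =>
  h (isCopyIn_mono Finset.sdiff_subset (Finset.filter_subset _ _) h')

theorem del_edges (H : HGraph r) (S : Finset ℕ) :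
    H.edges.card ≤ (del H S).edges.card + ∑ u ∈ S, H.deg u := by
  have h : H.edges ⊆ (del H S).edges ∪ S.biUnion (fun u => H.edges.filter fun e => u ∈ e) := by
    intro e he
    by_cases hd : Disjoint e S
    · exact Finset.mem_union_left _ (Finset.mem_filter.mpr ⟨he, hd⟩)
    · obtain ⟨u, h1, h2⟩ := Finset.not_disjoint_iff.mp hd
      exact Finset.mem_union_right _ (Finset.mem_biUnion.mpr
        ⟨u, h2, Finset.mem_filter.mpr ⟨he, h1⟩⟩)
  refine (Finset.card_le_card h).trans ((Finset.card_union_le _ _).trans ?_)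
  exact Nat.add_le_add_left Finset.card_biUnion_le _

theorem del_deg (H : HGraph r) (S : Finset ℕ) (v : ℕ) :
    H.deg v ≤ (del H S).deg v + ∑ u ∈ S, codeg H u v := by
  have h : (H.edges.filter fun e => v ∈ e) ⊆ ((del H S).edges.filter fun e => v ∈ e) ∪
      S.biUnion (fun u => H.edges.filter fun e => u ∈ e ∧ v ∈ e) := by
    intro e he
    have he := Finset.mem_filter.mp he
    by_cases hd : Disjoint e S
    · exact Finset.mem_union_left _ (Finset.mem_filter.mpr
        ⟨Finset.mem_filter.mpr ⟨he.1, hd⟩, he.2⟩)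
    · obtain ⟨u, h1, h2⟩ := Finset.not_disjoint_iff.mp hd
      exact Finset.mem_union_right _ (Finset.mem_biUnion.mpr
        ⟨u, h2, Finset.mem_filter.mpr ⟨he.1, h1, he.2⟩⟩)
  refine (Finset.card_le_card h).trans ((Finset.card_union_le _ _).trans ?_)
  exact Nat.add_le_add_left Finset.card_biUnion_le _

/-- `H` carries a `P`-colouring. -/
def HasPart (P : Pattern r) (H : HGraph r) : Prop :=
  ∃ part : ℕ → ℕ, (∀ v ∈ H.verts, part v ∈ P.idx) ∧
    ∀ e ∈ H.edges, Multiset.map part e.val ∈ P.mE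

theorem HasPart.of_constr {P : Pattern r} {H : HGraph r} (h : P.IsConstruction H) :
    HasPart P H := by
  obtain ⟨p, h1, h2⟩ := h
  exact ⟨p, h1, fun e he => ((h2 e).mp he).2.2⟩

theorem HasPart.of_sub {P : Pattern r} {H : HGraph r} (h : P.IsSubconstruction H) :
    HasPart P H := by
  obtain ⟨G, hG, hv, he⟩ := h
  obtain ⟨p, h1, h2⟩ := HasPart.of_constr hG
  exact ⟨p, fun v hv' => h1 v (hv hv'), fun e he' => h2 e (he he')⟩

theorem HasPart.free {P : Pattern r} {F H : HGraph r} (hTP : IsTuranPair r F P)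
    (h : HasPart P H) : ¬ F.IsCopyIn H := by
  obtain ⟨p, h1, h2⟩ := h
  let G : HGraph r := HGraph.ofEdges r H.verts
    ((Finset.powersetCard r H.verts).filter fun e => Multiset.map p e.val ∈ P.mE)
  have hmem : ∀ e, e ∈ G.edges ↔
      (e ⊆ H.verts ∧ e.card = r ∧ Multiset.map p e.val ∈ P.mE) := by
    intro e
    simp only [G, HGraph.ofEdges, Finset.mem_filter, Finset.mem_powersetCard]
    tauto
  have hG : P.IsConstruction G := ⟨p, h1, hmem⟩
  refine fun hc => hTP.1 G hG (isCopyIn_mono (H := H) (G := G) (fun _ h => h) ?_ hc)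
  intro e he
  exact (hmem e).mpr ⟨H.edges_sub e he, H.edges_card e he, h2 e he⟩

/-- cloning a vertex once -/
theorem clone_one {P : Pattern r} {H : HGraph r} (h : HasPart P H) {v : ℕ} (hv : v ∈ H.verts) :
    ∃ G : HGraph r, HasPart P G ∧ v ∈ G.verts ∧ G.verts.card = H.verts.card + 1 ∧
      G.edges.card = H.edges.card + H.deg v ∧ H.deg v ≤ G.deg v := by
  classical
  obtain ⟨p, h1, h2⟩ := h
  obtain ⟨w, hw⟩ := Infinite.exists_notMem_finset H.verts
  have hwe : ∀ e ∈ H.edges, w ∉ e := fun e he hwe => hw (H.edges_sub e he hwe)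
  have hvw : v ≠ w := fun h => hw (h ▸ hv)
  let N : Finset (Finset ℕ) := (H.edges.filter fun e => v ∈ e).image
    fun e => insert w (e.erase v)
  have hN : ∀ e ∈ N, ∃ e' ∈ H.edges, v ∈ e' ∧ insert w (e'.erase v) = e := by
    intro e he
    obtain ⟨e', he', h⟩ := Finset.mem_image.mp he
    have he' := Finset.mem_filter.mp he'
    exact ⟨e', he'.1, he'.2, h⟩
  have hwn : ∀ e' ∈ H.edges, w ∉ e'.erase v := fun e' he' hh =>
    hwe e' he' (Finset.mem_of_mem_erase hh)
  let G : HGraph r :=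
    { verts := insert w H.verts
      edges := H.edges ∪ N
      edges_sub := by
        intro e he
        rcases Finset.mem_union.mp he with he | he
        · exact (H.edges_sub e he).trans (Finset.subset_insert _ _)
        · obtain ⟨e', he', -, rfl⟩ := hN e he
          exact Finset.insert_subset_insert _
            ((Finset.erase_subset _ _).trans (H.edges_sub e' he'))
      edges_card := by
        intro e he
        rcases Finset.mem_union.mp he with he | he
        · exact H.edges_card e he
        · obtain ⟨e', he', hv', rfl⟩ := hN e he
          rw [Finset.card_insert_of_notMem (hwn e' he'), Finset.card_erase_add_one hv',
            H.edges_card e' he'] }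
  have hmapold : ∀ e : Finset ℕ, w ∉ e →
      Multiset.map (Function.update p w (p v)) e.val = Multiset.map p e.val := by
    intro e he
    refine Multiset.map_congr rfl ?_
    intro x hx
    refine Function.update_of_ne ?_ _ _
    rintro rfl
    exact he hx
  refine ⟨G, ⟨Function.update p w (p v), ?_, ?_⟩, Finset.mem_insert_of_mem hv,
    Finset.card_insert_of_notMem hw, ?_, ?_⟩
  · intro x hx
    rcases Finset.mem_insert.mp hx with rfl | hx
    · rw [Function.update_self]; exact h1 v hv
    · rw [Function.update_of_ne (show x ≠ w from fun h => hw (h ▸ hx))]; exact h1 x hx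
  · intro e he
    rcases Finset.mem_union.mp he with he | he
    · rw [hmapold e (hwe e he)]; exact h2 e he
    · obtain ⟨e', he', hv', rfl⟩ := hN e he
      rw [Finset.insert_val_of_notMem (hwn e' he'), Multiset.map_cons, Function.update_self,
        hmapold _ (hwn e' he')]
      have := h2 e' he'
      rwa [← Finset.insert_erase hv', Finset.insert_val_of_notMem (Finset.notMem_erase v e'),
        Multiset.map_cons] at this
  · have hdisj : Disjoint H.edges N := by
      rw [Finset.disjoint_left]
      intro e he heN
      obtain ⟨e', -, -, rfl⟩ := hN e heN
      exact hwe _ he (Finset.mem_insert_self _ _)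
    change (H.edges ∪ N).card = _
    rw [Finset.card_union_of_disjoint hdisj]
    congr 1
    refine Finset.card_image_of_injOn ?_
    intro e he e' he' hh
    have he := Finset.mem_filter.mp he
    have he' := Finset.mem_filter.mp he'
    have hh : insert w (e.erase v) = insert w (e'.erase v) := hh
    have : e.erase v = e'.erase v := by
      rw [← Finset.erase_insert (hwn e he.1), hh, Finset.erase_insert (hwn e' he'.1)]
    rw [← Finset.insert_erase he.2, this, Finset.insert_erase he'.2]
  · exact Finset.card_le_card (Finset.filter_subset_filter _ Finset.subset_union_left)

theorem clone_many {P : Pattern r} {H : HGraph r} (h : HasPart P H) {v : ℕ} (hv : v ∈ H.verts)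
    (K : ℕ) :
    ∃ G : HGraph r, HasPart P G ∧ v ∈ G.verts ∧ G.verts.card = H.verts.card + K ∧
      H.edges.card + K * H.deg v ≤ G.edges.card ∧ H.deg v ≤ G.deg v := by
  induction K with
  | zero => exact ⟨H, h, hv, rfl, by simp, le_rfl⟩
  | succ K ih =>
    obtain ⟨G, g1, g2, g3, g4, g5⟩ := ih
    obtain ⟨G', k1, k2, k3, k4, k5⟩ := clone_one g1 g2
    refine ⟨G', k1, k2, by omega, ?_, g5.trans k5⟩
    rw [k4, Nat.succ_mul]
    omega

theorem exists_extremal_part {P : Pattern r} {F : HGraph r} (hTP : IsTuranPair r F P)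
    (hne : P.idx.Nonempty) (n : ℕ) :
    ∃ G : HGraph r, G.verts.card = n ∧ HasPart P G ∧ G.edges.card = exN r n F := by
  obtain ⟨i, hi⟩ := hne
  let E : HGraph r := ⟨Finset.range n, ∅, by simp, by simp⟩
  have hE : HasPart P E := ⟨fun _ => i, fun _ _ => hi, by simp [E]⟩
  obtain ⟨G, g1, g2, g3⟩ := exists_extremal (hE.free hTP)
  have hEc : E.verts.card = n := Finset.card_range n
  refine ⟨G, g1.trans hEc, HasPart.of_constr (hTP.2 G g2 (by rw [g1, g3])), by rw [g3, hEc]⟩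

theorem all_copy_of_idx_empty {P : Pattern r} {F : HGraph r} (hTP : IsTuranPair r F P)
    (hne : P.idx = ∅) {n : ℕ} (hn : 1 ≤ n) (H : HGraph r) (hH : H.verts.card = n) :
    F.IsCopyIn H := by
  by_contra hc
  obtain ⟨G, g1, g2, g3⟩ := exists_extremal hc
  obtain ⟨p, hp, -⟩ := hTP.2 G g2 (by rw [g1, g3])
  obtain ⟨v, hv⟩ := Finset.card_pos.mp (by omega : 0 < G.verts.card)
  have := hp v hv
  rw [hne] at this
  simp at this

theorem exists_max_deg (H : HGraph r) {n : ℕ} (hn : H.verts.card = n + 1) :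
    ∃ v ∈ H.verts, r * H.edges.card ≤ (n + 1) * H.deg v := by
  have hne : H.verts.Nonempty := Finset.card_pos.mp (by omega)
  obtain ⟨v, hv, h⟩ := Finset.exists_max_image H.verts H.deg hne
  refine ⟨v, hv, ?_⟩
  rw [← sum_deg, ← hn, ← smul_eq_mul]
  exact Finset.sum_le_card_nsmul _ _ _ h

theorem exists_min_deg (H : HGraph r) {n : ℕ} (hn : H.verts.card = n + 1) :
    ∃ v ∈ H.verts, (n + 1) * H.deg v ≤ r * H.edges.card := by
  have hne : H.verts.Nonempty := Finset.card_pos.mp (by omega)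
  obtain ⟨v, hv, h⟩ := Finset.exists_min_image H.verts H.deg hne
  refine ⟨v, hv, ?_⟩
  rw [← sum_deg, ← hn, ← smul_eq_mul]
  exact Finset.card_nsmul_le_sum _ _ _ h

theorem ex_lower {P : Pattern r} {F : HGraph r} (hTP : IsTuranPair r F P)
    (hne : P.idx.Nonempty) (n : ℕ) :
    (n + 1) * exN r (n + 1) F + r * exN r (n + 1) F ≤ (n + 1) * exN r (n + 2) F := by
  obtain ⟨G, g1, g2, g3⟩ := exists_extremal_part hTP hne (n + 1)
  obtain ⟨v, hv, h⟩ := exists_max_deg G g1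
  obtain ⟨G', k1, -, k3, k4, -⟩ := clone_one g2 hv
  have := le_exN (k1.free hTP)
  rw [k3, k4, g1, g3] at this
  rw [g3] at h
  nlinarith

theorem ex_upper {P : Pattern r} {F : HGraph r} (hTP : IsTuranPair r F P)
    (hne : P.idx.Nonempty) (n : ℕ) :
    (n + 1) * exN r (n + 1) F ≤ (n + 1) * exN r n F + r * exN r (n + 1) F ∧
    exN r (n + 1) F ≤ exN r n F + n.choose (r - 1) := by
  obtain ⟨G, g1, g2, g3⟩ := exists_extremal_part hTP hne (n + 1)
  obtain ⟨v, hv, h⟩ := exists_min_deg G g1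
  have h1 := del_edges G {v}
  have h2 := le_exN (del_free (g2.free hTP) {v})
  have h3 : (del G {v}).verts.card = n := by
    change (G.verts \ {v}).card = n
    rw [Finset.sdiff_singleton_eq_erase, Finset.card_erase_of_mem hv, g1]; rfl
  have h4 := deg_le G hv
  rw [Finset.sum_singleton, g3] at h1
  rw [h3] at h2
  rw [g1, Nat.add_sub_cancel] at h4
  rw [g3] at h
  constructor
  · nlinarith
  · omega

theorem smooth_core {P : Pattern r} {F : HGraph r} (hTP : IsTuranPair r F P)
    (hne : P.idx.Nonempty) (hr : 1 ≤ r) (k : ℕ) :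
    |(exN r (k + 2) F : ℝ) - exN r (k + 1) F - r * exN r (k + 1) F / ((k + 1 : ℕ) : ℝ)|
      ≤ ((k + 1).choose (r - 2) : ℝ) := by
  have h1 := ex_lower hTP hne k
  obtain ⟨h2, h3⟩ := ex_upper hTP hne (k + 1)
  have ha := exN_le_choose (k + 1) F
  have hb := exN_le_choose (k + 2) F
  set a := exN r (k + 1) F with hadef
  set b := exN r (k + 2) F with hbdef
  have h1' : ((k : ℝ) + 1) * a + r * a ≤ (k + 1) * b := by exact_mod_cast h1
  have h2' : ((k : ℝ) + 2) * b ≤ (k + 2) * a + r * b := by exact_mod_cast h2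
  have ha' : (a : ℝ) ≤ ((k + 1).choose r : ℝ) := by exact_mod_cast ha
  have hk : (0 : ℝ) < (k : ℝ) + 1 := by positivity
  have hq0 : (0 : ℝ) ≤ r * a / ((k + 1 : ℕ) : ℝ) := by positivity
  rw [abs_of_nonneg]
  swap
  · rw [sub_nonneg, div_le_iff₀ (by positivity)]
    push_cast
    nlinarith
  rcases Nat.lt_or_ge r 2 with hr1 | hr2
  · obtain rfl : r = 1 := by omega
    have h3' : (b : ℝ) ≤ a + 1 := by
      have : b ≤ a + 1 := by simpa using h3
      exact_mod_cast this
    simp only [Nat.choose_zero_right, Nat.reduceSub, Nat.cast_one]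
    simp only [Nat.cast_one] at hq0
    linarith
  obtain ⟨s, rfl⟩ : ∃ s, r = s + 2 := ⟨r - 2, by omega⟩
  simp only [Nat.add_sub_cancel]
  rcases Nat.lt_or_ge s k with hsk | hsk
  · obtain ⟨d, rfl⟩ : ∃ d, k = s + d + 1 := ⟨k - s - 1, by omega⟩
    have e1 := Nat.choose_succ_right_eq (s + d + 1 + 1) (s + 1)
    have e2 := Nat.add_one_mul_choose_eq (s + d + 1) s
    have e3 : s + d + 1 + 1 - (s + 1) = d + 1 := by omega
    rw [e3] at e1
    have e4 : (s + d + 1).choose s ≤ (s + d + 1 + 1).choose s :=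
      Nat.choose_le_choose _ (by omega)
    have e4' : ((s + d + 1).choose s : ℝ) ≤ ((s + d + 1 + 1).choose s : ℝ) := by
      exact_mod_cast e4
    have e1' : ((s + d + 1 + 1).choose (s + 2) : ℝ) * (s + 2) =
        ((s + d + 1 + 1).choose (s + 1) : ℝ) * (d + 1) := by exact_mod_cast e1
    have e2' : ((s : ℝ) + d + 1 + 1) * ((s + d + 1).choose s : ℝ) =
        ((s + d + 1 + 1).choose (s + 1) : ℝ) * (s + 1) := by exact_mod_cast e2
    refine le_trans ?_ e4'
    have hd : (0 : ℝ) < (d : ℝ) + 1 := by positivity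
    push_cast at h2' h1' hk ⊢
    set C := ((s + d + 1 + 1).choose (s + 2) : ℝ)
    set B := ((s + d + 1 + 1).choose (s + 1) : ℝ)
    set A := ((s + d + 1).choose s : ℝ)
    -- (d+1) b ≤ (s+d+3) a
    have h5 : ((d : ℝ) + 1) * b ≤ (s + d + 3) * a := by nlinarith
    have h6 : (b : ℝ) - a ≤ (s + 2) * a / (d + 1) := by
      rw [le_div_iff₀ hd]; nlinarith
    have h7 : ((s : ℝ) + 2) * a / (d + 1) - (s + 2) * a / (s + d + 1 + 1)
        = (s + 2) * a * (s + 1) / ((d + 1) * (s + d + 1 + 1)) := by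
      field_simp; ring
    have h8 : ((s : ℝ) + 2) * a * (s + 1) / ((d + 1) * (s + d + 1 + 1)) ≤ A := by
      rw [div_le_iff₀ (by positivity)]
      have : ((s : ℝ) + 2) * a * (s + 1) ≤ (C * (s + 2)) * (s + 1) := by
        have := mul_le_mul_of_nonneg_left ha' (by positivity : (0 : ℝ) ≤ (s + 2) * (s + 1))
        nlinarith
      rw [e1'] at this
      calc _ ≤ _ := this
        _ = (B * (s + 1)) * (d + 1) := by ring
        _ = _ := by rw [← e2']; ring
    linarith
  · have hb1 : b ≤ 1 := hb.trans (by
      rcases Nat.eq_or_lt_of_le hsk with h | h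
      · rw [h]; simp
      · rw [Nat.choose_eq_zero_of_lt (by omega)]; omega)
    have ha0 : (0 : ℝ) ≤ a := by positivity
    rcases Nat.eq_or_lt_of_le hsk with h | h
    · have : 1 ≤ (k + 1).choose s := Nat.choose_pos (by omega)
      have h' : (1 : ℝ) ≤ ((k + 1).choose s : ℝ) := by exact_mod_cast this
      have hb' : (b : ℝ) ≤ 1 := by exact_mod_cast hb1
      linarith
    · have : b = 0 := by
        have := Nat.choose_eq_zero_of_lt (n := k + 2) (k := s + 2) (by omega)
        omega
      have hb' : (b : ℝ) = 0 := by exact_mod_cast this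
      have : (0 : ℝ) ≤ ((k + 1).choose s : ℝ) := by positivity
      linarith

theorem smooth_all {P : Pattern r} {F : HGraph r} (hTP : IsTuranPair r F P) (n : ℕ) :
    |deltaN r n F - dN r (n-1) F| ≤ 4 * ((n-1).choose (r-2) : ℝ) := by
  unfold deltaN dN
  rcases Nat.eq_zero_or_pos r with rfl | hr
  · have h1 : (exN 0 n F : ℝ) ≤ 1 := by
      have := exN_le_choose n F
      rw [Nat.choose_zero_right] at this
      exact_mod_cast this
    have h2 : (exN 0 (n - 1) F : ℝ) ≤ 1 := by
      have := exN_le_choose (n - 1) F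
      rw [Nat.choose_zero_right] at this
      exact_mod_cast this
    have h3 : (0 : ℝ) ≤ exN 0 n F := by positivity
    have h4 : (0 : ℝ) ≤ exN 0 (n - 1) F := by positivity
    simp only [Nat.zero_sub, Nat.choose_zero_right, Nat.cast_zero, zero_mul, zero_div, sub_zero,
      Nat.cast_one]
    rw [abs_le]; constructor <;> linarith
  have hz : exN r 0 F = 0 := by
    have := exN_le_choose 0 F
    rw [Nat.choose_eq_zero_of_lt hr] at this
    omega
  match n with
  | 0 => simp [hz]
  | 1 =>
    simp only [Nat.sub_self, hz, Nat.cast_zero, mul_zero, div_zero, sub_zero, Nat.abs_cast]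
    have h := exN_le_choose 1 F
    rcases Nat.lt_or_ge r 2 with hr1 | hr2
    · obtain rfl : r = 1 := by omega
      have : exN 1 1 F ≤ 1 := by simpa using h
      have h4 : exN 1 1 F ≤ 4 := by omega
      have h4' : (exN 1 1 F : ℝ) ≤ 4 := by exact_mod_cast h4
      simpa using h4'
    · rw [Nat.choose_eq_zero_of_lt hr2] at h
      have h0 : exN r 1 F = 0 := by omega
      rw [h0]
      push_cast
      positivity
  | k + 2 =>
    rcases Finset.eq_empty_or_nonempty P.idx with he | hne
    · have h0 : ∀ j, 1 ≤ j → exN r j F = 0 := fun j hj =>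
        exN_eq_zero (all_copy_of_idx_empty hTP he hj)
      rw [h0 (k + 2) (by omega), h0 (k + 2 - 1) (by omega)]
      simp
    · refine (smooth_core hTP hne hr k).trans ?_
      have : (0 : ℝ) ≤ ((k + 1).choose (r - 2) : ℝ) := by positivity
      change ((k + 1).choose (r - 2) : ℝ) ≤ 4 * ((k + 1).choose (r - 2) : ℝ)
      linarith

theorem ex_density_anti {P : Pattern r} {F : HGraph r} (hTP : IsTuranPair r F P)
    (hne : P.idx.Nonempty) (n : ℕ) (hn : r ≤ n) :
    (exN r (n + 1) F : ℝ) / ((n + 1).choose r : ℝ) ≤ (exN r n F : ℝ) / (n.choose r : ℝ) := by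
  have h := (ex_upper hTP hne n).1
  have e := Nat.choose_mul_succ_eq n r
  obtain ⟨d, rfl⟩ : ∃ d, n = r + d := ⟨n - r, by omega⟩
  have e3 : r + d + 1 - r = d + 1 := by omega
  rw [e3] at e
  have e' : ((r + d).choose r : ℝ) * (r + d + 1) = ((r + d + 1).choose r : ℝ) * (d + 1) := by
    exact_mod_cast e
  have h' : ((r : ℝ) + d + 1) * exN r (r + d + 1) F ≤
      (r + d + 1) * exN r (r + d) F + r * exN r (r + d + 1) F := by exact_mod_cast h
  have p1 : (0 : ℝ) < ((r + d).choose r : ℝ) := by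
    exact_mod_cast Nat.choose_pos (by omega)
  have p2 : (0 : ℝ) < ((r + d + 1).choose r : ℝ) := by
    exact_mod_cast Nat.choose_pos (by omega)
  rw [div_le_div_iff₀ p2 p1]
  set A := ((r + d).choose r : ℝ)
  set B := ((r + d + 1).choose r : ℝ)
  set x := (exN r (r + d + 1) F : ℝ)
  set y := (exN r (r + d) F : ℝ)
  have hd : (0 : ℝ) < (r : ℝ) + d + 1 := by positivity
  have h5 : (d + 1 : ℝ) * x ≤ (r + d + 1) * y := by nlinarith
  have : x * A * (r + d + 1) ≤ y * B * (r + d + 1) := by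
    calc x * A * (r + d + 1) = x * (A * (r + d + 1)) := by ring
      _ = ((d + 1) * x) * B := by rw [e']; ring
      _ ≤ ((r + d + 1) * y) * B := mul_le_mul_of_nonneg_right h5 p2.le
      _ = _ := by ring
  exact le_of_mul_le_mul_right this hd

theorem copy_of_complete {F H : HGraph r} (hc : F.verts.card ≤ H.verts.card)
    (hH : H.edges = Finset.powersetCard r H.verts) : F.IsCopyIn H := by
  obtain ⟨T, hT, hTc⟩ := Finset.exists_subset_card_eq hc
  let φ := Finset.equivOfCardEq hTc.symm
  let f : ℕ → ℕ := fun x => if h : x ∈ F.verts then (φ ⟨x, h⟩ : ℕ) else 0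
  have hf : ∀ x (h : x ∈ F.verts), f x = (φ ⟨x, h⟩ : ℕ) := fun x h => dif_pos h
  have hinj : Set.InjOn f ↑F.verts := by
    intro x hx y hy hxy
    rw [hf x hx, hf y hy] at hxy
    have := φ.injective (Subtype.ext hxy)
    exact congrArg Subtype.val this
  have hmem : ∀ v ∈ F.verts, f v ∈ H.verts := by
    intro v hv
    rw [hf v hv]
    exact hT (φ ⟨v, hv⟩).2
  refine ⟨f, hinj, hmem, ?_⟩
  intro e he
  rw [hH, Finset.mem_powersetCard]
  constructor
  · intro x hx
    obtain ⟨y, hy, rfl⟩ := Finset.mem_image.mp hx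
    exact hmem y (F.edges_sub e he hy)
  · rw [Finset.card_image_of_injOn (hinj.mono (by exact_mod_cast F.edges_sub e he)),
      F.edges_card e he]

theorem density_lt_one {P : Pattern r} {F : HGraph r} (hTP : IsTuranPair r F P)
    (hne : P.idx.Nonempty) {π : ℝ} (hπ : HasTuranDensity r F π) : π < 1 := by
  set n0 := max F.verts.card r with hn0
  have hanti : ∀ n, n0 ≤ n → (exN r n F : ℝ) / (n.choose r : ℝ) ≤
      (exN r n0 F : ℝ) / (n0.choose r : ℝ) := by
    intro n hn
    induction n, hn using Nat.le_induction with
    | base => exact le_rfl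
    | succ n hn ih => exact (ex_density_anti hTP hne n (le_trans (le_max_right _ _) hn)).trans ih
  have hle : π ≤ (exN r n0 F : ℝ) / (n0.choose r : ℝ) :=
    le_of_tendsto hπ (eventually_atTop.mpr ⟨n0, hanti⟩)
  refine lt_of_le_of_lt hle ?_
  have hpos : 0 < n0.choose r := Nat.choose_pos (le_max_right _ _)
  rw [div_lt_one (by exact_mod_cast hpos)]
  obtain ⟨G, g1, g2, g3⟩ := exists_extremal_part hTP hne n0
  have h1 := exN_le_choose n0 F
  have h2 : exN r n0 F ≠ n0.choose r := by
    intro h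
    refine g2.free hTP (copy_of_complete (by rw [g1]; exact le_max_left _ _) ?_)
    refine Finset.eq_of_subset_of_card_le (edges_subset_powersetCard G) ?_
    rw [Finset.card_powersetCard, g1, g3, h]
  exact_mod_cast lt_of_le_of_ne h1 h2

theorem verts_pos {P : Pattern r} {F : HGraph r} (hTP : IsTuranPair r F P) (hr : 1 ≤ r) :
    0 < F.verts.card := by
  by_contra h
  have hv : F.verts = ∅ := Finset.card_eq_zero.mp (by omega)
  let E : HGraph r := ⟨∅, ∅, by simp, by simp⟩
  have hE : HasPart P E := ⟨id, by simp [E], by simp [E]⟩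
  refine hE.free hTP ⟨id, by simp [hv], by simp [hv], ?_⟩
  intro e he
  have h1 := F.edges_sub e he
  have h2 := F.edges_card e he
  rw [hv, Finset.subset_empty] at h1
  rw [h1] at h2
  simp at h2
  omega

theorem pow_one_sub_le (r : ℕ) {s : ℝ} (h0 : 0 ≤ s) (h1 : s ≤ 1) :
    (1 - s) ^ r ≤ 1 - r * s + r ^ 2 * s ^ 2 := by
  induction r with
  | zero => simp
  | succ k ih =>
    rw [pow_succ]
    have := mul_le_mul_of_nonneg_right ih (by linarith : (0 : ℝ) ≤ 1 - s)
    refine this.trans ?_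
    push_cast
    have h3 : 0 ≤ (k : ℝ) * s ^ 2 := by positivity
    have h4 : 0 ≤ (k : ℝ) ^ 2 * s ^ 3 := by positivity
    have h5 : 0 ≤ s ^ 2 := by positivity
    nlinarith

theorem pow_one_add_le (r : ℕ) {t : ℝ} (h0 : 0 ≤ t) (h1 : t ≤ 1) :
    (1 + t) ^ r ≤ 1 + r * t + 4 ^ r * t ^ 2 := by
  induction r with
  | zero => simp; positivity
  | succ k ih =>
    rw [pow_succ]
    have := mul_le_mul_of_nonneg_right ih (by linarith : (0 : ℝ) ≤ 1 + t)
    refine this.trans ?_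
    have hk : (k : ℝ) ≤ 4 ^ k := by
      exact_mod_cast (Nat.lt_pow_self (n := k) (by norm_num : 1 < 4)).le
    push_cast
    have h2 : 0 ≤ t ^ 2 := by positivity
    have h3 : t ^ 3 ≤ t ^ 2 := by nlinarith
    have h4 : (4 : ℝ) ^ k * t ^ 3 ≤ 4 ^ k * t ^ 2 :=
      mul_le_mul_of_nonneg_left h3 (by positivity)
    have h5 : (k : ℝ) * t ^ 2 ≤ 4 ^ k * t ^ 2 := mul_le_mul_of_nonneg_right hk h2
    have h6 : (0 : ℝ) ≤ 4 ^ k * t ^ 2 := by positivity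
    have h7 : (4 : ℝ) ^ (k + 1) = 4 * 4 ^ k := by ring
    rw [h7]
    nlinarith

theorem real_A {r : ℕ} (hr : 1 ≤ r) {π c1 ε1 ε ζ s : ℝ} (hπ0 : 0 ≤ π) (hπ1 : π ≤ 1)
    (hε1 : 0 ≤ ε1) (hζ : 0 < ζ) (hε : ε ≤ ζ / (4 * r)) (hε2 : ε ≤ 1)
    (hs1 : ε / 2 ≤ s) (hs2 : s ≤ ε) (hε0 : 0 < ε) (hc : c1 + ε1 ≤ ε * ζ / 16)
    (h : π - c1 ≤ (π + ε1) * (1 - s) ^ r + s * r * (π - ζ / 2)) : False := by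
  have hR : (1 : ℝ) ≤ r := by exact_mod_cast hr
  have hs0 : 0 < s := by linarith
  have h1 := pow_one_sub_le r hs0.le (by linarith)
  have h2 : (1 - s) ^ r ≤ 1 := pow_le_one₀ (by linarith) (by linarith)
  have h3 : π * (1 - s) ^ r ≤ π * (1 - r * s + r ^ 2 * s ^ 2) :=
    mul_le_mul_of_nonneg_left h1 hπ0
  have h4 : ε1 * (1 - s) ^ r ≤ ε1 := mul_le_of_le_one_right hε1 h2
  have h5 : π * (r ^ 2 * s ^ 2) ≤ r ^ 2 * s ^ 2 := mul_le_of_le_one_left (by positivity) hπ1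
  have h6 : 4 * r * s ≤ ζ := by
    have : s ≤ ζ / (4 * r) := hs2.trans hε
    rw [le_div_iff₀ (by positivity)] at this
    linarith
  have h7 : (r : ℝ) ^ 2 * s ^ 2 ≤ r * s * ζ / 4 := by
    have := mul_le_mul_of_nonneg_left h6 (by positivity : (0 : ℝ) ≤ r * s)
    nlinarith
  have h8 : s * ζ ≤ r * s * ζ := by
    have := mul_le_mul_of_nonneg_right hR (by positivity : (0 : ℝ) ≤ s * ζ)
    linarith
  have h9 : ε / 2 * ζ ≤ s * ζ := mul_le_mul_of_nonneg_right hs1 hζ.le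
  have h10 : 0 < ε * ζ := by positivity
  nlinarith

theorem real_B {r : ℕ} (hr : 1 ≤ r) {π c1 ε1 ε γ η t : ℝ} (hπ0 : 0 ≤ π) (hπ1 : π ≤ 1)
    (hε1 : 0 ≤ ε1) (hη : 0 < η) (hη1 : η ≤ 1) (hγ : γ = η / (8 * 4 ^ r))
    (hε : ε ≤ γ * η / (16 * r))
    (ht1 : γ / 2 ≤ t) (ht2 : t ≤ γ) (hc : c1 ≤ γ * η / 64) (hc2 : 2 ^ r * ε1 ≤ γ * η / 64)
    (h : π - c1 - ε * r + t * r * (π + η - ε * r) ≤ (π + ε1) * (1 + t) ^ r) : False := by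
  have hR : (1 : ℝ) ≤ r := by exact_mod_cast hr
  have hM : (1 : ℝ) ≤ 4 ^ r := one_le_pow₀ (by norm_num)
  have hγ0 : 0 < γ := by rw [hγ]; positivity
  have hMγ : 4 ^ r * γ = η / 8 := by rw [hγ]; field_simp
  have hγ1 : γ ≤ 1 := by nlinarith
  have ht0 : 0 < t := by linarith
  have h1 := pow_one_add_le r ht0.le (by linarith)
  have h2 : (1 + t) ^ r ≤ 2 ^ r := pow_le_pow_left₀ (by linarith) (by linarith) r
  have h3 : π * (1 + t) ^ r ≤ π * (1 + r * t + 4 ^ r * t ^ 2) :=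
    mul_le_mul_of_nonneg_left h1 hπ0
  have h4 : ε1 * (1 + t) ^ r ≤ ε1 * 2 ^ r := mul_le_mul_of_nonneg_left h2 hε1
  have h5 : π * (4 ^ r * t ^ 2) ≤ 4 ^ r * t ^ 2 := mul_le_of_le_one_left (by positivity) hπ1
  have h6 : (4 : ℝ) ^ r * t ^ 2 ≤ t * η / 8 := by
    have : (4 : ℝ) ^ r * t ≤ 4 ^ r * γ := mul_le_mul_of_nonneg_left ht2 (by positivity)
    rw [hMγ] at this
    nlinarith
  have h7 : ε * r ≤ γ * η / 16 := by
    rw [le_div_iff₀ (by positivity)] at hε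
    linarith
  have h8 : γ * η / 16 ≤ η / 16 := by nlinarith
  have h9 : t * r * (15 / 16 * η) ≤ t * r * (η - ε * r) :=
    mul_le_mul_of_nonneg_left (by linarith) (by positivity)
  have h10 : t * η ≤ t * r * η := by
    have := mul_le_mul_of_nonneg_right hR (by positivity : (0 : ℝ) ≤ t * η)
    linarith
  have h11 : γ / 2 * η ≤ t * η := mul_le_mul_of_nonneg_right ht1 hη.le
  have h12 : 0 < γ * η := by positivity
  nlinarith

/-- normalised size -/
noncomputable def yN (r n : ℕ) : ℝ := (n : ℝ) ^ r / (r.factorial : ℝ)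

theorem yN_pos (r : ℕ) {n : ℕ} (hn : 1 ≤ n) : 0 < yN r n := by
  unfold yN
  have : (0 : ℝ) < n := by exact_mod_cast hn
  positivity

theorem choose_pred (hr : 1 ≤ r) {n : ℕ} (hn : 1 ≤ n) :
    ((n - 1).choose (r - 1) : ℝ) = r * (n.choose r : ℝ) / n := by
  obtain ⟨s, rfl⟩ : ∃ s, r = s + 1 := ⟨r - 1, by omega⟩
  obtain ⟨k, rfl⟩ : ∃ k, n = k + 1 := ⟨n - 1, by omega⟩
  have := Nat.add_one_mul_choose_eq k s
  have h' : ((k : ℝ) + 1) * (k.choose s : ℝ) = ((k + 1).choose (s + 1) : ℝ) * (s + 1) := by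
    exact_mod_cast this
  rw [eq_div_iff (by positivity)]
  simp only [Nat.add_sub_cancel]
  push_cast
  linarith

theorem choose_pred_le (hr : 1 ≤ r) {n : ℕ} (hn : 1 ≤ n) :
    ((n - 1).choose (r - 1) : ℝ) ≤ r * yN r n / n := by
  rw [choose_pred hr hn]
  have : (n.choose r : ℝ) ≤ yN r n := Nat.choose_le_pow_div r n
  gcongr

theorem codeg_real (H : HGraph r) {n : ℕ} (hn : 1 ≤ n) (hH : H.verts.card = n) {u v : ℕ}
    (huv : u ≠ v) : (codeg H u v : ℝ) ≤ r * (r * yN r n / n) / n := by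
  have hy := (yN_pos r hn).le
  rcases Nat.lt_or_ge r 2 with h | h
  · rw [codeg_eq_zero (by omega) H huv]
    push_cast
    positivity
  · obtain ⟨s, rfl⟩ : ∃ s, r = s + 2 := ⟨r - 2, by omega⟩
    have h1 := codeg_le H huv
    rw [hH, Nat.add_sub_cancel] at h1
    have h2 : (codeg H u v : ℝ) ≤ (n.choose s : ℝ) := by exact_mod_cast h1
    have h3 : (n.choose s : ℝ) ≤ (n : ℝ) ^ s / (s.factorial : ℝ) := Nat.choose_le_pow_div s n
    refine h2.trans (h3.trans ?_)
    have hn' : (0 : ℝ) < n := by exact_mod_cast hn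
    have hf : (0 : ℝ) < (s.factorial : ℝ) := by exact_mod_cast Nat.factorial_pos s
    have e : ((s + 2 : ℕ) : ℝ) * (((s + 2 : ℕ) : ℝ) * yN (s + 2) n / n) / n
        = (n : ℝ) ^ s / (s.factorial : ℝ) * ((s + 2) / (s + 1)) := by
      unfold yN
      rw [Nat.factorial_succ, Nat.factorial_succ]
      push_cast
      field_simp
      ring
    rw [e]
    refine le_mul_of_one_le_right (by positivity) ?_
    rw [one_le_div (by positivity)]
    linarith

theorem bounded_core {P : Pattern r} {F : HGraph r} (hTP : IsTuranPair r F P) (hr : 1 ≤ r)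
    {π c1 ε1 ε γ η ζ : ℝ} (hπ0 : 0 ≤ π) (hπ1 : π ≤ 1) (hε1 : 0 ≤ ε1)
    (hζ : 0 < ζ) {N0 N1 n : ℕ}
    (hds : ∀ H : HGraph r, N0 ≤ H.verts.card → ¬ F.IsCopyIn H →
      (π - ζ) * (((H.verts.card - 1).choose (r-1) : ℕ) : ℝ) ≤ (H.minDeg : ℝ) →
      P.IsSubconstruction H)
    (hex : ∀ N, N1 ≤ N → (exN r N F : ℝ) ≤ (π + ε1) * yN r N)
    (hη : 0 < η) (hη1 : η ≤ 1) (hγ : γ = η / (8 * 4 ^ r))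
    (hε0 : 0 < ε) (hεa : ε ≤ ζ / (4 * r)) (hεb : ε ≤ γ * η / (16 * r)) (hεc : ε ≤ 1 / 2)
    (hca : c1 + ε1 ≤ ε * ζ / 16) (hcb : c1 ≤ γ * η / 64) (hcc : 2 ^ r * ε1 ≤ γ * η / 64)
    (hn1 : 1 ≤ n) (hnN0 : 2 * N0 ≤ n) (hnN1 : 2 * N1 ≤ n) (hnε : 2 ≤ ε * n) (hnγ : 2 ≤ γ * n)
    (H : HGraph r) (hH : H.verts.card = n) (hfree : ¬ F.IsCopyIn H)
    (he : (π - c1) * yN r n ≤ H.edges.card) {v : ℕ} (hv : v ∈ H.verts)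
    (hdv : (π + η) * (r * yN r n / n) ≤ H.deg v) : False := by
  have hR : (1 : ℝ) ≤ r := by exact_mod_cast hr
  have hn0 : (0 : ℝ) < n := by exact_mod_cast hn1
  have hy := yN_pos r hn1
  set y := yN r n with hydef
  set D := (r : ℝ) * y / n with hD
  have hDpos : 0 < D := by positivity
  have hnD : (n : ℝ) * D = r * y := by rw [hD]; field_simp
  let Z := H.verts.filter fun u => (H.deg u : ℝ) < (π - ζ / 2) * D
  have hZsub : Z ⊆ H.verts := Finset.filter_subset _ _
  set k := ⌊ε * n⌋₊ with hk
  have hkle : (k : ℝ) ≤ ε * n := Nat.floor_le (by positivity)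
  have hkge : ε * n / 2 ≤ k := by
    have := Nat.lt_floor_add_one (ε * n)
    rw [← hk] at this
    linarith
  have hk2 : 2 * k ≤ n := by
    have : (2 : ℝ) * k ≤ n := by nlinarith
    exact_mod_cast this
  -- few vertices of small degree
  have hZ : Z.card ≤ k := by
    by_contra hlt
    obtain ⟨S, hS, hSc⟩ := Finset.exists_subset_card_eq (by omega : k ≤ Z.card)
    have h1 := del_edges H S
    have h2 := le_exN (del_free hfree S)
    have h3 : (del H S).verts.card = n - k := by
      change (H.verts \ S).card = n - k
      rw [Finset.card_sdiff_of_subset (hS.trans hZsub), hH, hSc]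
    rw [h3] at h2
    have h4 := hex (n - k) (by omega)
    have h5 : ((∑ u ∈ S, H.deg u : ℕ) : ℝ) ≤ k * ((π - ζ / 2) * D) := by
      push_cast
      rw [← hSc, ← nsmul_eq_mul]
      refine Finset.sum_le_card_nsmul _ _ _ ?_
      intro u hu
      exact (Finset.mem_filter.mp (hS hu)).2.le
    have h1' : (H.edges.card : ℝ) ≤ (del H S).edges.card + ((∑ u ∈ S, H.deg u : ℕ) : ℝ) := by
      exact_mod_cast h1
    have h2' : ((del H S).edges.card : ℝ) ≤ exN r (n - k) F := by exact_mod_cast h2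
    have h6 : yN r (n - k) = (1 - (k : ℝ) / n) ^ r * y := by
      rw [hydef]
      unfold yN
      rw [Nat.cast_sub (by omega), ← mul_div_assoc, ← mul_pow]
      congr 2
      field_simp
    have h7 : k * ((π - ζ / 2) * D) = (k : ℝ) / n * r * (π - ζ / 2) * y := by
      rw [hD]; field_simp
    refine real_A (s := (k : ℝ) / n) hr hπ0 hπ1 hε1 hζ hεa (by linarith) ?_ ?_ hε0 hca ?_
    · rw [le_div_iff₀ hn0]; linarith
    · rw [div_le_iff₀ hn0]; exact hkle
    · refine le_of_mul_le_mul_right ?_ hy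
      rw [h6] at h4
      rw [h7] at h5
      calc (π - c1) * y ≤ _ := he
        _ ≤ (π + ε1) * ((1 - (k : ℝ) / n) ^ r * y) + (k : ℝ) / n * r * (π - ζ / 2) * y := by
            linarith
        _ = _ := by ring
  have hZr : (Z.card : ℝ) ≤ ε * n := le_trans (by exact_mod_cast hZ) hkle
  have hcardZ : (del H Z).verts.card = n - Z.card := by
    change (H.verts \ Z).card = _
    rw [Finset.card_sdiff_of_subset hZsub, hH]
  -- degrees after deletion
  have hdeg : ∀ u, u ∉ Z → (H.deg u : ℝ) ≤ (del H Z).deg u + ε * r * D := by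
    intro u hu
    have h1 := del_deg H Z u
    have h1' : (H.deg u : ℝ) ≤ (del H Z).deg u + ((∑ w ∈ Z, codeg H w u : ℕ) : ℝ) := by
      exact_mod_cast h1
    have h2 : ((∑ w ∈ Z, codeg H w u : ℕ) : ℝ) ≤ Z.card * (r * D / n) := by
      push_cast
      rw [← nsmul_eq_mul]
      refine Finset.sum_le_card_nsmul _ _ _ ?_
      intro w hw
      exact codeg_real H hn1 hH (fun h => hu (h ▸ hw))
    have h3 : (Z.card : ℝ) * (r * D / n) ≤ ε * n * (r * D / n) :=
      mul_le_mul_of_nonneg_right hZr (by positivity)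
    have h4 : ε * n * (r * D / n) = ε * r * D := by field_simp
    linarith
  have hvZ : v ∉ Z := by
    intro h
    have := (Finset.mem_filter.mp h).2
    have h2 : (π - ζ / 2) * D ≤ (π + η) * D := mul_le_mul_of_nonneg_right (by linarith) hDpos.le
    linarith
  have hv' : v ∈ (del H Z).verts := Finset.mem_sdiff.mpr ⟨hv, hvZ⟩
  have hεr : ε * r ≤ ζ / 4 := by
    rw [le_div_iff₀ (by positivity)] at hεa
    linarith
  have hpart : HasPart P (del H Z) := by
    refine HasPart.of_sub (hds _ (by omega) (del_free hfree Z) ?_)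
    rcases le_or_gt (π - ζ) 0 with hneg | hpos
    · exact (mul_nonpos_of_nonpos_of_nonneg hneg (by positivity)).trans (by positivity)
    · have hne : (del H Z).verts.Nonempty := ⟨v, hv'⟩
      unfold HGraph.minDeg
      rw [dif_pos hne]
      obtain ⟨u, hu, hu'⟩ := Finset.exists_mem_eq_inf' hne (del H Z).deg
      rw [hu']
      have hu2 := Finset.mem_sdiff.mp hu
      have hu3 : (π - ζ / 2) * D ≤ H.deg u := by
        by_contra hc
        exact hu2.2 (Finset.mem_filter.mpr ⟨hu2.1, not_le.mp hc⟩)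
      have hu4 := hdeg u hu2.2
      have h5 : ((((del H Z).verts.card - 1).choose (r-1) : ℕ) : ℝ) ≤ D := by
        refine le_trans ?_ (choose_pred_le hr hn1)
        exact_mod_cast Nat.choose_le_choose (r - 1)
          (by omega : (del H Z).verts.card - 1 ≤ n - 1)
      have h6 := mul_le_mul_of_nonneg_left h5 hpos.le
      have h7 : ε * r * D ≤ ζ / 4 * D := mul_le_mul_of_nonneg_right hεr hDpos.le
      have h8 : 0 < ζ * D := by positivity
      nlinarith
  -- clones
  set K := ⌊γ * n⌋₊ with hK
  have hγ0 : 0 < γ := by rw [hγ]; positivity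
  have hKle : (K : ℝ) ≤ γ * n := Nat.floor_le (by positivity)
  have hKge : γ * n / 2 ≤ K := by
    have := Nat.lt_floor_add_one (γ * n)
    rw [← hK] at this
    linarith
  obtain ⟨G, g1, -, g3, g4, -⟩ := clone_many hpart hv' K
  have h2 := le_exN (g1.free hTP)
  rw [g3, hcardZ] at h2
  have h3 := hex (n - Z.card + K) (by omega)
  have h4 : yN r (n - Z.card + K) ≤ (1 + (K : ℝ) / n) ^ r * y := by
    have e : (1 + (K : ℝ) / n) ^ r * y = yN r (n + K) := by
      rw [hydef]
      unfold yN
      rw [← mul_div_assoc, ← mul_pow]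
      congr 2
      push_cast
      field_simp
    rw [e]
    unfold yN
    gcongr
    omega
  have h5 : (H.edges.card : ℝ) ≤ (del H Z).edges.card + ε * r * y := by
    have h1' : (H.edges.card : ℝ) ≤ (del H Z).edges.card + ((∑ u ∈ Z, H.deg u : ℕ) : ℝ) := by
      exact_mod_cast del_edges H Z
    have h6 : ((∑ u ∈ Z, H.deg u : ℕ) : ℝ) ≤ Z.card * D := by
      push_cast
      rw [← nsmul_eq_mul]
      refine Finset.sum_le_card_nsmul _ _ _ ?_
      intro u hu
      have := deg_le H (hZsub hu)
      rw [hH] at this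
      refine le_trans ?_ (choose_pred_le hr hn1)
      exact_mod_cast this
    have h7 : (Z.card : ℝ) * D ≤ ε * n * D := mul_le_mul_of_nonneg_right hZr hDpos.le
    have h8 : ε * n * D = ε * r * y := by rw [mul_assoc, hnD]; ring
    linarith
  have h6 := hdeg v hvZ
  have h7 : ((del H Z).edges.card : ℝ) + K * (del H Z).deg v ≤ exN r (n - Z.card + K) F := by
    exact_mod_cast g4.trans h2
  have h8 : (π + ε1) * yN r (n - Z.card + K) ≤ (π + ε1) * ((1 + (K : ℝ) / n) ^ r * y) :=
    mul_le_mul_of_nonneg_left h4 (by linarith)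
  have h9 : (K : ℝ) * ((π + η - ε * r) * D) ≤ K * (del H Z).deg v :=
    mul_le_mul_of_nonneg_left (by linarith) (by positivity)
  have h10 : (K : ℝ) * ((π + η - ε * r) * D) = (K : ℝ) / n * r * (π + η - ε * r) * y := by
    rw [hD]; field_simp
  refine real_B (t := (K : ℝ) / n) hr hπ0 hπ1 hε1 hη hη1 hγ hεb ?_ ?_ hcb hcc ?_
  · rw [le_div_iff₀ hn0]; linarith
  · rw [div_le_iff₀ hn0]; exact hKle
  · refine le_of_mul_le_mul_right ?_ hy
    calc _ = (π - c1) * y - ε * r * y + (K : ℝ) / n * r * (π + η - ε * r) * y := by ring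
      _ ≤ (π + ε1) * ((1 + (K : ℝ) / n) ^ r * y) := by linarith
      _ = _ := by ring

set_option maxHeartbeats 1000000 in
theorem bounded_all {P : Pattern r} {F : HGraph r} (hTP : IsTuranPair r F P) (hr : 1 ≤ r)
    (hne : P.idx.Nonempty) {π : ℝ} (hπ : HasTuranDensity r F π) (hds : DegreeStable r F P π)
    {m : ℕ} (hFm : F.verts.card = m) :
    ∃ c : ℝ, 0 < c ∧ ∀ᶠ n : ℕ in atTop,
        BoundedAt r n F (c * (((n-1).choose (r-1) : ℕ) : ℝ))
          ((1 - π) / (8 * m) * (((n-1).choose (r-1) : ℕ) : ℝ)) := by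
  have hπ1 : π < 1 := density_lt_one hTP hne hπ
  have hπ0 : 0 ≤ π := ge_of_tendsto' hπ (fun n => by positivity)
  have hm : (1 : ℝ) ≤ m := by
    have := verts_pos hTP hr
    rw [hFm] at this
    exact_mod_cast this
  have hR : (1 : ℝ) ≤ r := by exact_mod_cast hr
  obtain ⟨ζ, hζ, N0, hds⟩ := hds
  set η0 := (1 - π) / (8 * m) with hη0
  have hη0pos : 0 < η0 := div_pos (by linarith) (by linarith)
  have hη01 : η0 ≤ 1 := by
    rw [hη0, div_le_one (by linarith)]; linarith
  obtain ⟨η, hηdef⟩ : ∃ η, η = η0 / 2 := ⟨_, rfl⟩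
  have hη : 0 < η := by linarith
  have hη1 : η ≤ 1 := by linarith
  obtain ⟨γ, hγ⟩ : ∃ γ : ℝ, γ = η / (8 * 4 ^ r) := ⟨_, rfl⟩
  have hγ0 : 0 < γ := by rw [hγ]; positivity
  have hγ1 : γ ≤ 1 := by
    have hM : (1 : ℝ) ≤ 4 ^ r := one_le_pow₀ (by norm_num)
    rw [hγ, div_le_one (by positivity)]; linarith
  obtain ⟨ε, hε0, hεa, hεb, hεc⟩ : ∃ ε : ℝ, 0 < ε ∧ ε ≤ ζ / (4 * r) ∧
      ε ≤ γ * η / (16 * r) ∧ ε ≤ 1 / 2 := by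
    refine ⟨min (min (ζ / (4 * r)) (γ * η / (16 * r))) (1 / 2), by positivity, ?_, ?_, ?_⟩
    · exact (min_le_left _ _).trans (min_le_left _ _)
    · exact (min_le_left _ _).trans (min_le_right _ _)
    · exact min_le_right _ _
  obtain ⟨ω, hω0, hωa, hωb⟩ : ∃ ω : ℝ, 0 < ω ∧ ω ≤ ε * ζ / 16 ∧ ω ≤ γ * η / 64 :=
    ⟨min (ε * ζ / 16) (γ * η / 64), by positivity, min_le_left _ _, min_le_right _ _⟩
  obtain ⟨ε1, hε1def⟩ : ∃ ε1 : ℝ, ε1 = ω / (8 * 2 ^ r) := ⟨_, rfl⟩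
  have hε1 : 0 < ε1 := by rw [hε1def]; positivity
  have h2r : 2 ^ r * ε1 = ω / 8 := by rw [hε1def]; field_simp
  have hε1ω : ε1 ≤ ω / 8 := by
    have h : (1 : ℝ) ≤ 2 ^ r := one_le_pow₀ (by norm_num)
    nlinarith
  have hωη : ω ≤ η / 64 := by
    have : γ * η ≤ η := mul_le_of_le_one_left hη.le hγ1
    linarith
  refine ⟨ω / 2, by positivity, ?_⟩
  have ev1 : ∀ᶠ n : ℕ in atTop, (exN r n F : ℝ) / (n.choose r : ℝ) < π + ε1 :=
    hπ.eventually_lt_const (by linarith)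
  have ev2 : ∀ᶠ n : ℕ in atTop, π - ε1 < (exN r n F : ℝ) / (n.choose r : ℝ) :=
    hπ.eventually_const_lt (by linarith)
  have ev3 : ∀ᶠ n : ℕ in atTop, (1 - ε1) * yN r n ≤ (n.choose r : ℝ) := by
    have h := (isEquivalent_choose r).isLittleO.def hε1
    filter_upwards [h, eventually_ge_atTop 1] with n hn hn1
    have hy := yN_pos r hn1
    have : |(n.choose r : ℝ) - yN r n| ≤ ε1 * |yN r n| := hn
    rw [abs_of_pos hy] at this
    have := (abs_le.mp this).1
    linarith
  obtain ⟨N1, hN1⟩ := eventually_atTop.mp (ev1.and (eventually_ge_atTop r))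
  have hex : ∀ N, N1 ≤ N → (exN r N F : ℝ) ≤ (π + ε1) * yN r N := by
    intro N hN
    obtain ⟨h1, h2⟩ := hN1 N hN
    have hpos : (0 : ℝ) < (N.choose r : ℝ) := by exact_mod_cast Nat.choose_pos h2
    rw [div_lt_iff₀ hpos] at h1
    have h3 : (N.choose r : ℝ) ≤ yN r N := Nat.choose_le_pow_div r N
    exact h1.le.trans (mul_le_mul_of_nonneg_left h3 (by linarith))
  have ev4 : ∀ᶠ n : ℕ in atTop, 2 ≤ ε * (n : ℝ) :=
    (tendsto_natCast_atTop_atTop.const_mul_atTop hε0).eventually_ge_atTop 2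
  have ev5 : ∀ᶠ n : ℕ in atTop, 2 ≤ γ * (n : ℝ) :=
    (tendsto_natCast_atTop_atTop.const_mul_atTop hγ0).eventually_ge_atTop 2
  filter_upwards [ev2, ev3, ev4, ev5, eventually_ge_atTop (2 * N0), eventually_ge_atTop (2 * N1),
    eventually_ge_atTop 1, eventually_ge_atTop r] with n h2 h3 h4 h5 hnN0 hnN1 hn1 hnr
  intro H hH hfree havg
  by_contra hcon
  rw [not_le] at hcon
  have hvne : H.verts.Nonempty := Finset.card_pos.mp (by omega)
  obtain ⟨v, hv, hvmax⟩ := Finset.exists_mem_eq_sup H.verts hvne H.deg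
  have hn0 : (0 : ℝ) < n := by exact_mod_cast hn1
  have hy := yN_pos r hn1
  have hCpos : (0 : ℝ) < (n.choose r : ℝ) := by exact_mod_cast Nat.choose_pos hnr
  have hCy : (n.choose r : ℝ) ≤ yN r n := Nat.choose_le_pow_div r n
  rw [lt_div_iff₀ hCpos] at h2
  unfold HGraph.maxDeg at hcon
  rw [hvmax] at hcon
  rw [choose_pred hr hn1] at hcon havg
  unfold dN at hcon havg
  unfold HGraph.avgDeg at havg
  rw [hH] at havg
  set C := (n.choose r : ℝ) with hC
  set y := yN r n with hydef
  set X := (exN r n F : ℝ) with hX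
  have hdv : (π + η) * (r * y / n) ≤ H.deg v := by
    have a1 : (π + η) * y ≤ (π - ε1 + η0) * C := by
      have : (π - ε1 + η0) * ((1 - ε1) * y) ≤ (π - ε1 + η0) * C :=
        mul_le_mul_of_nonneg_left h3 (by linarith)
      have a2 : (π + η) ≤ (π - ε1 + η0) * (1 - ε1) := by
        have a0 : (π - ε1 + η0) * ε1 ≤ 2 * ε1 :=
          mul_le_mul_of_nonneg_right (by linarith) hε1.le
        rw [mul_sub, mul_one]
        linarith
      have := mul_le_mul_of_nonneg_right a2 hy.le
      linarith
    have a3 : (π + η) * y ≤ X + η0 * C := by linarith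
    have a4 : (π + η) * (r * y / n) = r / n * ((π + η) * y) := by ring
    have a5 : (r : ℝ) / n * (X + η0 * C) = r * X / n + η0 * (r * C / n) := by ring
    have a6 : (r : ℝ) / n * ((π + η) * y) ≤ r / n * (X + η0 * C) :=
      mul_le_mul_of_nonneg_left a3 (by positivity)
    linarith
  have he : (π - (ω / 2 + 2 * ε1)) * y ≤ H.edges.card := by
    have a1 : X - ω / 2 * C ≤ H.edges.card := by
      have hq : (0 : ℝ) < r / n := by positivity
      refine le_of_mul_le_mul_left ?_ hq
      calc (r : ℝ) / n * (X - ω / 2 * C) = r * X / n - ω / 2 * (r * C / n) := by ring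
        _ ≤ _ := havg
        _ = _ := by ring
    have a2 : (π - ε1 - ω / 2) * C ≤ H.edges.card := by linarith
    refine le_trans ?_ a2
    rcases le_or_gt (π - ε1 - ω / 2) 0 with h | h
    · have := mul_le_mul_of_nonpos_left hCy h
      have b0 : (π - (ω / 2 + 2 * ε1)) * y = (π - ε1 - ω / 2) * y - ε1 * y := by ring
      have b1 : 0 < ε1 * y := mul_pos hε1 hy
      linarith
    · have b1 := mul_le_mul_of_nonneg_left h3 h.le
      have b2 : (π - (ω / 2 + 2 * ε1)) ≤ (π - ε1 - ω / 2) * (1 - ε1) := by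
        have b0 : (π - ε1 - ω / 2) * ε1 ≤ 1 * ε1 :=
          mul_le_mul_of_nonneg_right (by linarith) hε1.le
        rw [mul_sub, mul_one]
        linarith
      have := mul_le_mul_of_nonneg_right b2 hy.le
      linarith
  exact bounded_core hTP hr hπ0 hπ1.le hε1.le hζ hds hex hη hη1 hγ hε0 hεa hεb hεc
    (by linarith) (by linarith) (by linarith) hn1 hnN0 hnN1 h4 h5 H hH hfree he hv hdv

end Helpers

/-- degree-stability implies smoothness and boundedness. -/
theorem statement_4 (r m : ℕ) (F : HGraph r) (hFm : F.verts.card = m)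
    (P : Pattern r) (hmin : P.Minimal) (hTP : IsTuranPair r F P)
    (π : ℝ) (hπ : HasTuranDensity r F π)
    (hds : DegreeStable r F P π) :
    ∃ c : ℝ, 0 < c ∧
      (∀ n : ℕ, |deltaN r n F - dN r (n-1) F| ≤ 4 * ((n-1).choose (r-2) : ℝ)) ∧
      ∀ᶠ n : ℕ in atTop,
        BoundedAt r n F (c * (((n-1).choose (r-1) : ℕ) : ℝ))
          ((1 - π) / (8 * m) * (((n-1).choose (r-1) : ℕ) : ℝ)) := by
  rcases Nat.eq_zero_or_pos r with rfl | hr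
  · refine ⟨1, one_pos, smooth_all hTP, Eventually.of_forall ?_⟩
    intro n H _ _ _
    have hπ1 : π ≤ 1 := by
      refine le_of_tendsto' hπ (fun k => ?_)
      have := exN_le_choose k F
      rw [Nat.choose_zero_right] at this ⊢
      rw [Nat.cast_one, div_one]
      exact_mod_cast this
    have h0 : H.maxDeg = 0 := by
      unfold HGraph.maxDeg
      refine Nat.le_zero.mp (Finset.sup_le ?_)
      intro v _
      refine Nat.le_zero.mpr ?_
      unfold HGraph.deg
      rw [Finset.card_eq_zero, Finset.filter_eq_empty_iff]
      intro e he hve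
      have := Finset.card_eq_zero.mp (H.edges_card e he)
      rw [this] at hve
      simp at hve
    have h1 : 0 ≤ 1 - π := by linarith
    rw [h0]
    unfold dN
    push_cast
    positivity
  rcases Finset.eq_empty_or_nonempty P.idx with hemp | hne
  · refine ⟨1, one_pos, smooth_all hTP, ?_⟩
    filter_upwards [eventually_ge_atTop 1] with n hn
    intro H hH hfree
    exact absurd (all_copy_of_idx_empty hTP hemp hn H hH) hfree
  · obtain ⟨c, hc, h⟩ := bounded_all hTP hr hne hπ hds hFm
    exact ⟨c, hc, smooth_all hTP, h⟩

end DensityCH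
end

section
/- Suppose that F is an edge-critical graph with chromatic number χ(F) ≥ 3. Then there exist constants N_0 and c_F > 0 such that for all integers n ≥ N_0 and all integers t with 0 ≤ t ≤ c_F·n, one has EX(n,(t+1)F) = { K_t ⋈ T(n−t, χ(F)−1) }; that is, the unique n-vertex graph with no t+1 pairwise vertex-disjoint copies of F and the maximum number of edges is the join of a complete graph on t vertices with the balanced complete (χ(F)−1)-partite graph on n−t vertices. -/
open Filter

namespace DensityCH

section Basics

/-! ## Part 1: basic counting notions and the Erdős–Stone theorem on finite vertex sets -/

/-- Degree of `v` into `S`. -/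
def dg (G : SimpleGraph ℕ) [DecidableRel G.Adj] (S : Finset ℕ) (v : ℕ) : ℕ :=
  (S.filter (G.Adj v)).card

/-- Twice the number of edges inside `S`. -/
def E2 (G : SimpleGraph ℕ) [DecidableRel G.Adj] (S : Finset ℕ) : ℕ := ∑ v ∈ S, dg G S v

/-- `G[S]` contains a copy of `F`. -/
def Cp {W : Type} (F : SimpleGraph W) (G : SimpleGraph ℕ) (S : Finset ℕ) : Prop :=
  ∃ f : W → ℕ, Function.Injective f ∧ (∀ x, f x ∈ S) ∧ ∀ x y, F.Adj x y → G.Adj (f x) (f y)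

variable {G : SimpleGraph ℕ} [DecidableRel G.Adj]

lemma Cp.mono {G : SimpleGraph ℕ} {W : Type} {F : SimpleGraph W} {S S' : Finset ℕ} (h : Cp F G S) (hS : S ⊆ S') :
    Cp F G S' := by
  obtain ⟨f, h1, h2, h3⟩ := h
  exact ⟨f, h1, fun x => hS (h2 x), h3⟩

lemma dg_le (S : Finset ℕ) (v : ℕ) : dg G S v ≤ S.card := Finset.card_filter_le _ _

lemma dg_eq_sum (S : Finset ℕ) (v : ℕ) : dg G S v = ∑ w ∈ S, if G.Adj v w then 1 else 0 := by
  rw [dg, Finset.card_filter]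

lemma E2_eq (S : Finset ℕ) : E2 G S = ∑ v ∈ S, ∑ w ∈ S, if G.Adj v w then 1 else 0 := by
  simp [E2, dg_eq_sum]

lemma sum_comm_dg (A B : Finset ℕ) : ∑ v ∈ A, dg G B v = ∑ v ∈ B, dg G A v := by
  simp only [dg_eq_sum]
  rw [Finset.sum_comm]
  simp [G.adj_comm]

lemma dg_union {A B : Finset ℕ} (h : Disjoint A B) (v : ℕ) :
    dg G (A ∪ B) v = dg G A v + dg G B v := by
  simp only [dg_eq_sum]
  exact Finset.sum_union h

lemma E2_union {A B : Finset ℕ} (h : Disjoint A B) :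
    E2 G (A ∪ B) = E2 G A + E2 G B + 2 * ∑ v ∈ A, dg G B v := by
  unfold E2
  rw [Finset.sum_union h]
  simp only [dg_union h, Finset.sum_add_distrib]
  rw [sum_comm_dg B A]
  ring

lemma E2_sdiff {S U : Finset ℕ} (h : U ⊆ S) :
    E2 G S ≤ E2 G (S \ U) + 2 * ∑ u ∈ U, dg G S u := by
  have hd : Disjoint (S \ U) U := Finset.sdiff_disjoint
  have h1 : S = (S \ U) ∪ U := (Finset.sdiff_union_of_subset h).symm
  have h2 := E2_union (G := G) hd
  rw [← h1, sum_comm_dg] at h2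
  have h3 : ∀ u, dg G S u = dg G (S \ U) u + dg G U u := by
    intro u
    conv_lhs => rw [h1]
    exact dg_union hd u
  have h4 : ∑ u ∈ U, dg G S u = ∑ u ∈ U, dg G (S \ U) u + E2 G U := by
    simp only [h3, Finset.sum_add_distrib, E2]
  omega

lemma dg_self (v : ℕ) : dg G {v} v = 0 := by
  simp [dg_eq_sum]

lemma E2_erase {S : Finset ℕ} {v : ℕ} (h : v ∈ S) :
    E2 G S = E2 G (S.erase v) + 2 * dg G S v := by
  have hd : Disjoint {v} (S.erase v) := by simp
  have h1 : S = {v} ∪ (S.erase v) := by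
    rw [← Finset.insert_eq, Finset.insert_erase h]
  have h2 := E2_union (G := G) hd
  have h3 := dg_union (G := G) hd v
  rw [← h1] at h2 h3
  simp [E2, dg_self] at h2 h3 ⊢
  omega

lemma dg_erase_self {S : Finset ℕ} {v : ℕ} (h : v ∈ S) : dg G (S.erase v) v = dg G S v := by
  have hd : Disjoint {v} (S.erase v) := by simp
  have h1 : S = {v} ∪ (S.erase v) := by
    rw [← Finset.insert_eq, Finset.insert_erase h]
  have h3 := dg_union (G := G) hd v
  rw [← h1] at h3
  simp [dg_self] at h3
  omega

lemma dg_lt {S : Finset ℕ} {v : ℕ} (h : v ∈ S) : dg G S v < S.card := by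
  rw [← dg_erase_self h]
  have := dg_le (G := G) (S.erase v) v
  rw [Finset.card_erase_of_mem h] at this
  have := Finset.card_pos.mpr ⟨v, h⟩
  omega

lemma E2_le (S : Finset ℕ) : E2 G S ≤ S.card * S.card := by
  unfold E2
  calc _ ≤ ∑ v ∈ S, S.card := Finset.sum_le_sum fun v _ => dg_le S v
    _ = _ := by simp

lemma dg_mono {S S' : Finset ℕ} (h : S ⊆ S') (v : ℕ) : dg G S v ≤ dg G S' v :=
  Finset.card_le_card (Finset.filter_subset_filter _ h)

lemma dg_sdiff {S U : Finset ℕ} (v : ℕ) : dg G S v ≤ dg G (S \ U) v + U.card := by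
  have : dg G S v ≤ dg G ((S \ U) ∪ U) v := dg_mono (by simp) v
  rw [dg_union Finset.sdiff_disjoint] at this
  have := dg_le (G := G) U v
  omega

/-- The graph induced on `S`, transported to `Fin S.card`. -/
noncomputable def toFin (G : SimpleGraph ℕ) (S : Finset ℕ) : SimpleGraph (Fin S.card) :=
  G.comap fun i => (S.equivFin.symm i : ℕ)

noncomputable instance (S : Finset ℕ) : DecidableRel (toFin G S).Adj := by
  unfold toFin; infer_instance

lemma toFin_degree (S : Finset ℕ) (i : Fin S.card) :
    (toFin G S).degree i = dg G S (S.equivFin.symm i) := by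
  rw [← SimpleGraph.card_neighborFinset_eq_degree, dg]
  refine Finset.card_bij (fun j _ => (S.equivFin.symm j : ℕ)) ?_ ?_ ?_
  · intro j hj
    rw [SimpleGraph.mem_neighborFinset] at hj
    simpa [toFin] using hj
  · intro j _ k _ h
    simpa using h
  · intro b hb
    rw [Finset.mem_filter] at hb
    exact ⟨S.equivFin ⟨b, hb.1⟩, by
      rw [SimpleGraph.mem_neighborFinset]
      simpa [toFin] using hb.2, by simp⟩

lemma toFin_edges (S : Finset ℕ) : 2 * (toFin G S).edgeFinset.card = E2 G S := by
  rw [← SimpleGraph.sum_degrees_eq_twice_card_edges]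
  simp only [toFin_degree]
  rw [E2, ← Finset.sum_coe_sort S]
  exact Equiv.sum_comp S.equivFin.symm (fun i => dg G S (i : ℕ))

lemma Cp_toFin {G : SimpleGraph ℕ} {W : Type} {F : SimpleGraph W} {S : Finset ℕ} :
    Cp F G S ↔ F.IsContained (toFin G S) := by
  constructor
  · rintro ⟨f, h1, h2, h3⟩
    refine ⟨⟨⟨fun x => S.equivFin ⟨f x, h2 x⟩, ?_⟩, ?_⟩⟩
    · intro a b h
      simpa [toFin] using h3 a b h
    · intro a b h
      simpa [h1.eq_iff] using h
  · rintro ⟨f⟩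
    refine ⟨fun x => S.equivFin.symm (f x), ?_, ?_, ?_⟩
    · intro a b h
      have : f a = f b := by simpa using h
      exact f.injective this
    · intro x; simp
    · intro x y h
      exact f.toHom.map_adj h

/-- Minimum degree Erdős–Stone. -/
lemma ES_min {ε : ℝ} (hε : 0 < ε) (r t : ℕ) : ∃ N : ℕ, ∀ (G : SimpleGraph ℕ) [DecidableRel G.Adj]
    (S : Finset ℕ), N ≤ S.card → (∀ v ∈ S, (1 - 1 / (r : ℝ) + ε) * S.card ≤ dg G S v) →
    Cp (SimpleGraph.completeEquipartiteGraph (r + 1) t) G S := by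
  obtain ⟨N, hN⟩ := Filter.eventually_atTop.mp
    (SimpleGraph.eventually_completeEquipartiteGraph_isContained_of_minDegree hε r t)
  refine ⟨N + 1, fun G _ S hS hd => ?_⟩
  rw [Cp_toFin]
  apply hN _ (by omega)
  have : Nonempty (Fin S.card) := ⟨⟨0, by omega⟩⟩
  obtain ⟨i, hi⟩ := (toFin G S).exists_minimal_degree_vertex
  rw [hi, toFin_degree]
  exact hd _ (by simp)

/-- Deleting low degree vertices. -/
lemma deletion (T : ℕ → ℝ) (S : Finset ℕ) : 2 * T S.card ≤ E2 G S →
    ∃ S' ⊆ S, 2 * T S'.card ≤ E2 G S' ∧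
      ∀ v ∈ S', T S'.card - T (S'.card - 1) ≤ dg G S' v := by
  induction S using Finset.strongInduction with
  | H S ih =>
    intro h
    by_cases hd : ∀ v ∈ S, T S.card - T (S.card - 1) ≤ dg G S v
    · exact ⟨S, subset_rfl, h, hd⟩
    · push Not at hd
      obtain ⟨v, hv, hlt⟩ := hd
      have h1 := E2_erase (G := G) hv
      have h1' : (E2 G S : ℝ) = E2 G (S.erase v) + 2 * dg G S v := by exact_mod_cast h1
      obtain ⟨S', hs, h2, h3⟩ := ih (S.erase v) (Finset.erase_ssubset hv) (by
        rw [Finset.card_erase_of_mem hv]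
        linarith)
      exact ⟨S', hs.trans (Finset.erase_subset _ _), h2, h3⟩

/-- Edge density Erdős–Stone. -/
lemma ES_dens {ε : ℝ} (hε : 0 < ε) (r t : ℕ) (hr : 1 ≤ r) :
    ∃ N : ℕ, ∀ (G : SimpleGraph ℕ) [DecidableRel G.Adj]
    (S : Finset ℕ), N ≤ S.card → (1 - 1 / (r : ℝ) + ε) * (S.card : ℝ) ^ 2 ≤ E2 G S →
    Cp (SimpleGraph.completeEquipartiteGraph (r + 1) t) G S := by
  obtain ⟨N, hN⟩ := ES_min (half_pos hε) r t
  have hr' : (1 : ℝ) ≤ r := by exact_mod_cast hr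
  have hr1 : 1 / (r : ℝ) ≤ 1 := by rw [div_le_one (by linarith)]; exact hr'
  set γ : ℝ := 1 - 1 / (r : ℝ) + ε / 2 with hγ
  have hγ0 : 0 < γ := by linarith
  obtain ⟨M, hM⟩ := exists_nat_gt ((2 * γ + 2 * (N : ℝ) ^ 2 + 2) / (ε / 2))
  refine ⟨M + 1, fun G _ S hS hE => ?_⟩
  have hn : (M : ℝ) + 1 ≤ S.card := by exact_mod_cast hS
  set n : ℝ := (S.card : ℝ)
  rw [div_lt_iff₀ (by positivity)] at hM
  obtain ⟨S', hs, h2, h3⟩ := deletion (G := G)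
    (fun k => γ * ((k : ℝ) * (k + 1) / 2) + (N : ℝ) ^ 2) S (by
      have hb : (2 * γ + 2 * (N : ℝ) ^ 2 + 2) ≤ n * (ε / 2) := by nlinarith
      have hM0 : (0 : ℝ) ≤ M := by positivity
      have : (1 - 1 / (r : ℝ) + ε) * n ^ 2 = γ * n ^ 2 + (ε / 2) * n ^ 2 := by rw [hγ]; ring
      have hn1 : 1 ≤ n := by linarith
      have h5 : (2 * γ + 2 * (N : ℝ) ^ 2 + 2) * n ≤ n * (ε / 2) * n := by gcongr
      have h6 : 2 * (N : ℝ) ^ 2 * 1 ≤ 2 * (N : ℝ) ^ 2 * n := by gcongr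
      have h7 : 0 ≤ γ * n := by positivity
      simp only [n] at *
      nlinarith)
  have hk : N ≤ S'.card := by
    by_contra hlt
    push Not at hlt
    have h4 := E2_le (G := G) S'
    have h5 : (E2 G S' : ℝ) ≤ S'.card * S'.card := by exact_mod_cast h4
    have h6 : (S'.card : ℝ) < N := by exact_mod_cast hlt
    have h7 : (0 : ℝ) ≤ S'.card := by positivity
    have h8 : 0 ≤ γ * ((S'.card : ℝ) * (S'.card + 1) / 2) := by positivity
    nlinarith
  refine (hN G S' hk fun v hv => ?_).mono hs
  have h4 := h3 v hv
  have hpos : 1 ≤ S'.card := Finset.card_pos.mpr ⟨v, hv⟩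
  rw [Nat.cast_sub hpos] at h4
  push_cast at h4
  linarith


end Basics

/-! ## Part 2: edge-critical graphs, bounded maximum degree, clique-freeness -/

/-- `F` is contained in a complete `ℓ`-partite graph plus one edge inside a part. -/
def IsCrit {W : Type} (F : SimpleGraph W) (ℓ : ℕ) : Prop :=
  ∃ (c : W → Fin ℓ) (a b : W), F.Adj a b ∧ c a = c b ∧
    ∀ x y, F.Adj x y → c x = c y → (x = a ∧ y = b) ∨ (x = b ∧ y = a)

lemma embed_vertex {W : Type} [Fintype W] {F : SimpleGraph W} {ℓ : ℕ} (hF : IsCrit F ℓ)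
    {G : SimpleGraph ℕ} [DecidableRel G.Adj] {S : Finset ℕ} {v : ℕ} (hv : v ∈ S)
    (h : Cp (SimpleGraph.completeEquipartiteGraph ℓ (Fintype.card W)) G (S.filter (G.Adj v))) :
    Cp F G S := by
  classical
  obtain ⟨c, a, b, hab, hc, hcr⟩ := hF
  obtain ⟨g, g1, g2, g3⟩ := h
  have g2' : ∀ x, g x ∈ S ∧ G.Adj v (g x) := by simpa using g2
  let e := Fintype.equivFin W
  refine ⟨fun x => if x = a then v else g (c x, e x), ?_, ?_, ?_⟩
  · intro x y h
    by_cases hx : x = a <;> by_cases hy : y = a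
    · rw [hx, hy]
    · simp only [hx, hy, if_true, if_false] at h
      exact absurd ((g2' (c y, e y)).2) (by rw [← h]; exact G.irrefl)
    · simp only [hx, hy, if_true, if_false] at h
      exact absurd ((g2' (c x, e x)).2) (by rw [h]; exact G.irrefl)
    · simp only [hx, hy, if_false] at h
      have := g1 h
      simp only [Prod.mk.injEq] at this
      exact e.injective this.2
  · intro x
    by_cases hx : x = a
    · simp [hx, hv]
    · simp only [hx, if_false]; exact (g2' _).1
  · intro x y h
    by_cases hx : x = a <;> by_cases hy : y = a
    · rw [hx, hy] at h; exact absurd h F.irrefl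
    · simp only [hx, hy, if_true, if_false]; exact (g2' _).2
    · simp only [hx, hy, if_true, if_false]; exact (g2' _).2.symm
    · simp only [hx, hy, if_false]
      apply g3
      rw [SimpleGraph.completeEquipartiteGraph_adj]
      intro hcc
      rcases hcr x y h hcc with h | h
      · exact hx h.1
      · exact hy h.2

lemma bounded_degree {W : Type} [Fintype W] {F : SimpleGraph W} {r : ℕ} (hr : 1 ≤ r)
    (hF : IsCrit F (r + 1)) {ε : ℝ} (hε : 0 < ε) :
    ∃ ε' : ℝ, 0 < ε' ∧ ∃ N : ℕ, ∀ (G : SimpleGraph ℕ) [DecidableRel G.Adj] (S : Finset ℕ),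
      N ≤ S.card → (1 - 1 / ((r : ℝ) + 1) - ε') * (S.card : ℝ) ^ 2 ≤ E2 G S → ¬ Cp F G S →
      ∀ v ∈ S, (dg G S v : ℝ) < (1 - 1 / ((r : ℝ) + 1) + ε) * S.card := by
  obtain ⟨N, hN⟩ := ES_dens (ε := ε ^ 2 / 2) (by positivity) r (Fintype.card W) hr
  refine ⟨ε ^ 2 / 2, by positivity, 2 * N, fun G _ S hS hE hfree => ?_⟩
  by_contra hcon
  push Not at hcon
  obtain ⟨v₁, hv₁, hd₁⟩ := hcon
  obtain ⟨v, hv, hmax⟩ := Finset.exists_max_image S (dg G S) ⟨v₁, hv₁⟩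
  apply hfree
  apply embed_vertex hF hv
  have hr' : (1 : ℝ) ≤ r := by exact_mod_cast hr
  have ha : 1 / ((r : ℝ) + 1) ≤ 1 / 2 := by
    apply one_div_le_one_div_of_le <;> linarith
  set n : ℝ := (S.card : ℝ) with hn
  have hcard : (S.filter (G.Adj v)).card = dg G S v := rfl
  have hdn : dg G S v ≤ S.card := dg_le S v
  have hd : (1 - 1 / ((r : ℝ) + 1) + ε) * n ≤ dg G S v :=
    hd₁.trans (by exact_mod_cast hmax v₁ hv₁)
  have hS' : 2 * (N : ℝ) ≤ n := by rw [hn]; exact_mod_cast hS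
  have hn0 : 0 ≤ n := by positivity
  set d : ℝ := (dg G S v : ℝ) with hd'
  have hdn' : d ≤ n := by rw [hn, hd']; exact_mod_cast hdn
  have hd0 : 0 ≤ d := by positivity
  apply hN
  · have : (N : ℝ) ≤ d := by nlinarith
    rw [hcard]
    exact (Nat.cast_le (α := ℝ)).mp this
  · rw [hcard]
    have h1 := E2_sdiff (G := G) (S := S) (U := S \ S.filter (G.Adj v)) Finset.sdiff_subset
    rw [Finset.sdiff_sdiff_eq_self (Finset.filter_subset _ _)] at h1
    have h2 : ∑ u ∈ S \ S.filter (G.Adj v), dg G S u ≤ (S.card - dg G S v) * dg G S v := by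
      calc _ ≤ ∑ u ∈ S \ S.filter (G.Adj v), dg G S v :=
            Finset.sum_le_sum fun u hu => hmax u (Finset.mem_sdiff.mp hu).1
        _ = _ := by
          rw [Finset.sum_const, smul_eq_mul, Finset.card_sdiff_of_subset (Finset.filter_subset _ _),
            hcard]
    have h3 : (E2 G S : ℝ) ≤ E2 G (S.filter (G.Adj v)) + 2 * ((n - d) * d) := by
      have : E2 G S ≤ E2 G (S.filter (G.Adj v)) + 2 * ((S.card - dg G S v) * dg G S v) := by
        omega
      have h4 : (E2 G S : ℝ) ≤ ((E2 G (S.filter (G.Adj v)) +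
        2 * ((S.card - dg G S v) * dg G S v) : ℕ) : ℝ) := by exact_mod_cast this
      rw [Nat.cast_add, Nat.cast_mul, Nat.cast_mul, Nat.cast_sub hdn] at h4
      simpa using h4
    set a : ℝ := 1 - 1 / ((r : ℝ) + 1) with hadef
    have ha' : a = r / (r + 1) := by rw [hadef]; field_simp; ring
    have key : a * n ^ 2 - 2 * ((n - d) * d) - (1 - 1 / (r : ℝ)) * d ^ 2
        = (1 + 1 / r) * (d - a * n) ^ 2 := by
      rw [ha']; field_simp; ring
    have h5 : (ε * n) ^ 2 ≤ (d - a * n) ^ 2 := by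
      apply pow_le_pow_left₀ (by positivity)
      linarith
    have h6 : (d - a * n) ^ 2 ≤ (1 + 1 / (r : ℝ)) * (d - a * n) ^ 2 := by
      have : 0 ≤ 1 / (r : ℝ) := by positivity
      nlinarith [sq_nonneg (d - a * n)]
    have h7 : ε ^ 2 * d ^ 2 ≤ ε ^ 2 * n ^ 2 := by gcongr
    nlinarith

/-- embedding `F` from an edge `uv`, many further vertices and a `K_r(m)` complete to them. -/
lemma embed_edge {W : Type} [Fintype W] {F : SimpleGraph W} {r : ℕ} (hF : IsCrit F (r + 1))
    {G : SimpleGraph ℕ} {S : Finset ℕ} {u v : ℕ} (hu : u ∈ S) (hv : v ∈ S)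
    (huv : G.Adj u v) (g : Fin r → W → ℕ) (w : W → ℕ)
    (gS : ∀ i x, g i x ∈ S) (wS : ∀ x, w x ∈ S) (winj : Function.Injective w)
    (ginj : ∀ i, Function.Injective (g i))
    (gadj : ∀ i j x y, i ≠ j → G.Adj (g i x) (g j y))
    (ug : ∀ i x, G.Adj u (g i x)) (vg : ∀ i x, G.Adj v (g i x))
    (wg : ∀ y i x, G.Adj (w y) (g i x)) (wu : ∀ x, w x ≠ u) (wv : ∀ x, w x ≠ v) :
    Cp F G S := by
  classical
  obtain ⟨c₀, a, b, hab, hc₀, hcr₀⟩ := hF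
  -- recolour so that `c a = last`
  let σ := Equiv.swap (c₀ a) (Fin.last r)
  obtain ⟨c, hca, hcb, hcr⟩ : ∃ c : W → Fin (r + 1), c a = Fin.last r ∧ c b = Fin.last r ∧
      ∀ x y, F.Adj x y → c x = c y → (x = a ∧ y = b) ∨ (x = b ∧ y = a) := by
    refine ⟨fun x => σ (c₀ x), by simp [σ], by simp [σ, ← hc₀], fun x y h h' => ?_⟩
    exact hcr₀ x y h (σ.injective h')
  let f : W → ℕ := fun x => if x = a then u else if x = b then v else
    if h : c x = Fin.last r then w x else g ((c x).castPred h) x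
  have hba : b ≠ a := hab.ne'
  have fa : f a = u := by simp [f]
  have fb : f b = v := by simp [f, hba]
  have fw : ∀ x, x ≠ a → x ≠ b → c x = Fin.last r → f x = w x := by
    intro x h1 h2 h3; simp [f, h1, h2, h3]
  have fg : ∀ x, c x ≠ Fin.last r → ∃ i, i = c x ∧ ∃ j : Fin r, j.castSucc = i ∧ f x = g j x := by
    intro x h3
    have h1 : x ≠ a := by rintro rfl; exact h3 hca
    have h2 : x ≠ b := by rintro rfl; exact h3 hcb
    exact ⟨c x, rfl, (c x).castPred h3, by simp, by simp [f, h1, h2, h3]⟩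
  -- vertices of the last colour are adjacent to all other ones
  have hlast : ∀ x, c x = Fin.last r → ∀ j y, G.Adj (f x) (g j y) := by
    intro x hx j y
    by_cases h1 : x = a
    · rw [h1, fa]; exact ug j y
    by_cases h2 : x = b
    · rw [h2, fb]; exact vg j y
    rw [fw x h1 h2 hx]; exact wg x j y
  have hadj : ∀ x y, c x ≠ c y → G.Adj (f x) (f y) := by
    intro x y hxy
    by_cases hx : c x = Fin.last r
    · obtain ⟨_, _, j, _, hj⟩ := fg y (by rw [← hx]; exact hxy.symm)
      rw [hj]; exact hlast x hx j y
    · obtain ⟨_, rfl, j, hj1, hj⟩ := fg x hx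
      by_cases hy : c y = Fin.last r
      · rw [hj]; exact (hlast y hy j x).symm
      · obtain ⟨_, rfl, k, hk1, hk⟩ := fg y hy
        rw [hj, hk]
        apply gadj
        rintro rfl
        exact hxy (hj1.symm.trans hk1)
  refine ⟨f, ?_, ?_, ?_⟩
  · intro x y h
    by_cases hxy : c x = c y
    · by_cases hx : c x = Fin.last r
      · have hy : c y = Fin.last r := hxy ▸ hx
        by_cases x1 : x = a
        · by_cases y1 : y = a
          · rw [x1, y1]
          by_cases y2 : y = b
          · rw [x1, y2, fa, fb] at h; exact absurd h huv.ne
          · rw [x1, fa, fw y y1 y2 hy] at h; exact absurd h.symm (wu y)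
        by_cases x2 : x = b
        · by_cases y1 : y = a
          · rw [x2, y1, fa, fb] at h; exact absurd h huv.ne'
          by_cases y2 : y = b
          · rw [x2, y2]
          · rw [x2, fb, fw y y1 y2 hy] at h; exact absurd h.symm (wv y)
        · rw [fw x x1 x2 hx] at h
          by_cases y1 : y = a
          · rw [y1, fa] at h; exact absurd h (wu x)
          by_cases y2 : y = b
          · rw [y2, fb] at h; exact absurd h (wv x)
          · rw [fw y y1 y2 hy] at h; exact winj h
      · obtain ⟨_, rfl, j, hj1, hj⟩ := fg x hx
        obtain ⟨_, rfl, k, hk1, hk⟩ := fg y (hxy ▸ hx)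
        have : j = k := Fin.castSucc_injective _ (hj1.trans (hxy.trans hk1.symm))
        subst this
        rw [hj, hk] at h
        exact ginj _ h
    · exact absurd h (hadj x y hxy).ne
  · intro x
    by_cases x1 : x = a
    · rw [x1, fa]; exact hu
    by_cases x2 : x = b
    · rw [x2, fb]; exact hv
    by_cases hx : c x = Fin.last r
    · rw [fw x x1 x2 hx]; exact wS x
    · obtain ⟨_, rfl, j, hj1, hj⟩ := fg x hx
      rw [hj]; exact gS _ _
  · intro x y h
    by_cases hxy : c x = c y
    · rcases hcr x y h hxy with ⟨rfl, rfl⟩ | ⟨rfl, rfl⟩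
      · rw [fa, fb]; exact huv
      · rw [fa, fb]; exact huv.symm
    · exact hadj x y hxy



lemma exists_inj_of_card_le {W : Type} [Fintype W] {α : Type} (A : Finset α)
    (h : Fintype.card W ≤ A.card) : ∃ f : W → α, Function.Injective f ∧ ∀ x, f x ∈ A := by
  have : Nonempty (W ↪ A) := Function.Embedding.nonempty_of_card_le (by simpa using h)
  obtain ⟨f⟩ := this
  exact ⟨fun x => f x, fun x y hxy => f.injective (Subtype.ext hxy), fun x => (f x).2⟩

lemma find_F {W : Type} [Fintype W] {F : SimpleGraph W} {r : ℕ} (hr : 1 ≤ r)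
    (hF : IsCrit F (r + 1)) {ε : ℝ} (hε' : r * ε ≤ 1 / (2 * ((r : ℝ) + 1))) :
    ∃ N M : ℕ, ∀ (G : SimpleGraph ℕ) [DecidableRel G.Adj] (S : Finset ℕ), N ≤ S.card →
      (∀ v ∈ S, (1 - 1 / ((r : ℝ) + 1) - ε) * S.card ≤ dg G S v) →
      ∀ u ∈ S, ∀ v ∈ S, G.Adj u v →
      Cp (SimpleGraph.completeEquipartiteGraph r M) G (S.filter fun x => G.Adj u x ∧ G.Adj v x) →
      Cp F G S := by
  set m := Fintype.card W with hm
  obtain ⟨M, hM⟩ : ∃ M, M = 2 * (r + 1) * (m + 1) := ⟨_, rfl⟩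
  refine ⟨M * (2 ^ (r * M) * m + 3), M, fun G _ S hS hdeg u hu v hv huv hB => ?_⟩
  obtain ⟨g, g1, g2, g3⟩ := hB
  have g2' : ∀ p, g p ∈ S ∧ G.Adj u (g p) ∧ G.Adj v (g p) := by simpa using g2
  let pat : ℕ → Finset (Fin r × Fin M) := fun w => Finset.univ.filter fun p => G.Adj w (g p)
  let row : ℕ → Fin r → Finset (Fin M) := fun w j => Finset.univ.filter fun i => G.Adj w (g (j, i))
  let good : ℕ → Prop := fun w => ∀ j, m ≤ (row w j).card
  have : DecidablePred good := Classical.decPred _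
  have hMpos : 0 < M := by rw [hM]; positivity
  have pat_row : ∀ w, (pat w).card = ∑ j, (row w j).card := by
    intro w
    simp only [pat, row, Finset.card_filter]
    rw [← Finset.univ_product_univ, Finset.sum_product]
  have row_le : ∀ w j, (row w j).card ≤ M := by
    intro w j
    calc _ ≤ (Finset.univ : Finset (Fin M)).card := Finset.card_filter_le _ _
      _ = M := by simp
  have pat_le : ∀ w, (pat w).card ≤ (r - 1) * M + m + if good w then M else 0 := by
    intro w
    rw [pat_row]
    by_cases hg : good w
    · simp only [hg, if_true]
      calc ∑ j, (row w j).card ≤ ∑ j : Fin r, M := Finset.sum_le_sum fun j _ => row_le w j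
        _ = r * M := by simp
        _ = (r - 1) * M + M := by
          obtain ⟨k, rfl⟩ : ∃ k, r = k + 1 := ⟨r - 1, by omega⟩
          simp; ring
        _ ≤ _ := by omega
    · simp only [hg, if_false]
      simp only [good, not_forall, not_le] at hg
      obtain ⟨j, hj⟩ := hg
      rw [← Finset.add_sum_erase _ _ (Finset.mem_univ j)]
      have : ∑ x ∈ Finset.univ.erase j, (row w x).card ≤ (r - 1) * M := by
        calc _ ≤ ∑ x ∈ Finset.univ.erase j, M := Finset.sum_le_sum fun j _ => row_le w j
          _ = _ := by simp [Finset.card_erase_of_mem]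
      omega
  have count : ∑ p, dg G S (g p) = ∑ w ∈ S, (pat w).card := by
    simp only [dg, pat, Finset.card_filter]
    rw [Finset.sum_comm]
    simp [G.adj_comm]
  have hgood : (S.card : ℝ) ≤ M * (S.filter good).card := by
    have h1 : ∑ p, dg G S (g p) ≤ S.card * ((r - 1) * M + m) + (S.filter good).card * M := by
      rw [count]
      calc _ ≤ ∑ w ∈ S, ((r - 1) * M + m + if good w then M else 0) :=
            Finset.sum_le_sum fun w _ => pat_le w
        _ = _ := by
          rw [Finset.sum_add_distrib, ← Finset.sum_filter]
          simp
    have h2 : (r * M : ℝ) * ((1 - 1 / ((r : ℝ) + 1) - ε) * S.card) ≤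
        ((∑ p, dg G S (g p) : ℕ) : ℝ) := by
      push_cast
      calc _ = ∑ p : Fin r × Fin M, ((1 - 1 / ((r : ℝ) + 1) - ε) * S.card) := by simp
        _ ≤ _ := Finset.sum_le_sum fun p _ => hdeg _ (g2' p).1
    have h3 : ((∑ p, dg G S (g p) : ℕ) : ℝ) ≤
        S.card * ((r - 1) * M + m) + (S.filter good).card * M := by
      have := (Nat.cast_le (α := ℝ)).mpr h1
      rw [Nat.cast_add, Nat.cast_mul, Nat.cast_add, Nat.cast_mul, Nat.cast_mul, Nat.cast_sub hr]
        at this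
      simpa using this
    have hMr : (M : ℝ) = 2 * (r + 1) * (m + 1) := by rw [hM]; push_cast; ring
    have h4 : (1 : ℝ) ≤ M * (r * (1 - 1 / ((r : ℝ) + 1) - ε) - (r - 1)) - m := by
      have e1 : (r : ℝ) * (1 - 1 / ((r : ℝ) + 1) - ε) - (r - 1) = 1 / (r + 1) - r * ε := by
        field_simp; ring
      rw [e1]
      have e2 : 1 / (2 * ((r : ℝ) + 1)) ≤ 1 / (r + 1) - r * ε := by
        have : 1 / ((r : ℝ) + 1) = 1 / (2 * ((r : ℝ) + 1)) + 1 / (2 * ((r : ℝ) + 1)) := by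
          field_simp; ring
        linarith
      have e3 : (M : ℝ) * (1 / (2 * ((r : ℝ) + 1))) = m + 1 := by rw [hMr]; field_simp
      have e4 : (M : ℝ) * (1 / (2 * ((r : ℝ) + 1))) ≤ M * (1 / (r + 1) - r * ε) := by gcongr
      linarith
    have h5 : (S.card : ℝ) * 1 ≤
        S.card * (M * (r * (1 - 1 / ((r : ℝ) + 1) - ε) - (r - 1)) - m) := by gcongr
    nlinarith
  have hgood' : 2 ^ (r * M) * m + 3 ≤ (S.filter good).card := by
    have : M * (2 ^ (r * M) * m + 3) ≤ M * (S.filter good).card :=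
      hS.trans (by exact_mod_cast hgood)
    exact Nat.le_of_mul_le_mul_left this hMpos
  set A := (S.filter good) \ {u, v} with hA
  have hAcard : 2 ^ (r * M) * m < A.card := by
    have h1 : (S.filter good).card ≤ A.card + ({u, v} : Finset ℕ).card := by
      have := Finset.le_card_sdiff ({u, v} : Finset ℕ) (S.filter good)
      change _ ≤ A.card at this
      omega
    have h2 : ({u, v} : Finset ℕ).card ≤ 2 := Finset.card_le_two
    omega
  obtain ⟨P, -, hP⟩ := Finset.exists_lt_card_fiber_of_mul_lt_card_of_maps_to
    (s := A) (t := (Finset.univ : Finset (Finset (Fin r × Fin M)))) (f := pat) (n := m)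
    (fun _ _ => Finset.mem_univ _) (by simpa using hAcard)
  set Φ := A.filter fun x => pat x = P with hΦ
  have hΦmem : ∀ x ∈ Φ, x ∈ S ∧ good x ∧ x ≠ u ∧ x ≠ v ∧ pat x = P := by
    intro x hx
    simp only [hΦ, hA, Finset.mem_filter, Finset.mem_sdiff, Finset.mem_insert,
      Finset.mem_singleton, not_or] at hx
    exact ⟨hx.1.1.1, hx.1.1.2, hx.1.2.1, hx.1.2.2, hx.2⟩
  obtain ⟨w, w1, w2⟩ := exists_inj_of_card_le (W := W) Φ (by omega)
  obtain ⟨w0, hw0⟩ : Φ.Nonempty := Finset.card_pos.mp (by omega)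
  have hsel : ∀ j : Fin r, ∃ f : W → Fin M, Function.Injective f ∧ ∀ x, f x ∈ row w0 j :=
    fun j => exists_inj_of_card_le _ ((hΦmem w0 hw0).2.1 j)
  choose s s1 s2 using hsel
  have hsP : ∀ j x, (j, s j x) ∈ P := by
    intro j x
    rw [← (hΦmem w0 hw0).2.2.2.2]
    have := s2 j x
    simpa [pat, row] using this
  refine embed_edge hF hu hv huv (fun j x => g (j, s j x)) w (fun j x => (g2' _).1)
    (fun x => (hΦmem _ (w2 x)).1) w1 ?_ ?_ (fun j x => (g2' _).2.1) (fun j x => (g2' _).2.2)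
    ?_ (fun x => (hΦmem _ (w2 x)).2.2.1) (fun x => (hΦmem _ (w2 x)).2.2.2.1)
  · intro j x y h
    have := g1 h
    simp only [Prod.mk.injEq, true_and] at this
    exact s1 j this
  · intro i j x y hij
    apply g3
    rw [SimpleGraph.completeEquipartiteGraph_adj]
    exact hij
  · intro y i x
    have := hsP i x
    rw [← (hΦmem _ (w2 y)).2.2.2.2] at this
    simpa [pat] using this



lemma common_nbhd {W : Type} [Fintype W] {F : SimpleGraph W} {r : ℕ} (hr : 1 ≤ r)
    (hF : IsCrit F (r + 1)) {ε η : ℝ} (hε' : r * ε ≤ 1 / (2 * ((r : ℝ) + 1)))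
    (hη : 0 < η) (hεη : ε ≤ η / (2 * (r + 2))) :
    ∃ N : ℕ, ∀ (G : SimpleGraph ℕ) [DecidableRel G.Adj] (S : Finset ℕ), N ≤ S.card →
      (∀ v ∈ S, (1 - 1 / ((r : ℝ) + 1) - ε) * S.card ≤ dg G S v) → ¬ Cp F G S →
      ∀ u ∈ S, ∀ v ∈ S, G.Adj u v →
      ((S.filter fun x => G.Adj u x ∧ G.Adj v x).card : ℝ) <
        (1 - 2 / ((r : ℝ) + 1) + η) * S.card := by
  obtain ⟨N₁, M, hN₁⟩ := find_F hr hF hε'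
  have hη' : 0 < η / (2 * ((r : ℝ) + 2)) := by positivity
  obtain ⟨N₂, hN₂⟩ := ES_min hη' (r - 1) M
  obtain ⟨N₃, hN₃⟩ := exists_nat_gt (((N₂ : ℝ) + M) / η)
  refine ⟨N₁ + N₃, fun G _ S hS hdeg hfree u hu v hv huv => ?_⟩
  by_contra hcon
  push Not at hcon
  refine hfree (hN₁ G S (by omega) hdeg u hu v hv huv ?_)
  set C := S.filter fun x => G.Adj u x ∧ G.Adj v x with hC
  have hCS : C ⊆ S := Finset.filter_subset _ _
  have hCn : (C.card : ℝ) ≤ S.card := by exact_mod_cast Finset.card_le_card hCS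
  have hr' : (1 : ℝ) ≤ r := by exact_mod_cast hr
  have h2 : 2 / ((r : ℝ) + 1) ≤ 1 := by rw [div_le_one (by linarith)]; linarith
  have hn3 : (N₃ : ℝ) ≤ S.card := by exact_mod_cast (by omega : N₃ ≤ S.card)
  have hn0 : (0 : ℝ) ≤ S.card := by positivity
  have hCη : (N₂ : ℝ) + M ≤ C.card := by
    rw [div_lt_iff₀ hη] at hN₃
    have : 0 ≤ (1 - 2 / ((r : ℝ) + 1)) * S.card := mul_nonneg (by linarith) hn0
    nlinarith
  have hCη' : N₂ + M ≤ C.card := by exact_mod_cast hCη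
  rcases Nat.lt_or_ge 1 r with hr2 | hr2
  · -- `r ≥ 2`
    have key := hN₂ G C (by omega) ?_
    · rwa [Nat.sub_add_cancel hr] at key
    intro x hx
    have h3 := dg_sdiff (G := G) (S := S) (U := S \ C) x
    rw [Finset.sdiff_sdiff_eq_self hCS, Finset.card_sdiff_of_subset hCS] at h3
    have h4 : (dg G S x : ℝ) ≤ dg G C x + (S.card - C.card) := by
      have : dg G S x + C.card ≤ dg G C x + S.card := by
        have := Finset.card_le_card hCS
        omega
      have : (dg G S x : ℝ) + C.card ≤ dg G C x + S.card := by exact_mod_cast this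
      linarith
    have h5 := hdeg x (hCS hx)
    rw [Nat.cast_sub hr, Nat.cast_one]
    have hr1 : (0 : ℝ) < r - 1 := by
      have : (1 : ℝ) < r := by exact_mod_cast hr2
      linarith
    have h6 : (1 / ((r : ℝ) + 1) + η / (r - 1)) * S.card ≤ 1 / ((r : ℝ) - 1) * C.card := by
      have e : (1 / ((r : ℝ) + 1) + η / (r - 1)) * S.card =
          1 / ((r : ℝ) - 1) * ((1 - 2 / ((r : ℝ) + 1) + η) * S.card) := by
        field_simp; ring
      rw [e]
      gcongr
    have h7 : 2 * (η / (2 * ((r : ℝ) + 2))) ≤ η / (r - 1) := by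
      have e : 2 * (η / (2 * ((r : ℝ) + 2))) = η / (r + 2) := by field_simp
      rw [e]
      gcongr
      linarith
    have h8 : η / (2 * ((r : ℝ) + 2)) * C.card ≤ η / (2 * ((r : ℝ) + 2)) * S.card := by gcongr
    have h9 : (ε + η / (2 * ((r : ℝ) + 2))) * S.card ≤ η / (r - 1) * S.card := by
      gcongr; linarith
    linarith
  · -- `r = 1`
    obtain rfl : r = 1 := by omega
    obtain ⟨f, f1, f2⟩ := exists_inj_of_card_le (W := Fin 1 × Fin M) C (by simp; omega)
    refine ⟨f, f1, f2, fun x y h => ?_⟩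
    rw [SimpleGraph.completeEquipartiteGraph_adj] at h
    exact absurd (Subsingleton.elim _ _) h

lemma count_pairs {ι : Type} [Fintype ι] [DecidableEq ι] (S : Finset ℕ) (A : ι → Finset ℕ)
    (hA : ∀ i, A i ⊆ S) :
    ∑ i, (A i).card ≤ S.card + ∑ i, ∑ j ∈ Finset.univ.erase i, (A i ∩ A j).card := by
  have h1 : ∀ T ⊆ S, T.card = ∑ w ∈ S, if w ∈ T then 1 else 0 := by
    intro T hT
    rw [← Finset.card_filter]
    congr 1
    ext x
    simp only [Finset.mem_filter]
    exact ⟨fun h => ⟨hT h, h⟩, fun h => h.2⟩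
  have h2 : ∑ i, (A i).card = ∑ w ∈ S, ∑ i, if w ∈ A i then 1 else 0 := by
    rw [Finset.sum_comm]
    exact Finset.sum_congr rfl fun i _ => h1 _ (hA i)
  have h3 : ∑ i, ∑ j ∈ Finset.univ.erase i, (A i ∩ A j).card =
      ∑ w ∈ S, ∑ i, ∑ j ∈ Finset.univ.erase i, if w ∈ A i ∩ A j then 1 else 0 := by
    rw [Finset.sum_comm]
    refine Finset.sum_congr rfl fun i _ => ?_
    rw [Finset.sum_comm]
    exact Finset.sum_congr rfl fun j _ => h1 _ (Finset.inter_subset_left.trans (hA i))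
  rw [h2, h3, Finset.card_eq_sum_ones, ← Finset.sum_add_distrib]
  refine Finset.sum_le_sum fun w _ => ?_
  by_cases hw : ∃ i, w ∈ A i
  · obtain ⟨i, hi⟩ := hw
    rw [← Finset.add_sum_erase _ _ (Finset.mem_univ i)]
    simp only [hi, if_true]
    have h4 : ∑ j ∈ Finset.univ.erase i, (if w ∈ A j then 1 else 0) ≤
        ∑ i, ∑ j ∈ Finset.univ.erase i, if w ∈ A i ∩ A j then 1 else 0 := by
      refine le_trans ?_ (Finset.single_le_sum (f := fun i => ∑ j ∈ Finset.univ.erase i,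
        if w ∈ A i ∩ A j then 1 else 0) (fun _ _ => Nat.zero_le _) (Finset.mem_univ i))
      simp [hi]
    omega
  · push Not at hw
    simp [hw]

lemma clique_free_core {W : Type} [Fintype W] {F : SimpleGraph W} {r : ℕ} (hr : 1 ≤ r)
    (hF : IsCrit F (r + 1)) : ∃ ε : ℝ, 0 < ε ∧ ∃ N : ℕ,
    ∀ (G : SimpleGraph ℕ) [DecidableRel G.Adj] (S : Finset ℕ), N ≤ S.card →
      (∀ v ∈ S, (1 - 1 / ((r : ℝ) + 1) - ε) * S.card ≤ dg G S v) → ¬ Cp F G S →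
      ¬ Cp (⊤ : SimpleGraph (Fin (r + 2))) G S := by
  obtain ⟨L, hL⟩ : ∃ L : ℝ, L = (r : ℝ) + 2 := ⟨_, rfl⟩
  have hr' : (1 : ℝ) ≤ r := by exact_mod_cast hr
  have hL3 : 3 ≤ L := by linarith
  obtain ⟨ε', hε', N₁, hN₁⟩ := bounded_degree hr hF (ε := 1 / (4 * L ^ 2)) (by positivity)
  obtain ⟨η, hη⟩ : ∃ η : ℝ, η = 1 / (4 * L ^ 3) := ⟨_, rfl⟩
  have hη0 : 0 < η := by rw [hη]; positivity
  obtain ⟨ε, hεd⟩ : ∃ ε : ℝ, ε = min ε' (η / (4 * L)) := ⟨_, rfl⟩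
  have hε0 : 0 < ε := by rw [hεd]; positivity
  have hε1 : ε ≤ ε' := by rw [hεd]; exact min_le_left _ _
  have hε2 : ε ≤ η / (4 * L) := by rw [hεd]; exact min_le_right _ _
  have hε4 : ε ≤ η / 12 := hε2.trans (by gcongr; linarith)
  have hηL : η * L ^ 3 = 1 / 4 := by rw [hη]; field_simp
  have hL2 : 1 ≤ L ^ 2 := by nlinarith
  obtain ⟨N₂, hN₂⟩ := common_nbhd hr hF (ε := ε) (η := η) (by
      rw [le_div_iff₀ (by positivity)]
      have h1 : (r : ℝ) * ε * (2 * (r + 1)) ≤ L * (η / 12) * (2 * L) := by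
        gcongr <;> linarith
      nlinarith) hη0 (hε2.trans (by
        rw [← hL]
        gcongr; linarith))
  refine ⟨ε, hε0, N₁ + N₂ + 1, fun G _ S hS hdeg hfree => ?_⟩
  rintro ⟨q, q1, q2, q3⟩
  have hn0 : (0 : ℝ) < S.card := by exact_mod_cast (by omega : 0 < S.card)
  set n : ℝ := (S.card : ℝ) with hn
  have hE : (1 - 1 / ((r : ℝ) + 1) - ε') * n ^ 2 ≤ E2 G S := by
    have h1 : ∑ v ∈ S, (1 - 1 / ((r : ℝ) + 1) - ε) * n ≤ (E2 G S : ℝ) := by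
      rw [E2]; push_cast
      exact Finset.sum_le_sum hdeg
    rw [Finset.sum_const, nsmul_eq_mul, ← hn] at h1
    have : (1 - 1 / ((r : ℝ) + 1) - ε') * n ^ 2 ≤ (1 - 1 / ((r : ℝ) + 1) - ε) * n ^ 2 := by
      gcongr
    nlinarith
  have hmax := hN₁ G S (by omega) hE hfree
  let A : Fin (r + 2) → Finset ℕ := fun i => S \ S.filter (G.Adj (q i))
  have hcount := count_pairs S A fun i => Finset.sdiff_subset
  have hA1 : ∀ i, (1 / ((r : ℝ) + 1) - 1 / (4 * L ^ 2)) * n ≤ (A i).card := by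
    intro i
    have h1 := hmax (q i) (q2 i)
    have h2 : ((A i).card : ℝ) = n - dg G S (q i) := by
      rw [hn, Finset.card_sdiff_of_subset (Finset.filter_subset _ _),
        Nat.cast_sub (Finset.card_filter_le _ _)]
      rfl
    rw [h2]
    linarith
  have hA2 : ∀ i, ∀ j ∈ Finset.univ.erase i, ((A i ∩ A j).card : ℝ) ≤ (2 * ε + η) * n := by
    intro i j hj
    have hij : i ≠ j := (Finset.ne_of_mem_erase hj).symm
    have hadj : G.Adj (q i) (q j) := q3 i j hij
    have h1 := hN₂ G S (by omega) hdeg hfree _ (q2 i) _ (q2 j) hadj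
    have h2 : A i ∩ A j = S \ (S.filter (G.Adj (q i)) ∪ S.filter (G.Adj (q j))) := by
      ext x; simp only [A, Finset.mem_inter, Finset.mem_sdiff, Finset.mem_union]; tauto
    have h3 : S.filter (fun x => G.Adj (q i) x ∧ G.Adj (q j) x) =
        S.filter (G.Adj (q i)) ∩ S.filter (G.Adj (q j)) := by
      ext x; simp only [Finset.mem_inter, Finset.mem_filter]; tauto
    have h4 := Finset.card_union_add_card_inter (S.filter (G.Adj (q i))) (S.filter (G.Adj (q j)))
    have h5 : S.filter (G.Adj (q i)) ∪ S.filter (G.Adj (q j)) ⊆ S :=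
      Finset.union_subset (Finset.filter_subset _ _) (Finset.filter_subset _ _)
    rw [← h3] at h4
    rw [h2, Finset.card_sdiff_of_subset h5, Nat.cast_sub (Finset.card_le_card h5)]
    have h6 : ((S.filter (G.Adj (q i)) ∪ S.filter (G.Adj (q j))).card : ℝ) +
        (S.filter (fun x => G.Adj (q i) x ∧ G.Adj (q j) x)).card =
        dg G S (q i) + dg G S (q j) := by
      unfold dg; exact_mod_cast h4
    have h7 := hdeg _ (q2 i)
    have h8 := hdeg _ (q2 j)
    have h9 : 2 / ((r : ℝ) + 1) = 1 / ((r : ℝ) + 1) + 1 / ((r : ℝ) + 1) := by ring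
    rw [h9] at h1
    linarith
  have hc' : ∑ i, ((A i).card : ℝ) ≤ n + ∑ i, ∑ j ∈ Finset.univ.erase i, ((A i ∩ A j).card : ℝ) := by
    rw [hn]; exact_mod_cast hcount
  have hlow : L * ((1 / ((r : ℝ) + 1) - 1 / (4 * L ^ 2)) * n) ≤ ∑ i, ((A i).card : ℝ) := by
    calc _ = ∑ i : Fin (r + 2), ((1 / ((r : ℝ) + 1) - 1 / (4 * L ^ 2)) * n) := by
          rw [Finset.sum_const, nsmul_eq_mul, hL]; simp
      _ ≤ _ := Finset.sum_le_sum fun i _ => hA1 i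
  have hup : ∑ i, ∑ j ∈ Finset.univ.erase i, ((A i ∩ A j).card : ℝ) ≤
      L * ((L - 1) * ((2 * ε + η) * n)) := by
    calc _ ≤ ∑ i : Fin (r + 2), ∑ j ∈ Finset.univ.erase i, (2 * ε + η) * n :=
          Finset.sum_le_sum fun i _ => Finset.sum_le_sum (hA2 i)
      _ = _ := by
        simp only [Finset.sum_const, nsmul_eq_mul, Finset.card_erase_of_mem (Finset.mem_univ _),
          Finset.card_univ, Fintype.card_fin, hL]
        rw [show r + 2 - 1 = r + 1 from rfl]
        push_cast
        ring
  have hfin : L * ((1 / ((r : ℝ) + 1) - 1 / (4 * L ^ 2))) ≤ 1 + L * ((L - 1) * (2 * ε + η)) := by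
    refine le_of_mul_le_mul_right ?_ hn0
    linarith
  have e1 : L * (1 / ((r : ℝ) + 1)) = 1 + 1 / ((r : ℝ) + 1) := by rw [hL]; field_simp; ring
  have e2 : L * (1 / (4 * L ^ 2)) = 1 / (4 * L) := by field_simp
  have e3 : 1 / L ≤ 1 / ((r : ℝ) + 1) := by
    apply one_div_le_one_div_of_le <;> linarith
  have e4 : L * ((L - 1) * (2 * ε + η)) ≤ L * (L * (η / 6 + η)) := by
    gcongr <;> linarith
  have e5 : L * (L * (η / 6 + η)) = (7 / 24) * (1 / L) := by rw [hη]; field_simp; ring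
  have e6 : 1 / (4 * L) = (1 / 4) * (1 / L) := by field_simp
  have e7 : 0 < 1 / L := by positivity
  nlinarith


/-! ## Part 5: Turán numbers and Simonovits' theorem for critical graphs -/

/-- Number of edges of the Turán graph with `r + 1` parts. -/
def Tn (r n : ℕ) : ℕ := (SimpleGraph.turanGraph n (r + 1)).edgeFinset.card

lemma Tn_lower_nat (r n : ℕ) : r * n ^ 2 ≤ (r + 1) * (2 * Tn r n) + r * (r + 1) ^ 2 := by
  induction n using Nat.strong_induction_on with
  | _ n ih =>
    rcases lt_or_ge n (r + 1) with h | h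
    · have : n ^ 2 ≤ (r + 1) ^ 2 := Nat.pow_le_pow_left h.le 2
      nlinarith
    · obtain ⟨k, rfl⟩ := Nat.exists_eq_add_of_le' h
      have h1 := ih k (by omega)
      have h2 : Tn r (k + (r + 1)) = Tn r k + k * r + (r + 1).choose 2 := by
        have := SimpleGraph.card_edgeFinset_turanGraph_add (n := k) (r := r + 1)
        simpa [Tn] using this
      have h3 : 2 * (r + 1).choose 2 = (r + 1) * r := by
        rw [Nat.choose_two_right]
        have := Nat.even_mul_pred_self (r + 1)
        rw [Nat.mul_div_cancel' this.two_dvd]; simp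
      rw [h2]
      nlinarith

lemma Tn_lower (r n : ℕ) :
    (1 - 1 / ((r : ℝ) + 1)) * (n : ℝ) ^ 2 - r * (r + 1) ≤ 2 * Tn r n := by
  have h := Tn_lower_nat r n
  have h' : (r : ℝ) * (n : ℝ) ^ 2 ≤ ((r : ℝ) + 1) * (2 * Tn r n) + r * ((r : ℝ) + 1) ^ 2 := by
    exact_mod_cast h
  have hr : (0 : ℝ) < (r : ℝ) + 1 := by positivity
  refine le_of_mul_le_mul_left ?_ hr
  have : ((r : ℝ) + 1) * ((1 - 1 / ((r : ℝ) + 1)) * (n : ℝ) ^ 2 - r * (r + 1)) =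
      r * (n : ℝ) ^ 2 - r * (r + 1) ^ 2 := by field_simp; ring
  rw [this]; linarith

lemma Tn_upper (r n : ℕ) : 2 * (Tn r n : ℝ) ≤ (1 - 1 / ((r : ℝ) + 1)) * (n : ℝ) ^ 2 := by
  have h := SimpleGraph.mul_card_edgeFinset_turanGraph_le (n := n) (r := r + 1)
  have h' : 2 * ((r : ℝ) + 1) * (Tn r n : ℝ) ≤ r * (n : ℝ) ^ 2 := by
    unfold Tn
    simp only [Nat.add_sub_cancel] at h
    exact_mod_cast h
  have hr : (0 : ℝ) < (r : ℝ) + 1 := by positivity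
  refine le_of_mul_le_mul_left ?_ hr
  have : ((r : ℝ) + 1) * ((1 - 1 / ((r : ℝ) + 1)) * (n : ℝ) ^ 2) =
      r * (n : ℝ) ^ 2 := by field_simp; ring
  rw [this]; linarith

lemma turan_bound {r : ℕ} {G : SimpleGraph ℕ} [DecidableRel G.Adj] {S : Finset ℕ}
    (h : ¬ Cp (⊤ : SimpleGraph (Fin (r + 2))) G S) : E2 G S ≤ 2 * Tn r S.card := by
  rw [Cp_toFin] at h
  have h1 : (toFin G S).CliqueFree (r + 1 + 1) := by
    have := SimpleGraph.cliqueFree_iff_top_free (G := toFin G S) (β := Fin (r + 2))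
    rw [Fintype.card_fin] at this
    exact this.2 h
  have h2 := h1.card_edgeFinset_le
  simp only [Fintype.card_fin] at h2
  rw [← SimpleGraph.card_edgeFinset_turanGraph] at h2
  rw [← toFin_edges]
  unfold Tn
  omega

lemma simonovits {W : Type} [Fintype W] {F : SimpleGraph W} {r : ℕ} (hr : 1 ≤ r)
    (hF : IsCrit F (r + 1)) :
    ∃ N : ℕ, ∀ (G : SimpleGraph ℕ) [DecidableRel G.Adj] (S : Finset ℕ),
      N ≤ S.card → ¬ Cp F G S → 2 * Tn r S.card ≤ E2 G S →
      ¬ Cp (⊤ : SimpleGraph (Fin (r + 2))) G S := by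
  obtain ⟨ε, hε, N₁, hN₁⟩ := clique_free_core hr hF
  obtain ⟨N₂, hN₂⟩ := exists_nat_gt (((r : ℝ) * (r + 1) + 3) / ε)
  set n0 := max N₁ (N₂ + 1) with hn0
  refine ⟨n0 ^ 2 + n0 + 1, fun G _ S hS hfree hE => ?_⟩
  set n := S.card with hn
  obtain ⟨S', hSS, h1, h2⟩ := deletion (G := G)
    (fun k => (Tn r k : ℝ) + ((n : ℝ) - k)) S (by
      rw [← hn]; have : (2 * (Tn r n : ℝ)) ≤ E2 G S := by exact_mod_cast hE
      linarith)
  set k := S'.card with hk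
  have hkn : k ≤ n := Finset.card_le_card hSS
  have hEle := E2_le (G := G) S'
  rw [← hk] at hEle
  have hEle' : (E2 G S' : ℝ) ≤ k * k := by exact_mod_cast hEle
  have hT0 : (0 : ℝ) ≤ Tn r k := by positivity
  rcases lt_or_ge k n0 with hlt | hge
  · exfalso
    have a1 : (k : ℝ) ≤ n0 := by exact_mod_cast hlt.le
    have a2 : (n0 : ℝ) ^ 2 + n0 + 1 ≤ n := by exact_mod_cast hS
    have a3 : (k : ℝ) * k ≤ n0 * n0 := by gcongr
    nlinarith
  have hk1 : 1 ≤ k := by omega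
  have hkR : ((r : ℝ) * (r + 1) + 3) ≤ ε * k := by
    rw [div_lt_iff₀ hε] at hN₂
    have : (N₂ : ℝ) ≤ k := by exact_mod_cast (by omega : N₂ ≤ k)
    nlinarith
  have hfree' : ¬ Cp F G S' := fun h => hfree (h.mono hSS)
  have hK := hN₁ G S' (by omega) (by
    intro v hv
    have b1 := h2 v hv
    have b2 := Tn_lower r k
    have b3 := Tn_upper r (k - 1)
    rw [← hk]
    have b4 : ((k - 1 : ℕ) : ℝ) = (k : ℝ) - 1 := by push_cast [hk1]; ring
    rw [b4] at b1 b3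
    have b5 : (1 - 1 / ((r : ℝ) + 1)) * ((k : ℝ) - 1) ^ 2 =
      (1 - 1 / ((r : ℝ) + 1)) * (k : ℝ) ^ 2 - 2 * ((1 - 1 / ((r : ℝ) + 1)) * k) +
        (1 - 1 / ((r : ℝ) + 1)) := by ring
    have b6 : (0 : ℝ) ≤ 1 / ((r : ℝ) + 1) := by positivity
    have b7 : (1 - 1 / ((r : ℝ) + 1) - ε) * (k : ℝ) = (1 - 1 / ((r : ℝ) + 1)) * k - ε * k := by ring
    have b8 : (0 : ℝ) ≤ (r : ℝ) * (r + 1) := by positivity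
    rw [b7]
    linarith) hfree'
  have hTb := turan_bound hK
  have hTb' : (E2 G S' : ℝ) ≤ 2 * Tn r k := by exact_mod_cast hTb
  have hkn' : n ≤ k := by
    have : (n : ℝ) ≤ k := by linarith
    exact_mod_cast this
  have : S' = S := Finset.eq_of_subset_of_card_le hSS hkn'
  rw [← this]; exact hK


/-! ## Part 6: packings and the main induction -/

/-- `G[S]` contains `k` vertex-disjoint copies of `F`. -/
def Pack {W : Type} [Fintype W] (F : SimpleGraph W) (G : SimpleGraph ℕ) (S : Finset ℕ)
    (k : ℕ) : Prop :=
  ∃ A : Fin k → Finset ℕ, (∀ i, A i ⊆ S ∧ (A i).card = Fintype.card W) ∧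
    (∀ i j, i ≠ j → Disjoint (A i) (A j)) ∧ ∀ i, Cp F G (A i)

lemma Pack_zero {W : Type} [Fintype W] (F : SimpleGraph W) (G : SimpleGraph ℕ) (S : Finset ℕ) :
    Pack F G S 0 := ⟨fun i => i.elim0, fun i => i.elim0, fun i => i.elim0, fun i => i.elim0⟩

lemma Pack_one_of_Cp {W : Type} [Fintype W] {F : SimpleGraph W} {G : SimpleGraph ℕ}
    {S : Finset ℕ} (h : Cp F G S) :
    ∃ A : Finset ℕ, A ⊆ S ∧ A.card = Fintype.card W ∧ Cp F G A := by
  classical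
  obtain ⟨f, f1, f2, f3⟩ := h
  refine ⟨Finset.univ.image f, ?_, ?_, f, f1, fun x => Finset.mem_image_of_mem _ (Finset.mem_univ _), f3⟩
  · intro x hx
    obtain ⟨y, -, rfl⟩ := Finset.mem_image.1 hx
    exact f2 y
  · rw [Finset.card_image_of_injective _ f1, Finset.card_univ]

lemma Pack.extend {W : Type} [Fintype W] {F : SimpleGraph W} {G : SimpleGraph ℕ}
    {S : Finset ℕ} {k : ℕ} (h : Pack F G S k) :
    ∃ U ⊆ S, U.card ≤ k * Fintype.card W ∧
      ∀ S', S ⊆ S' → Cp F G (S' \ U) → Pack F G S' (k + 1) := by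
  classical
  obtain ⟨A, A1, A2, A3⟩ := h
  refine ⟨Finset.univ.biUnion A, ?_, ?_, ?_⟩
  · intro x hx
    obtain ⟨i, -, hi⟩ := Finset.mem_biUnion.1 hx
    exact (A1 i).1 hi
  · refine Finset.card_biUnion_le.trans ?_
    rw [Finset.sum_congr rfl fun i _ => (A1 i).2]
    simp
  · intro S' hS hC
    obtain ⟨B, B1, B2, B3⟩ := Pack_one_of_Cp hC
    have hd : ∀ i, Disjoint B (A i) := by
      intro i
      rw [Finset.disjoint_left]
      intro x hx hx'
      exact (Finset.mem_sdiff.1 (B1 hx)).2 (Finset.mem_biUnion.2 ⟨i, Finset.mem_univ _, hx'⟩)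
    refine ⟨Fin.cons B A, ?_, ?_, ?_⟩
    · intro i
      refine Fin.cases ?_ (fun i => ?_) i
      · exact ⟨B1.trans Finset.sdiff_subset, B2⟩
      · exact ⟨(A1 i).1.trans hS, (A1 i).2⟩
    · intro i j
      refine Fin.cases ?_ (fun i => ?_) i <;> refine Fin.cases ?_ (fun j => ?_) j
      · simp
      · intro _; simpa using hd j
      · intro _; simpa using (hd i).symm
      · intro hij
        simpa using A2 i j (fun h => hij (by rw [h]))
    · intro i
      refine Fin.cases ?_ (fun i => ?_) i
      · exact B3
      · exact A3 i

lemma Pack_max {W : Type} [Fintype W] {F : SimpleGraph W} {G : SimpleGraph ℕ}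
    {S : Finset ℕ} (k : ℕ) (h : ¬ Pack F G S (k + 1)) :
    ∃ j ≤ k, Pack F G S j ∧ ¬ Pack F G S (j + 1) := by
  induction k with
  | zero => exact ⟨0, le_rfl, Pack_zero _ _ _, h⟩
  | succ k ih =>
    by_cases hk : Pack F G S (k + 1)
    · exact ⟨k + 1, le_rfl, hk, h⟩
    · obtain ⟨j, hj, h1⟩ := ih hk
      exact ⟨j, hj.trans (Nat.le_succ _), h1⟩

lemma arith_A {r m N τ u n n' E E' ε' c : ℝ} (a T : ℝ) (hm : 1 ≤ m)
    (ha0 : 0 ≤ a) (ha1 : a ≤ 1) (hτ : τ ≤ c * N) (hτ0 : 1 ≤ τ)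
    (hn : n = N + τ) (hu0 : 0 ≤ u) (hu : u ≤ m * τ) (hn' : n' = n - u)
    (hN : 0 < N) (hε' : 0 < ε') (hc0 : 0 < c) (hc : c * (8 * (3 + 4 * m)) ≤ ε') (hc1 : c * (2 * m) ≤ 1)
    (hNr : 8 * (r * (r + 1)) ≤ ε' * N ^ 2) (hT : a * N ^ 2 - r * (r + 1) ≤ T)
    (hE : τ * τ + 2 * τ * N + T ≤ E + τ) (hEE : E ≤ E' + 2 * (u * n)) :
    (a - ε') * n' ^ 2 ≤ E' := by
  have hc2 : c ≤ 1 := by nlinarith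
  have h1 : m * τ ≤ m * (c * N) := by gcongr
  have hun : u ≤ m * c * N := by linarith
  have h2 : u ≤ N / 2 := by nlinarith
  have hτN : τ ≤ N := by nlinarith
  have h3 : N / 2 ≤ n' := by linarith
  have hn0 : n' ≤ n := by linarith
  have hnN : n ≤ 2 * N := by linarith
  have hn'0 : 0 ≤ n' := by linarith
  have h4 : a * n' ^ 2 ≤ a * n ^ 2 := by gcongr
  have h5 : n ^ 2 ≤ N ^ 2 + 3 * c * N ^ 2 := by rw [hn]; nlinarith
  have h6 : a * n ^ 2 ≤ a * N ^ 2 + 3 * c * N ^ 2 := by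
    have : a * (3 * c * N ^ 2) ≤ 1 * (3 * c * N ^ 2) := by gcongr
    nlinarith
  have h7 : u * n ≤ (m * c * N) * (2 * N) := by gcongr; linarith
  have h8 : (N / 2) ^ 2 ≤ n' ^ 2 := by gcongr
  have h9 : ε' * (N / 2) ^ 2 ≤ ε' * n' ^ 2 := by gcongr
  have h10 : c * (8 * (3 + 4 * m)) * N ^ 2 ≤ ε' * N ^ 2 := by gcongr
  have h11 : 0 ≤ τ * τ + 2 * τ * N - τ := by nlinarith
  nlinarith

set_option maxHeartbeats 1000000 in
lemma arith_B {r m N τ u n E E' ε c : ℝ} (a T : ℝ) (hr : 1 ≤ r) (hm : 1 ≤ m)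
    (ha : a = 1 - 1 / (r + 1)) (hτ : τ ≤ c * N) (hτ0 : 1 ≤ τ)
    (hn : n = N + τ) (hu0 : 0 ≤ u) (hu : u ≤ m * τ)
    (hN : (r + 1) * (1 + r * (r + 1)) < N) (hε : ε = 1 / (4 * m * (r + 1)))
    (hc : c * (4 * (r + 1) * (m ^ 2 + 1)) ≤ 1)
    (hT : a * N ^ 2 - r * (r + 1) ≤ T)
    (hE : τ * τ + 2 * τ * N + T ≤ E + τ) (hE' : E' ≤ a * (n - u) ^ 2)
    (hEE : E ≤ E' + 2 * (u * ((a + ε) * n))) : False := by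
  have hr1 : 0 < r + 1 := by linarith
  set ℓ := r + 1 with hℓ
  have ha1 : a ≤ 1 := by rw [ha]; have : 0 ≤ 1 / ℓ := by positivity
                         linarith
  have hr0 : 0 < r := by linarith
  have hN0 : 0 < N := lt_of_le_of_lt (by positivity) hN
  have hn0 : 0 ≤ n := by linarith
  have hε0 : 0 ≤ ε := by rw [hε]; positivity
  have h1 : E ≤ a * n ^ 2 + a * u ^ 2 + 2 * ε * n * u := by nlinarith
  have h2 : a * u ^ 2 ≤ m ^ 2 * τ ^ 2 := by
    have : u ^ 2 ≤ (m * τ) ^ 2 := by gcongr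
    nlinarith [sq_nonneg u]
  have h3 : 2 * ε * n * u ≤ 2 * ε * n * (m * τ) := by gcongr
  have h4 : 2 * ε * n * (m * τ) = τ * n / (2 * ℓ) := by rw [hε]; field_simp; ring
  have h5 : a * n ^ 2 ≤ a * N ^ 2 + 2 * N * τ - 2 * (N * τ / ℓ) + τ ^ 2 := by
    have e : a * n ^ 2 = a * N ^ 2 + 2 * N * τ - 2 * (N * τ / ℓ) + a * τ ^ 2 := by
      rw [hn, ha]; field_simp; ring
    nlinarith [sq_nonneg τ]
  have h6 : τ * n / (2 * ℓ) ≤ (1 / 2) * (N * τ / ℓ) + τ ^ 2 := by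
    have e : τ * n / (2 * ℓ) = (1 / 2) * (N * τ / ℓ) + τ ^ 2 * (1 / (2 * ℓ)) := by
      rw [hn]; field_simp
    have : 1 / (2 * ℓ) ≤ 1 := by rw [div_le_one (by positivity)]; linarith
    nlinarith [sq_nonneg τ]
  have h7 : (3 / 2) * (N * τ / ℓ) ≤ τ + r * ℓ + (m ^ 2 + 1) * τ ^ 2 := by linarith
  have h8 : (m ^ 2 + 1) * τ ^ 2 ≤ (m ^ 2 + 1) * (τ * (c * N)) := by
    have : τ ^ 2 ≤ τ * (c * N) := by nlinarith
    gcongr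
  have h9 : (m ^ 2 + 1) * (τ * (c * N)) ≤ (1 / 4) * (N * τ / ℓ) := by
    have e : (1 / 4) * (N * τ / ℓ) = N * τ * (1 / (4 * ℓ)) := by field_simp
    have : (m ^ 2 + 1) * c ≤ 1 / (4 * ℓ) := by
      rw [le_div_iff₀ (by positivity)]; linarith
    rw [e]
    have h : N * τ * ((m ^ 2 + 1) * c) ≤ N * τ * (1 / (4 * ℓ)) := by gcongr
    linarith
  have h10 : r * ℓ ≤ r * ℓ * τ := by exact le_mul_of_one_le_right (by positivity) hτ0
  have h11 : N * τ / ℓ = τ * (N / ℓ) := by ring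
  have h12 : 1 + r * ℓ < N / ℓ := by rw [lt_div_iff₀ hr1]; linarith
  have h13 : τ * (1 + r * ℓ) < τ * (N / ℓ) :=
    mul_lt_mul_of_pos_left h12 (by linarith)
  rw [h11] at h7 h9
  have h14 : 0 < τ * (N / ℓ) := mul_pos (by linarith) (by positivity)
  linarith



lemma struct_bound {r : ℕ} {G : SimpleGraph ℕ} [DecidableRel G.Adj] {S Q : Finset ℕ} {t N : ℕ}
    (hQ : Q ⊆ S) (hQt : Q.card = t) (hS : S.card = N + t)
    (h : ¬ Cp (⊤ : SimpleGraph (Fin (r + 2))) G (S \ Q)) :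
    E2 G S + t ≤ t * t + 2 * t * N + 2 * Tn r N := by
  have hd : Disjoint Q (S \ Q) := Finset.disjoint_sdiff
  have h1 := E2_union (G := G) hd
  rw [Finset.union_sdiff_of_subset hQ] at h1
  have hc : (S \ Q).card = N := by rw [Finset.card_sdiff_of_subset hQ]; omega
  have h2 := turan_bound h
  rw [hc] at h2
  have h3 : ∑ v ∈ Q, dg G (S \ Q) v ≤ t * N := by
    calc _ ≤ ∑ v ∈ Q, N := Finset.sum_le_sum fun v _ => (dg_le _ v).trans hc.le
      _ = _ := by simp [hQt]
  have h4 : E2 G Q + t ≤ t * t := by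
    unfold E2
    calc _ = ∑ v ∈ Q, (dg G Q v + 1) := by rw [Finset.sum_add_distrib]; simp [hQt]
      _ ≤ ∑ v ∈ Q, t := Finset.sum_le_sum fun v hv => by
          have := dg_lt (G := G) hv
          omega
      _ = _ := by simp [hQt]
  nlinarith

lemma adj_of_dg {G : SimpleGraph ℕ} [DecidableRel G.Adj] {S : Finset ℕ} {v : ℕ} (hv : v ∈ S)
    (h : S.card ≤ dg G S v + 1) : ∀ x ∈ S, x ≠ v → G.Adj v x := by
  intro x hx hxv
  have h1 : S.filter (G.Adj v) ⊆ S.erase v := by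
    intro y hy
    rw [Finset.mem_filter] at hy
    exact Finset.mem_erase.2 ⟨hy.2.ne', hy.1⟩
  have h2 : S.filter (G.Adj v) = S.erase v := by
    apply Finset.eq_of_subset_of_card_le h1
    rw [Finset.card_erase_of_mem hv]
    unfold dg at h
    omega
  have : x ∈ S.filter (G.Adj v) := by rw [h2]; exact Finset.mem_erase.2 ⟨hxv, hx⟩
  exact (Finset.mem_filter.1 this).2

set_option maxHeartbeats 1000000 in
theorem main_induction {W : Type} [Fintype W] {F : SimpleGraph W} {r : ℕ} (hr : 1 ≤ r)
    (hF : IsCrit F (r + 1)) :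
    ∃ c : ℝ, 0 < c ∧ ∃ N₀ : ℕ, ∀ N, N₀ ≤ N → ∀ t : ℕ, (t : ℝ) ≤ c * N →
      ∀ (G : SimpleGraph ℕ) [DecidableRel G.Adj] (S : Finset ℕ), S.card = N + t →
      ¬ Pack F G S (t + 1) → t * t + 2 * t * N + 2 * Tn r N ≤ E2 G S + t →
      ∃ Q ⊆ S, Q.card = t ∧ (∀ q ∈ Q, ∀ x ∈ S, x ≠ q → G.Adj q x) ∧
        ¬ Cp (⊤ : SimpleGraph (Fin (r + 2))) G (S \ Q) ∧ 2 * Tn r N ≤ E2 G (S \ Q) := by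
  classical
  have hrR : (1 : ℝ) ≤ r := by exact_mod_cast hr
  have hm : 1 ≤ Fintype.card W := by
    obtain ⟨_, a, _⟩ := hF
    exact Fintype.card_pos_iff.2 ⟨a⟩
  set m : ℝ := (Fintype.card W : ℝ) with hmd
  have hmR : (1 : ℝ) ≤ m := by rw [hmd]; exact_mod_cast hm
  obtain ⟨N₁, hN₁⟩ := simonovits hr hF
  obtain ⟨ε, hε⟩ : ∃ ε : ℝ, ε = 1 / (4 * m * ((r : ℝ) + 1)) := ⟨_, rfl⟩
  have hε0 : 0 < ε := by rw [hε]; positivity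
  obtain ⟨ε', hε', N₂, hN₂⟩ := bounded_degree hr hF (half_pos hε0)
  obtain ⟨a, ha⟩ : ∃ a : ℝ, a = 1 - 1 / ((r : ℝ) + 1) := ⟨_, rfl⟩
  have ha1 : a ≤ 1 := by
    have : 0 ≤ 1 / ((r : ℝ) + 1) := by positivity
    linarith
  have ha0 : 0 ≤ a := by
    have : 1 / ((r : ℝ) + 1) ≤ 1 := by rw [div_le_one (by positivity)]; linarith
    linarith
  obtain ⟨c, hc0, hc1, hc2, hc3, hc4⟩ : ∃ c : ℝ, 0 < c ∧ c * (8 * (3 + 4 * m)) ≤ ε' ∧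
      c * (2 * m) ≤ 1 ∧ c * (4 * ((r : ℝ) + 1) * (m ^ 2 + 1)) ≤ 1 ∧ c * m ≤ ε / 2 := by
    refine ⟨min (min (ε' / (8 * (3 + 4 * m))) (1 / (2 * m)))
      (min (1 / (4 * ((r : ℝ) + 1) * (m ^ 2 + 1))) (ε / 2 / m)), by positivity, ?_, ?_, ?_, ?_⟩
    · rw [← le_div_iff₀ (by positivity)]
      exact (min_le_left _ _).trans (min_le_left _ _)
    · rw [← le_div_iff₀ (by positivity)]
      exact (min_le_left _ _).trans (min_le_right _ _)
    · rw [← le_div_iff₀ (by positivity)]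
      exact (min_le_right _ _).trans (min_le_left _ _)
    · rw [← le_div_iff₀ (by positivity)]
      exact (min_le_right _ _).trans (min_le_right _ _)
  obtain ⟨N₃, hN₃⟩ := exists_nat_gt (((r : ℝ) + 1) * (1 + r * ((r : ℝ) + 1)))
  obtain ⟨N₄, hN₄⟩ := exists_nat_gt (8 * ((r : ℝ) * (r + 1)) / ε')
  refine ⟨c, hc0, 2 * N₁ + 2 * N₂ + N₃ + N₄ + 1, fun N hN t => ?_⟩
  have hNpos : (1 : ℝ) ≤ N := by exact_mod_cast (by omega : 1 ≤ N)
  have hNr : 8 * ((r : ℝ) * (r + 1)) ≤ ε' * (N : ℝ) ^ 2 := by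
    rw [div_lt_iff₀ hε'] at hN₄
    have : (N₄ : ℝ) ≤ N := by exact_mod_cast (by omega : N₄ ≤ N)
    have h2 : (N : ℝ) ≤ (N : ℝ) ^ 2 := by nlinarith
    nlinarith
  have hNr2 : ((r : ℝ) + 1) * (1 + r * ((r : ℝ) + 1)) < N := by
    have : (N₃ : ℝ) ≤ N := by exact_mod_cast (by omega : N₃ ≤ N)
    linarith
  induction t with
  | zero =>
    intro _ G _ S hS hP hE
    have hfree : ¬ Cp F G S := by
      intro h
      obtain ⟨A, A1, A2, A3⟩ := Pack_one_of_Cp h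
      exact hP ⟨fun _ => A, fun _ => ⟨A1, A2⟩, fun i j h => (h (Fin.ext (by omega))).elim,
        fun _ => A3⟩
    have hE' : 2 * Tn r N ≤ E2 G S := by simpa using hE
    refine ⟨∅, Finset.empty_subset _, rfl, by simp, ?_, by simpa using hE'⟩
    rw [Finset.sdiff_empty]
    simp only [add_zero] at hS
    exact hN₁ G S (by omega) hfree (by rw [hS]; exact hE')
  | succ t ih =>
    intro ht G _ S hS hP hE
    have hτ1 : (1 : ℝ) ≤ ((t + 1 : ℕ) : ℝ) := by exact_mod_cast Nat.succ_pos t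
    have hnR : (S.card : ℝ) = N + ((t + 1 : ℕ) : ℝ) := by exact_mod_cast hS
    have hT := Tn_lower r N
    rw [← ha] at hT
    have hER : ((t + 1 : ℕ) : ℝ) * ((t + 1 : ℕ) : ℝ) + 2 * ((t + 1 : ℕ) : ℝ) * N + 2 * Tn r N ≤
        E2 G S + ((t + 1 : ℕ) : ℝ) := by exact_mod_cast hE
    have hmc : m * ((t + 1 : ℕ) : ℝ) ≤ c * m * N := by
      have : m * ((t + 1 : ℕ) : ℝ) ≤ m * (c * N) := by gcongr
      linarith
    have hhalf : c * m * N ≤ N / 2 := by nlinarith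
    by_cases hbig : ∃ v ∈ S, (a + ε) * S.card ≤ dg G S v
    · obtain ⟨v, hv, hdv⟩ := hbig
      have hScard : (S.erase v).card = N + t := by
        rw [Finset.card_erase_of_mem hv]; omega
      have hP' : ¬ Pack F G (S.erase v) (t + 1) := by
        intro hp
        obtain ⟨U, US, Uc, Uext⟩ := hp.extend
        have hfree : ¬ Cp F G (S \ U) := fun h => hP (Uext S (Finset.erase_subset _ _) h)
        have US' : U ⊆ S := US.trans (Finset.erase_subset _ _)
        have hvU : v ∈ S \ U := Finset.mem_sdiff.2 ⟨hv, fun h => by simpa using US h⟩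
        have hcard : ((S \ U).card : ℝ) = S.card - U.card := by
          rw [Finset.card_sdiff_of_subset US', Nat.cast_sub (Finset.card_le_card US')]
        have hu : (U.card : ℝ) ≤ m * ((t + 1 : ℕ) : ℝ) := by
          rw [hmd]; rw [mul_comm]; exact_mod_cast Uc
        have hEE : (E2 G S : ℝ) ≤ E2 G (S \ U) + 2 * ((U.card : ℝ) * S.card) := by
          have h1 := E2_sdiff (G := G) US'
          have h2 : ∑ u ∈ U, dg G S u ≤ U.card * S.card := by
            calc _ ≤ ∑ u ∈ U, S.card := Finset.sum_le_sum fun u _ => dg_le _ u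
              _ = _ := by simp
          have h3 : E2 G S ≤ E2 G (S \ U) + 2 * (U.card * S.card) := by omega
          exact_mod_cast h3
        have key := arith_A a (2 * Tn r N) hmR ha0 ha1 ht hτ1 hnR
          (Nat.cast_nonneg U.card) hu hcard (by linarith) hε' hc0 hc1 hc2 hNr hT hER hEE
        rw [ha] at key
        have hbd := hN₂ G (S \ U) (by
          have : (N₂ : ℝ) ≤ (S \ U).card := by
            have h5 : (2 * N₂ : ℝ) ≤ N := by exact_mod_cast (by omega : 2 * N₂ ≤ N)
            rw [hcard]; linarith
          exact_mod_cast this) key hfree v hvU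
        rw [← ha, hcard] at hbd
        have h6 : (dg G S v : ℝ) ≤ dg G (S \ U) v + U.card := by exact_mod_cast dg_sdiff v
        have h7 : (U.card : ℝ) ≤ ε / 2 * S.card := by
          have : c * m * N ≤ ε / 2 * N := by gcongr
          have : ε / 2 * N ≤ ε / 2 * S.card := by gcongr; linarith
          linarith
        have h8 : (a + ε / 2) * ((S.card : ℝ) - U.card) ≤ (a + ε / 2) * S.card := by
          gcongr
          simp
        linarith
      have hEr := E2_erase (G := G) hv
      have hdl := dg_lt (G := G) hv
      have hid : (t + 1) * (t + 1) + 2 * (t + 1) * N = t * t + 2 * t * N + (2 * t + 1 + 2 * N) := by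
        ring
      rw [hid] at hE
      have hE' : t * t + 2 * t * N + 2 * Tn r N ≤ E2 G (S.erase v) + t := by
        omega
      obtain ⟨Q, QS, Qc, Qadj, Qfree, QE⟩ := ih (by push_cast at ht; linarith) G (S.erase v) hScard hP' hE'
      have hub := struct_bound QS Qc hScard Qfree
      have hvQ : v ∉ Q := fun h => by simpa using QS h
      have hfull : S.card ≤ dg G S v + 1 := by omega
      have hvadj := adj_of_dg hv hfull
      have hSQ : S \ insert v Q = S.erase v \ Q := by
        
        ext x
        simp only [Finset.mem_sdiff, Finset.mem_insert, Finset.mem_erase, not_or]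
        exact ⟨fun h => ⟨⟨h.2.1, h.1⟩, h.2.2⟩, fun h => ⟨h.1.2, h.1.1, h.2⟩⟩
      refine ⟨insert v Q, ?_, ?_, ?_, ?_, ?_⟩
      · intro x hx
        rcases Finset.mem_insert.1 hx with rfl | hx
        · exact hv
        · exact Finset.mem_of_mem_erase (QS hx)
      · rw [Finset.card_insert_of_notMem hvQ, Qc]
      · intro q hq x hx hxq
        rcases Finset.mem_insert.1 hq with rfl | hq2
        · exact hvadj x hx hxq
        · by_cases hxv : x = v
          · subst hxv
            exact (hvadj q (Finset.mem_of_mem_erase (QS hq2)) hxq.symm).symm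
          · exact Qadj q hq2 x (Finset.mem_erase.2 ⟨hxv, hx⟩) hxq
      · rw [hSQ]; exact Qfree
      · rw [hSQ]; exact QE
    · push Not at hbig
      exfalso
      obtain ⟨k, hk, hPk, hPk'⟩ := Pack_max _ hP
      obtain ⟨U, US, Uc, Uext⟩ := hPk.extend
      have hfree : ¬ Cp F G (S \ U) := fun h => hPk' (Uext S subset_rfl h)
      have hcard : ((S \ U).card : ℝ) = S.card - U.card := by
        rw [Finset.card_sdiff_of_subset US, Nat.cast_sub (Finset.card_le_card US)]
      have hu : (U.card : ℝ) ≤ m * ((t + 1 : ℕ) : ℝ) := by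
        rw [hmd]; rw [mul_comm]
        exact_mod_cast Uc.trans (Nat.mul_le_mul_right _ hk)
      have hN1 : N₁ ≤ (S \ U).card := by
        have : (N₁ : ℝ) ≤ (S \ U).card := by
          have h5 : (2 * N₁ : ℝ) ≤ N := by exact_mod_cast (by omega : 2 * N₁ ≤ N)
          rw [hcard]; linarith
        exact_mod_cast this
      have hEU : E2 G (S \ U) ≤ 2 * Tn r (S \ U).card := by
        by_contra hcon
        push Not at hcon
        exact absurd (turan_bound (hN₁ G (S \ U) hN1 hfree hcon.le)) (by omega)
      have hEU' : (E2 G (S \ U) : ℝ) ≤ a * ((S.card : ℝ) - U.card) ^ 2 := by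
        have h1 := Tn_upper r (S \ U).card
        rw [← ha, hcard] at h1
        have h2 : (E2 G (S \ U) : ℝ) ≤ 2 * Tn r (S \ U).card := by exact_mod_cast hEU
        linarith
      have hEE : (E2 G S : ℝ) ≤ E2 G (S \ U) + 2 * ((U.card : ℝ) * ((a + ε) * S.card)) := by
        have h1 := E2_sdiff (G := G) US
        have h1' : (E2 G S : ℝ) ≤ E2 G (S \ U) + 2 * ∑ u ∈ U, (dg G S u : ℝ) := by
          exact_mod_cast h1
        have h2 : ∑ u ∈ U, (dg G S u : ℝ) ≤ U.card * ((a + ε) * S.card) := by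
          calc _ ≤ ∑ u ∈ U, ((a + ε) * S.card) :=
                Finset.sum_le_sum fun u hu => (hbig u (US hu)).le
            _ = _ := by simp
        linarith
      exact arith_B a (2 * Tn r N) hrR hmR ha ht hτ1 hnR (Nat.cast_nonneg U.card) hu hNr2 hε hc3
        hT hER hEU' hEE


/-! ## Part 8: translation between `HGraph 2` and `SimpleGraph` -/

/-- The simple graph of a `2`-graph. -/
def gr (H : HGraph 2) : SimpleGraph ℕ where
  Adj u v := u ≠ v ∧ ({u, v} : Finset ℕ) ∈ H.edges
  symm := ⟨fun u v h => ⟨h.1.symm, by rw [Finset.pair_comm]; exact h.2⟩⟩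
  loopless := ⟨fun u h => h.1 rfl⟩

instance (H : HGraph 2) : DecidableRel (gr H).Adj := fun u v =>
  inferInstanceAs (Decidable (u ≠ v ∧ ({u, v} : Finset ℕ) ∈ H.edges))

/-- The simple graph on the vertex subtype. -/
def Fs (F : HGraph 2) : SimpleGraph {x // x ∈ F.verts} := (gr F).comap Subtype.val

lemma gr_mem {H : HGraph 2} {u v : ℕ} (h : (gr H).Adj u v) : u ∈ H.verts ∧ v ∈ H.verts :=
  ⟨H.edges_sub _ h.2 (by simp), H.edges_sub _ h.2 (by simp)⟩

lemma edge_pair {H : HGraph 2} {e : Finset ℕ} (he : e ∈ H.edges) :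
    ∃ u v, u ≠ v ∧ e = {u, v} ∧ u ∈ H.verts ∧ v ∈ H.verts ∧ (gr H).Adj u v := by
  obtain ⟨u, v, huv, rfl⟩ := Finset.card_eq_two.1 (H.edges_card e he)
  have h := H.edges_sub _ he
  exact ⟨u, v, huv, rfl, h (by simp), h (by simp), huv, he⟩

lemma dg_gr (H : HGraph 2) (v : ℕ) :
    dg (gr H) H.verts v = (H.edges.filter fun e => v ∈ e).card := by
  unfold dg
  refine Finset.card_bij (fun w _ => {v, w}) ?_ ?_ ?_
  · intro w hw
    have := (Finset.mem_filter.1 hw).2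
    exact Finset.mem_filter.2 ⟨this.2, by simp⟩
  · intro w hw w' hw' h
    have h1 := (Finset.mem_filter.1 hw).2.1
    have h2 := (Finset.mem_filter.1 hw').2.1
    have h3 : w ∈ ({v, w'} : Finset ℕ) := by rw [← h]; simp
    simp only [Finset.mem_insert, Finset.mem_singleton] at h3
    rcases h3 with h3 | h3
    · exact absurd h3.symm h1
    · exact h3
  · intro e he
    obtain ⟨he, hv⟩ := Finset.mem_filter.1 he
    obtain ⟨x, y, hxy, rfl, hx, hy, ha⟩ := edge_pair he
    simp only [Finset.mem_insert, Finset.mem_singleton] at hv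
    rcases hv with rfl | rfl
    · exact ⟨y, Finset.mem_filter.2 ⟨hy, ha⟩, rfl⟩
    · exact ⟨x, Finset.mem_filter.2 ⟨hx, ha.symm⟩, Finset.pair_comm _ _⟩

lemma E2_gr (H : HGraph 2) : E2 (gr H) H.verts = 2 * H.edges.card := by
  unfold E2
  rw [Finset.sum_congr rfl fun v _ => dg_gr H v]
  have := Finset.sum_card_bipartiteAbove_eq_sum_card_bipartiteBelow (s := H.verts)
    (t := H.edges) (fun v e => v ∈ e)
  unfold Finset.bipartiteAbove Finset.bipartiteBelow at this
  rw [this]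
  rw [Finset.sum_congr rfl (g := fun _ => 2)]
  · simp [mul_comm]
  · intro e he
    refine Eq.trans (congrArg Finset.card ?_) (H.edges_card e he)
    ext x
    simp only [Finset.mem_filter, and_iff_right_iff_imp]
    exact fun h => H.edges_sub e he h

lemma isCopyIn_iff (F H : HGraph 2) : F.IsCopyIn H ↔ Cp (Fs F) (gr H) H.verts := by
  constructor
  · rintro ⟨f, f1, f2, f3⟩
    have inj : Function.Injective (fun x : {x // x ∈ F.verts} => f x.1) :=
      fun x y h => Subtype.ext (f1 x.2 y.2 h)
    refine ⟨fun x => f x.1, inj, fun x => f2 _ x.2, fun x y h => ⟨?_, ?_⟩⟩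
    · exact fun h' => h.ne (inj h')
    · have := f3 _ h.2
      simpa [Finset.image_insert] using this
  · rintro ⟨g, g1, g2, g3⟩
    refine ⟨fun n => if h : n ∈ F.verts then g ⟨n, h⟩ else 0, ?_, ?_, ?_⟩
    · intro x hx y hy h
      have hx' : x ∈ F.verts := hx
      have hy' : y ∈ F.verts := hy
      simp only [hx', hy', dif_pos] at h
      exact congrArg Subtype.val (g1 h)
    · intro v hv
      simp only [hv, dif_pos]
      exact g2 _
    · intro e he
      obtain ⟨u, v, huv, rfl, hu, hv, ha⟩ := edge_pair he
      have := (g3 ⟨u, hu⟩ ⟨v, hv⟩ ha).2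
      simpa [Finset.image_insert, hu, hv] using this

lemma induce_gr {H : HGraph 2} {A : Finset ℕ} (u v : ℕ) (hu : u ∈ A) (hv : v ∈ A) :
    (gr (H.induce A)).Adj u v ↔ (gr H).Adj u v := by
  constructor
  · rintro ⟨h1, h2⟩
    refine ⟨h1, ?_⟩
    have := (Finset.mem_filter.1 h2).1
    exact (Finset.mem_filter.1 this).1
  · intro h
    have hm := gr_mem h
    have hA : ({u, v} : Finset ℕ) ⊆ A := by
      intro x hx
      simp only [Finset.mem_insert, Finset.mem_singleton] at hx
      rcases hx with rfl | rfl <;> assumption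
    refine ⟨h.1, Finset.mem_filter.2 ⟨Finset.mem_filter.2 ⟨h.2, hA⟩, ?_, H.edges_card _ h.2⟩⟩
    exact Finset.subset_inter (H.edges_sub _ h.2) hA

lemma hasMatching_iff (F H : HGraph 2) (k : ℕ) :
    F.HasMatching H k ↔ Pack (Fs F) (gr H) H.verts k := by
  unfold HGraph.HasMatching Pack
  simp only [Fintype.card_coe]
  refine exists_congr fun A => and_congr_right fun hA => and_congr_right fun _ =>
    forall_congr' fun i => ?_
  rw [isCopyIn_iff]
  have hv : (H.induce (A i)).verts = A i := Finset.inter_eq_right.2 (hA i).1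
  rw [hv]
  unfold Cp
  refine exists_congr fun f => and_congr_right fun _ => and_congr_right fun hf =>
    forall_congr' fun x => forall_congr' fun y => imp_congr_right fun _ => ?_
  exact induce_gr _ _ (hf x) (hf y)

lemma Pack.map {W : Type} [Fintype W] {F : SimpleGraph W} {G G' : SimpleGraph ℕ}
    {S S' : Finset ℕ} {k : ℕ} (h : Pack F G S k) (f : ℕ → ℕ) (hf : Set.InjOn f ↑S)
    (hS : ∀ x ∈ S, f x ∈ S') (hadj : ∀ x ∈ S, ∀ y ∈ S, G.Adj x y → G'.Adj (f x) (f y)) :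
    Pack F G' S' k := by
  obtain ⟨A, A1, A2, A3⟩ := h
  refine ⟨fun i => (A i).image f, ?_, ?_, ?_⟩
  · intro i
    refine ⟨?_, ?_⟩
    · intro x hx
      obtain ⟨y, hy, rfl⟩ := Finset.mem_image.1 hx
      exact hS y ((A1 i).1 hy)
    · rw [Finset.card_image_of_injOn, (A1 i).2]
      exact hf.mono (by exact_mod_cast (A1 i).1)
  · intro i j hij
    rw [Finset.disjoint_left]
    intro x hx hx'
    obtain ⟨y, hy, rfl⟩ := Finset.mem_image.1 hx
    obtain ⟨z, hz, hzy⟩ := Finset.mem_image.1 hx'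
    have : z = y := hf ((A1 j).1 hz) ((A1 i).1 hy) hzy
    subst this
    exact Finset.disjoint_left.1 (A2 i j hij) hy hz
  · intro i
    obtain ⟨g, g1, g2, g3⟩ := A3 i
    refine ⟨fun x => f (g x), fun x y h => ?_, fun x => Finset.mem_image_of_mem _ (g2 x), ?_⟩
    · exact g1 (hf ((A1 i).1 (g2 x)) ((A1 i).1 (g2 y)) h)
    · intro x y h
      exact hadj _ ((A1 i).1 (g2 x)) _ ((A1 i).1 (g2 y)) (g3 x y h)

/-- Isomorphism in terms of adjacency. -/
lemma iso_iff (H J : HGraph 2) : H.Iso J ↔ ∃ f : ℕ → ℕ, Set.BijOn f ↑H.verts ↑J.verts ∧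
    ∀ u ∈ H.verts, ∀ v ∈ H.verts, u ≠ v → ((gr H).Adj u v ↔ (gr J).Adj (f u) (f v)) := by
  unfold HGraph.Iso
  refine exists_congr fun f => and_congr_right fun hf => ⟨fun h u hu v hv huv => ?_, fun h e he => ?_⟩
  · have hm : ({u, v} : Finset ℕ) ∈ Finset.powersetCard 2 H.verts := by
      rw [Finset.mem_powersetCard]
      refine ⟨?_, Finset.card_pair huv⟩
      intro x hx
      simp only [Finset.mem_insert, Finset.mem_singleton] at hx
      rcases hx with rfl | rfl <;> assumption
    have h1 := h _ hm
    have h2 : f u ≠ f v := fun h' => huv (hf.injOn hu hv h')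
    simp only [Finset.image_insert, Finset.image_singleton] at h1
    exact ⟨fun h' => ⟨h2, h1.1 h'.2⟩, fun h' => ⟨huv, h1.2 h'.2⟩⟩
  · rw [Finset.mem_powersetCard] at he
    obtain ⟨he1, he2⟩ := he
    obtain ⟨u, v, huv, rfl⟩ := Finset.card_eq_two.1 he2
    have hu : u ∈ H.verts := he1 (by simp)
    have hv : v ∈ H.verts := he1 (by simp)
    have h1 := h u hu v hv huv
    simp only [Finset.image_insert, Finset.image_singleton]
    exact ⟨fun h' => (h1.1 ⟨huv, h'⟩).2, fun h' => (h1.2 ⟨fun h2 => huv (hf.injOn hu hv h2), h'⟩).2⟩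

lemma iso_verts {H J : HGraph 2} (h : H.Iso J) : H.verts.card = J.verts.card := by
  obtain ⟨f, hf, -⟩ := h
  exact Finset.card_nbij f hf.mapsTo hf.injOn hf.surjOn

lemma iso_pack {H J : HGraph 2} (h : H.Iso J) {F : HGraph 2} {k : ℕ} (hp : F.HasMatching H k) :
    F.HasMatching J k := by
  rw [hasMatching_iff] at hp ⊢
  rw [iso_iff] at h
  obtain ⟨f, hf, h⟩ := h
  exact hp.map f hf.injOn (fun x hx => hf.mapsTo hx) fun x hx y hy ha => (h x hx y hy ha.ne).1 ha

lemma iso_edges {H J : HGraph 2} (h : H.Iso J) : H.edges.card = J.edges.card := by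
  rw [iso_iff] at h
  obtain ⟨f, hf, h⟩ := h
  have h1 : E2 (gr H) H.verts = E2 (gr J) J.verts := by
    rw [E2_eq, E2_eq]
    refine Finset.sum_nbij f hf.mapsTo hf.injOn hf.surjOn fun u hu => ?_
    refine Finset.sum_nbij f hf.mapsTo hf.injOn hf.surjOn fun v hv => ?_
    by_cases huv : u = v
    · subst huv; simp
    · simp only [h u hu v hv huv]
  rw [E2_gr, E2_gr] at h1
  omega


/-! ## Part 9: the extremal construction and the final argument -/

lemma not_colorable {F : HGraph 2} {k : ℕ} (hk : k < chrom F) (c : ℕ → ℕ)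
    (hc : ∀ v ∈ F.verts, c v < k)
    (h : ∀ e ∈ F.edges, ∀ u ∈ e, ∀ v ∈ e, u ≠ v → c u ≠ c v) : False :=
  Nat.notMem_of_lt_sInf hk ⟨c, hc, h⟩

lemma crit_of_edgeCritical {F : HGraph 2} (hF : EdgeCritical F) (h3 : 3 ≤ chrom F) {ℓ : ℕ}
    (hℓ : ℓ + 1 = chrom F) : IsCrit (Fs F) ℓ := by
  obtain ⟨e, he, hlt⟩ := hF
  obtain ⟨a, b, hab, rfl, ha, hb, hadj⟩ := edge_pair he
  set F' := HGraph.ofEdges 2 F.verts (F.edges.erase {a, b}) with hF'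
  have hne : {k | ∃ c : ℕ → ℕ, (∀ v ∈ F.verts, c v < k) ∧
      ∀ e ∈ F.edges, ∀ u ∈ e, ∀ v ∈ e, u ≠ v → c u ≠ c v}.Nonempty :=
    Nat.nonempty_of_pos_sInf (show 0 < chrom F by omega)
  have hne' : {k | ∃ c : ℕ → ℕ, (∀ v ∈ F'.verts, c v < k) ∧
      ∀ e ∈ F'.edges, ∀ u ∈ e, ∀ v ∈ e, u ≠ v → c u ≠ c v}.Nonempty := by
    obtain ⟨k, c, h1, h2⟩ := hne
    refine ⟨k, c, h1, fun e he => h2 e ?_⟩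
    exact Finset.mem_of_mem_erase (Finset.mem_filter.1 he).1
  obtain ⟨c, c1, c2⟩ := Nat.sInf_mem hne'
  change ∀ v ∈ F'.verts, c v < chrom F' at c1
  have c2' : ∀ u v, (gr F).Adj u v → ({u, v} : Finset ℕ) ≠ {a, b} → c u ≠ c v := by
    intro u v huv hne2
    refine c2 {u, v} ?_ u (by simp) v (by simp) huv.1
    exact Finset.mem_filter.2 ⟨Finset.mem_erase.2 ⟨hne2, huv.2⟩, F.edges_sub _ huv.2,
      F.edges_card _ huv.2⟩
  have hcab : c a = c b := by
    by_contra hcab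
    refine not_colorable hlt c c1 ?_
    intro e he u hu v hv huv
    obtain ⟨x, y, hxy, rfl, hx, hy, hxya⟩ := edge_pair he
    have hcxy : c x ≠ c y := by
      by_cases h : ({x, y} : Finset ℕ) = {a, b}
      · have hx' : x ∈ ({a, b} : Finset ℕ) := by rw [← h]; simp
        have hy' : y ∈ ({a, b} : Finset ℕ) := by rw [← h]; simp
        simp only [Finset.mem_insert, Finset.mem_singleton] at hx' hy'
        rcases hx' with rfl | rfl <;> rcases hy' with rfl | rfl
        · exact absurd rfl hxy
        · exact hcab
        · exact fun h => hcab h.symm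
        · exact absurd rfl hxy
      · exact c2' x y hxya h
    simp only [Finset.mem_insert, Finset.mem_singleton] at hu hv
    rcases hu with rfl | rfl <;> rcases hv with rfl | rfl
    · exact absurd rfl huv
    · exact hcxy
    · exact hcxy.symm
    · exact absurd rfl huv
  refine ⟨fun x => ⟨c x.1, ?_⟩, ⟨a, ha⟩, ⟨b, hb⟩, hadj, ?_, ?_⟩
  · have := c1 x.1 x.2
    omega
  · simpa using hcab
  · intro x y hxy h
    have h' : c x.1 = c y.1 := by simpa using h
    have h2 : ({x.1, y.1} : Finset ℕ) = {a, b} := by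
      by_contra h3
      exact c2' _ _ hxy h3 h'
    have hx' : x.1 ∈ ({a, b} : Finset ℕ) := by rw [← h2]; simp
    have hy' : y.1 ∈ ({a, b} : Finset ℕ) := by rw [← h2]; simp
    have hne3 : x.1 ≠ y.1 := hxy.1
    simp only [Finset.mem_insert, Finset.mem_singleton] at hx' hy'
    rcases hx' with hx' | hx' <;> rcases hy' with hy' | hy'
    · exact absurd (hx'.trans hy'.symm) hne3
    · exact Or.inl ⟨Subtype.ext hx', Subtype.ext hy'⟩
    · exact Or.inr ⟨Subtype.ext hx', Subtype.ext hy'⟩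
    · exact absurd (hx'.trans hy'.symm) hne3

/-- The extremal construction. -/
def JJ (ℓ t n : ℕ) : HGraph 2 :=
  (completeOn 2 (Finset.range t)).join (turanOn 2 ℓ (Finset.Ico t n))

lemma JJ_verts {ℓ t n : ℕ} (htn : t ≤ n) : (JJ ℓ t n).verts = Finset.range n := by
  change Finset.range t ∪ Finset.Ico t n = Finset.range n
  ext x
  simp only [Finset.mem_union, Finset.mem_range, Finset.mem_Ico]
  omega

lemma JJ_adj {ℓ t n : ℕ} (htn : t ≤ n) (u v : ℕ) : (gr (JJ ℓ t n)).Adj u v ↔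
    u ≠ v ∧ u < n ∧ v < n ∧ (u < t ∨ v < t ∨ u % ℓ ≠ v % ℓ) := by
  have hsub : ∀ A : Finset ℕ, ({u, v} : Finset ℕ) ⊆ A ↔ u ∈ A ∧ v ∈ A := by
    intro A; simp [Finset.insert_subset_iff]
  constructor
  · intro h
    have hm := gr_mem h
    rw [JJ_verts htn, Finset.mem_range, Finset.mem_range] at hm
    refine ⟨h.1, hm.1, hm.2, ?_⟩
    by_contra hcon
    push Not at hcon
    obtain ⟨hu, hv, huv⟩ := hcon
    have h2 := (Finset.mem_filter.1 h.2).1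
    rw [Finset.mem_union, Finset.mem_union] at h2
    rcases h2 with (h2 | h2) | h2
    · have h3 := (completeOn 2 (Finset.range t)).edges_sub _ h2 (Finset.mem_insert_self u _)
      have : u < t := Finset.mem_range.1 h3
      omega
    · have h3 := (Finset.mem_filter.1 (Finset.mem_filter.1 h2).1).2
      exact h.1 (h3 u (by simp) v (by simp) huv)
    · obtain ⟨x, hx⟩ := (Finset.mem_filter.1 h2).2.1
      have hx1 := (Finset.mem_inter.1 hx).1
      have hx2 : x < t := Finset.mem_range.1 (Finset.mem_inter.1 hx).2
      simp only [Finset.mem_insert, Finset.mem_singleton] at hx1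
      omega
  · rintro ⟨huv, hu, hv, h⟩
    have hV : ({u, v} : Finset ℕ) ⊆ Finset.range t ∪ Finset.Ico t n := by
      rw [hsub]; simp only [Finset.mem_union, Finset.mem_range, Finset.mem_Ico]; omega
    have hc : ({u, v} : Finset ℕ).card = 2 := Finset.card_pair huv
    refine ⟨huv, Finset.mem_filter.2 ⟨?_, hV, hc⟩⟩
    rw [Finset.mem_union, Finset.mem_union]
    by_cases hut : u < t <;> by_cases hvt : v < t
    · have hs : ({u, v} : Finset ℕ) ⊆ Finset.range t := by rw [hsub]; simp [hut, hvt]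
      exact Or.inl (Or.inl (Finset.mem_filter.2 ⟨Finset.mem_powersetCard.2 ⟨hs, hc⟩, hs, hc⟩))
    · refine Or.inr (Finset.mem_filter.2 ⟨Finset.mem_powersetCard.2 ⟨hV, hc⟩, ⟨u, ?_⟩, ⟨v, ?_⟩⟩)
      · exact Finset.mem_inter.2 ⟨by simp, Finset.mem_range.2 hut⟩
      · exact Finset.mem_inter.2 ⟨by simp, Finset.mem_Ico.2 (by omega)⟩
    · refine Or.inr (Finset.mem_filter.2 ⟨Finset.mem_powersetCard.2 ⟨hV, hc⟩, ⟨v, ?_⟩, ⟨u, ?_⟩⟩)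
      · exact Finset.mem_inter.2 ⟨by simp, Finset.mem_range.2 hvt⟩
      · exact Finset.mem_inter.2 ⟨by simp, Finset.mem_Ico.2 (by omega)⟩
    · have hs : ({u, v} : Finset ℕ) ⊆ Finset.Ico t n := by
        rw [hsub]; simp only [Finset.mem_Ico]; omega
      refine Or.inl (Or.inr (Finset.mem_filter.2 ⟨Finset.mem_filter.2
        ⟨Finset.mem_powersetCard.2 ⟨hs, hc⟩, ?_⟩, hs, hc⟩))
      have hmod : u % ℓ ≠ v % ℓ := by tauto
      intro x hx y hy hxy
      simp only [Finset.mem_insert, Finset.mem_singleton] at hx hy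
      rcases hx with rfl | rfl <;> rcases hy with rfl | rfl
      · rfl
      · exact absurd hxy hmod
      · exact absurd hxy.symm hmod
      · rfl

lemma JJ_noMatching {F : HGraph 2} {ℓ t n : ℕ} (hℓ : 0 < ℓ) (hlt : ℓ < chrom F) (htn : t ≤ n) :
    ¬ F.HasMatching (JJ ℓ t n) (t + 1) := by
  rw [hasMatching_iff]
  rintro ⟨A, A1, A2, A3⟩
  obtain ⟨i, hi⟩ : ∃ i, ∀ x ∈ A i, t ≤ x := by
    by_contra hcon
    push Not at hcon
    choose g hg1 hg2 using hcon
    have hinj : Function.Injective (fun i => (⟨g i, hg2 i⟩ : Fin t)) := by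
      intro i j hij
      have h1 : g i = g j := congrArg Fin.val hij
      by_contra hne
      exact Finset.disjoint_left.1 (A2 i j hne) (hg1 i) (h1 ▸ hg1 j)
    have := Fintype.card_le_of_injective _ hinj
    simp at this
  obtain ⟨g, g1, g2, g3⟩ := A3 i
  refine not_colorable hlt (fun x => if h : x ∈ F.verts then g ⟨x, h⟩ % ℓ else 0) ?_ ?_
  · intro v hv
    simp only [hv, dif_pos]
    exact Nat.mod_lt _ hℓ
  · intro e he u hu v hv huv
    have hu' := F.edges_sub e he hu
    have hv' := F.edges_sub e he hv
    simp only [hu', hv', dif_pos]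
    have heq : ({u, v} : Finset ℕ) = e := by
      apply Finset.eq_of_subset_of_card_le
      · intro x hx
        simp only [Finset.mem_insert, Finset.mem_singleton] at hx
        rcases hx with rfl | rfl <;> assumption
      · rw [Finset.card_pair huv, F.edges_card e he]
    have hadj : (gr F).Adj u v := ⟨huv, heq ▸ he⟩
    have h1 := g3 ⟨u, hu'⟩ ⟨v, hv'⟩ hadj
    rw [JJ_adj htn] at h1
    have h2 := hi _ (g2 ⟨u, hu'⟩)
    have h3 := hi _ (g2 ⟨v, hv'⟩)
    rcases h1.2.2.2 with h | h | h
    · omega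
    · omega
    · exact h

lemma E2_JJ {r t n : ℕ} (htn : t ≤ n) :
    t * t + 2 * t * (n - t) + 2 * Tn r (n - t) ≤
      E2 (gr (JJ (r + 1) t n)) (JJ (r + 1) t n).verts + t := by
  have hadj := JJ_adj (ℓ := r + 1) htn
  have hv : (JJ (r + 1) t n).verts = Finset.range t ∪ Finset.Ico t n := rfl
  have hd : Disjoint (Finset.range t) (Finset.Ico t n) := by
    rw [Finset.disjoint_left]; intro x; simp only [Finset.mem_range, Finset.mem_Ico]; omega
  rw [hv, E2_union hd]
  have h1 : t * t ≤ E2 (gr (JJ (r + 1) t n)) (Finset.range t) + t := by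
    have : ∀ v ∈ Finset.range t, t ≤ dg (gr (JJ (r + 1) t n)) (Finset.range t) v + 1 := by
      intro v hv
      unfold dg
      have hs : (Finset.range t).erase v ⊆ (Finset.range t).filter ((gr (JJ (r + 1) t n)).Adj v) := by
        intro x hx
        obtain ⟨hx1, hx2⟩ := Finset.mem_erase.1 hx
        rw [Finset.mem_range] at hv hx2
        refine Finset.mem_filter.2 ⟨Finset.mem_range.2 hx2, ?_⟩
        rw [hadj]
        exact ⟨hx1.symm, by omega, by omega, Or.inl hv⟩
      have := Finset.card_le_card hs
      rw [Finset.card_erase_of_mem hv, Finset.card_range] at this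
      omega
    have h2 := Finset.sum_le_sum this
    rw [Finset.sum_add_distrib] at h2
    simpa [E2] using h2
  have h2 : t * (n - t) ≤ ∑ v ∈ Finset.range t, dg (gr (JJ (r + 1) t n)) (Finset.Ico t n) v := by
    calc t * (n - t) = ∑ v ∈ Finset.range t, (n - t) := by simp
      _ ≤ _ := Finset.sum_le_sum fun v hv => by
        unfold dg
        rw [Finset.filter_true_of_mem, Nat.card_Ico]
        intro x hx
        rw [Finset.mem_range] at hv
        rw [Finset.mem_Ico] at hx
        rw [hadj]
        exact ⟨by omega, by omega, by omega, Or.inl hv⟩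
  have h3 : 2 * Tn r (n - t) = E2 (gr (JJ (r + 1) t n)) (Finset.Ico t n) := by
    unfold Tn
    rw [← SimpleGraph.sum_degrees_eq_twice_card_edges, E2_eq, Finset.sum_Ico_eq_sum_range,
      Finset.sum_range]
    refine Finset.sum_congr rfl fun i _ => ?_
    rw [Finset.sum_Ico_eq_sum_range, Finset.sum_range, ← SimpleGraph.card_neighborFinset_eq_degree,
      SimpleGraph.neighborFinset_eq_filter, Finset.card_filter]
    refine Finset.sum_congr rfl fun j _ => ?_
    have : (SimpleGraph.turanGraph (n - t) (r + 1)).Adj i j ↔ (gr (JJ (r + 1) t n)).Adj (t + i) (t + j) := by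
      rw [SimpleGraph.turanGraph_adj, hadj]
      have hmod : (t + i.1) % (r + 1) = (t + j.1) % (r + 1) ↔ i.1 % (r + 1) = j.1 % (r + 1) :=
        ⟨fun h => Nat.ModEq.add_left_cancel' t h, fun h => Nat.ModEq.add_left t h⟩
      have hi := i.2
      have hj := j.2
      constructor
      · intro h
        refine ⟨fun h' => h ?_, by omega, by omega, Or.inr (Or.inr fun h' => h (hmod.1 h'))⟩
        have : i.1 = j.1 := by omega
        rw [this]
      · rintro ⟨-, -, -, h | h | h⟩
        · omega
        · omega
        · exact fun h' => h (hmod.2 h')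
    simp only [this]
  rw [h3]
  have e : 2 * t * (n - t) = 2 * (t * (n - t)) := by ring
  omega

lemma iso_of_struct {r t n : ℕ} (htn : t ≤ n) {H : HGraph 2} (hn : H.verts.card = n)
    {Q : Finset ℕ} (hQ : Q ⊆ H.verts) (hQt : Q.card = t)
    (hadj : ∀ q ∈ Q, ∀ x ∈ H.verts, x ≠ q → (gr H).Adj q x)
    (hfree : ¬ Cp (⊤ : SimpleGraph (Fin (r + 2))) (gr H) (H.verts \ Q))
    (hE : 2 * Tn r (n - t) ≤ E2 (gr H) (H.verts \ Q)) : H.Iso (JJ (r + 1) t n) := by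
  classical
  set R := H.verts \ Q with hR
  have hRc : R.card = n - t := by rw [hR, Finset.card_sdiff_of_subset hQ, hn, hQt]
  -- Turán maximality
  have hmax : (toFin (gr H) R).IsTuranMaximal (r + 1) := by
    rw [Cp_toFin] at hfree
    refine ⟨?_, ?_⟩
    · have := SimpleGraph.cliqueFree_iff_top_free (G := toFin (gr H) R) (β := Fin (r + 2))
      rw [Fintype.card_fin] at this
      exact this.2 hfree
    · intro K _ hK
      have h2 := hK.card_edgeFinset_le
      simp only [Fintype.card_fin] at h2
      rw [← SimpleGraph.card_edgeFinset_turanGraph] at h2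
      have h3 := toFin_edges (G := gr H) R
      rw [← hRc] at hE
      unfold Tn at hE
      omega
  obtain ⟨φ⟩ := hmax.nonempty_iso_turanGraph
  rw [Fintype.card_fin] at φ
  let p : ℕ → ℕ := fun x => if h : x ∈ R then (φ (R.equivFin ⟨x, h⟩)).1 else 0
  let s : ℕ → ℕ := fun x => if h : x ∈ Q then (Q.equivFin ⟨x, h⟩).1 else 0
  have p1 : ∀ x ∈ R, p x < n - t := by
    intro x hx
    simp only [p, hx, dif_pos]
    rw [← hRc]
    exact (φ (R.equivFin ⟨x, hx⟩)).2
  have p2 : ∀ x ∈ R, ∀ y ∈ R, p x = p y → x = y := by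
    intro x hx y hy h
    simp only [p, hx, hy, dif_pos] at h
    have := R.equivFin.injective (φ.injective (Fin.ext h))
    exact congrArg Subtype.val this
  have p3 : ∀ x ∈ R, ∀ y ∈ R, ((gr H).Adj x y ↔ p x % (r + 1) ≠ p y % (r + 1)) := by
    intro x hx y hy
    simp only [p, hx, hy, dif_pos]
    have h1 := φ.map_adj_iff (v := R.equivFin ⟨x, hx⟩) (w := R.equivFin ⟨y, hy⟩)
    rw [SimpleGraph.turanGraph_adj] at h1
    rw [h1]
    simp [toFin]
  have s1 : ∀ x ∈ Q, s x < t := by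
    intro x hx
    simp only [s, hx, dif_pos]
    rw [← hQt]
    exact (Q.equivFin ⟨x, hx⟩).2
  have s2 : ∀ x ∈ Q, ∀ y ∈ Q, s x = s y → x = y := by
    intro x hx y hy h
    simp only [s, hx, hy, dif_pos] at h
    exact congrArg Subtype.val (Q.equivFin.injective (Fin.ext h))
  let f : ℕ → ℕ := fun x => if x ∈ Q then s x else t + p x
  have fQ : ∀ x ∈ Q, f x = s x := fun x hx => if_pos hx
  have fR : ∀ x ∈ R, f x = t + p x := fun x hx => if_neg (Finset.mem_sdiff.1 hx).2
  have hcases : ∀ x ∈ H.verts, x ∈ Q ∨ x ∈ R := by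
    intro x hx
    by_cases h : x ∈ Q
    · exact Or.inl h
    · exact Or.inr (Finset.mem_sdiff.2 ⟨hx, h⟩)
  have hmaps : ∀ x ∈ H.verts, f x < n := by
    intro x hx
    rcases hcases x hx with h | h
    · rw [fQ x h]; have := s1 x h; omega
    · rw [fR x h]; have := p1 x h; omega
  have hinj : Set.InjOn f ↑H.verts := by
    intro x hx y hy h
    rcases hcases x hx with hx | hx <;> rcases hcases y hy with hy | hy
    · rw [fQ x hx, fQ y hy] at h; exact s2 x hx y hy h
    · rw [fQ x hx, fR y hy] at h; have := s1 x hx; omega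
    · rw [fR x hx, fQ y hy] at h; have := s1 y hy; omega
    · rw [fR x hx, fR y hy] at h; exact p2 x hx y hy (by omega)
  rw [iso_iff]
  refine ⟨f, ⟨?_, hinj, ?_⟩, ?_⟩
  · intro x hx
    rw [JJ_verts htn]
    exact Finset.mem_coe.2 (Finset.mem_range.2 (hmaps x hx))
  · apply Finset.surjOn_of_injOn_of_card_le
    · intro x hx
      rw [JJ_verts htn]
      exact Finset.mem_coe.2 (Finset.mem_range.2 (hmaps x hx))
    · exact hinj
    · rw [JJ_verts htn, Finset.card_range, hn]
  · intro u hu v hv huv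
    rw [JJ_adj htn]
    have hne : f u ≠ f v := fun h => huv (hinj hu hv h)
    rcases hcases u hu with hu' | hu'
    · refine ⟨fun _ => ⟨hne, hmaps u hu, hmaps v hv, Or.inl ?_⟩, fun _ => hadj u hu' v hv huv.symm⟩
      rw [fQ u hu']; exact s1 u hu'
    · rcases hcases v hv with hv' | hv'
      · refine ⟨fun _ => ⟨hne, hmaps u hu, hmaps v hv, Or.inr (Or.inl ?_)⟩,
          fun _ => (hadj v hv' u hu huv).symm⟩
        rw [fQ v hv']; exact s1 v hv'
      · rw [p3 u hu' v hv']
        have hmod : (t + p u) % (r + 1) = (t + p v) % (r + 1) ↔ p u % (r + 1) = p v % (r + 1) :=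
          ⟨fun h => Nat.ModEq.add_left_cancel' t h, fun h => Nat.ModEq.add_left t h⟩
        constructor
        · intro h
          refine ⟨hne, hmaps u hu, hmaps v hv, Or.inr (Or.inr ?_)⟩
          rw [fR u hu', fR v hv']
          exact fun h' => h (hmod.1 h')
        · rintro ⟨-, -, -, h | h | h⟩
          · rw [fR u hu'] at h; omega
          · rw [fR v hv'] at h; omega
          · rw [fR u hu', fR v hv'] at h
            exact fun h' => h (hmod.2 h')


/-- the density Corrádi–Hajnal theorem for edge-critical graphs. -/
theorem statement_5 (F : HGraph 2) (hcrit : EdgeCritical F) (hχ : 3 ≤ chrom F) :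
    ∃ N₀ : ℕ, ∃ cF : ℝ, 0 < cF ∧ ∀ n : ℕ, N₀ ≤ n → ∀ t : ℕ, (t : ℝ) ≤ cF * n →
      ∀ H : HGraph 2, IsExtremalMatchingFree 2 n t F H ↔
        H.Iso ((completeOn 2 (Finset.range t)).join
          (turanOn 2 (chrom F - 1) (Finset.Ico t n))) := by
  obtain ⟨r, hr⟩ : ∃ r, chrom F = r + 2 := ⟨chrom F - 2, by omega⟩
  have hr1 : 1 ≤ r := by omega
  have hF : IsCrit (Fs F) (r + 1) := crit_of_edgeCritical hcrit hχ (by omega)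
  obtain ⟨c, hc, N₀, hmain⟩ := main_induction hr1 hF
  refine ⟨2 * N₀, min (c / 2) (1 / 2), by positivity, fun n hn t ht => ?_⟩
  have hnR : (0 : ℝ) ≤ n := Nat.cast_nonneg n
  have ht1 : (t : ℝ) ≤ c / 2 * n := ht.trans (by gcongr; exact min_le_left _ _)
  have ht2 : (t : ℝ) ≤ 1 / 2 * n := ht.trans (by gcongr; exact min_le_right _ _)
  have ht3 : 2 * t ≤ n := by
    have : (2 * t : ℝ) ≤ n := by linarith
    exact_mod_cast this
  have htn : t ≤ n := by omega
  have htc : (t : ℝ) ≤ c * ((n - t : ℕ) : ℝ) := by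
    rw [Nat.cast_sub htn]
    nlinarith
  rw [show chrom F - 1 = r + 1 by omega]
  change ∀ H : HGraph 2, IsExtremalMatchingFree 2 n t F H ↔ H.Iso (JJ (r + 1) t n)
  have hJv : (JJ (r + 1) t n).verts.card = n := by rw [JJ_verts htn, Finset.card_range]
  have hJm : ¬ F.HasMatching (JJ (r + 1) t n) (t + 1) :=
    JJ_noMatching (by omega) (by omega) htn
  set M := {m | ∃ H : HGraph 2, H.verts.card = n ∧ ¬ F.HasMatching H (t+1) ∧ H.edges.card = m}
    with hM
  have hbdd : BddAbove M := by
    refine ⟨n * n, ?_⟩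
    rintro m ⟨H, h1, -, rfl⟩
    have h2 := E2_le (G := gr H) H.verts
    rw [E2_gr, h1] at h2
    omega
  have hJM : (JJ (r + 1) t n).edges.card ∈ M := ⟨_, hJv, hJm, rfl⟩
  have hex : exMatchN 2 n t F = sSup M := rfl
  have hfwd : ∀ H : HGraph 2, IsExtremalMatchingFree 2 n t F H → H.Iso (JJ (r + 1) t n) := by
    rintro H ⟨h1, h2, h3⟩
    have hle : (JJ (r + 1) t n).edges.card ≤ H.edges.card := by
      rw [h3, hex]; exact le_csSup hbdd hJM
    have hE := E2_JJ (r := r) htn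
    have e1 := E2_gr (JJ (r + 1) t n)
    have e2 := E2_gr H
    obtain ⟨Q, Q1, Q2, Q3, Q4, Q5⟩ := hmain (n - t) (by omega) t htc (gr H) H.verts (by omega)
      (by rw [← hasMatching_iff]; exact h2) (by omega)
    exact iso_of_struct htn h1 Q1 Q2 Q3 Q4 Q5
  intro H
  refine ⟨hfwd H, fun h => ⟨?_, ?_, ?_⟩⟩
  · rw [iso_verts h, hJv]
  · exact fun h' => hJm (iso_pack h h')
  · obtain ⟨H0, a1, a2, a3⟩ := Nat.sSup_mem ⟨_, hJM⟩ hbdd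
    have := iso_edges (hfwd H0 ⟨a1, a2, a3⟩)
    rw [iso_edges h, hex, ← a3, this]

end DensityCH
end
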